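/- Let α ∈ (−1, 0] and define the probability density μ_α(x) = ((1+α)/π) |x|^{2α} (1+|x|^{2(1+α)})^{−2} on ℝ². For every smooth compactly supported function u on ℝ², setting v = e^{u} μ_α / ∫_{ℝ²} e^{u} μ_α dx, one has 0 ≤ ∫_{ℝ²} v log(v/μ_α) dx − 4π(1+α) ∫_{ℝ²} (v−μ_α) (−Δ)^{−1}(v−μ_α) dx ≤ (1/(16π(1+α))) ∫_{ℝ²} |∇u|² dx − log( ∫_{ℝ²} e^{u} μ_α dx ) + ∫_{ℝ²} u μ_α dx. -/

import Mathlib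

open MeasureTheory Real

noncomputable section

/-- `(−Δ)⁻¹ g` in dimension 2: convolution with the logarithmic kernel
`G_2(x) = −(1/(2π)) log |x|`. -/
def invLap2 (g : EuclideanSpace ℝ (Fin 2) → ℝ) (x : EuclideanSpace ℝ (Fin 2)) : ℝ :=
  -(1 / (2 * Real.pi)) * ∫ y, Real.log ‖x - y‖ * g y

/-- The probability density `μ_α(x) = ((1+α)/π) |x|^{2α} (1+|x|^{2(1+α)})^{−2}` on `ℝ²`. -/
def muAlpha (α : ℝ) (x : EuclideanSpace ℝ (Fin 2)) : ℝ :=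
  (1 + α) / Real.pi * ‖x‖ ^ (2 * α) / (1 + ‖x‖ ^ (2 * (1 + α))) ^ 2

/-- cumulative distribution -/
def cdfR (f : ℝ → ℝ) (x : ℝ) : ℝ := ∫ t in Set.Iic x, f t

lemma cdfR_sub {f : ℝ → ℝ} (hfi : Integrable f) (a b : ℝ) :
    cdfR f b - cdfR f a = ∫ t in a..b, f t := by
  unfold cdfR
  exact intervalIntegral.integral_Iic_sub_Iic hfi.integrableOn hfi.integrableOn

lemma cdfR_hasDerivAt {f : ℝ → ℝ} (hf : Continuous f) (hfi : Integrable f) (x : ℝ) :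
    HasDerivAt (cdfR f) (f x) x := by
  have h : cdfR f = fun y => cdfR f 0 + ∫ t in (0:ℝ)..y, f t := by
    funext y
    rw [← cdfR_sub hfi]; ring
  rw [h]
  exact (intervalIntegral.integral_hasDerivAt_right (hf.intervalIntegrable _ _)
    (hf.stronglyMeasurableAtFilter _ _) hf.continuousAt).const_add _

lemma cdfR_strictMono {f : ℝ → ℝ} (hf : Continuous f) (hfi : Integrable f) (h0 : ∀ x, 0 < f x) :
    StrictMono (cdfR f) :=
  strictMono_of_deriv_pos fun x => by rw [(cdfR_hasDerivAt hf hfi x).deriv]; exact h0 x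

lemma cdfR_tendsto_bot {f : ℝ → ℝ} :
    Filter.Tendsto (cdfR f) Filter.atBot (nhds 0) := by
  exact tendsto_integral_Iic_zero Filter.tendsto_id

lemma cdfR_tendsto_top {f : ℝ → ℝ} (hfi : Integrable f) :
    Filter.Tendsto (cdfR f) Filter.atTop (nhds (∫ t, f t)) := by
  exact (aecover_Iic Filter.tendsto_id).integral_tendsto_of_countably_generated hfi

lemma cdfR_pos {f : ℝ → ℝ} (hf : Continuous f) (hfi : Integrable f) (h0 : ∀ x, 0 < f x) (x : ℝ) :
    0 < cdfR f x :=
  lt_of_le_of_lt ((cdfR_strictMono hf hfi h0).monotone.le_of_tendsto cdfR_tendsto_bot (x-1))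
    ((cdfR_strictMono hf hfi h0) (by linarith))

lemma cdfR_lt {f : ℝ → ℝ} (hf : Continuous f) (hfi : Integrable f) (h0 : ∀ x, 0 < f x) (x : ℝ) :
    cdfR f x < ∫ t, f t :=
  lt_of_lt_of_le ((cdfR_strictMono hf hfi h0) (show x < x + 1 by linarith))
    ((cdfR_strictMono hf hfi h0).monotone.ge_of_tendsto (cdfR_tendsto_top hfi) (x+1))

lemma cdfR_surj {f : ℝ → ℝ} (hf : Continuous f) (hfi : Integrable f) 
    {z : ℝ} (hz0 : 0 < z) (hz1 : z < ∫ t, f t) : ∃ y, cdfR f y = z := by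
  have hc : Continuous (cdfR f) :=
    continuous_iff_continuousAt.2 fun x => (cdfR_hasDerivAt hf hfi x).continuousAt
  obtain ⟨a, ha⟩ := ((cdfR_tendsto_bot (f := f)).eventually (gt_mem_nhds hz0)).exists
  obtain ⟨b, hb⟩ := ((cdfR_tendsto_top hfi).eventually (lt_mem_nhds hz1)).exists
  exact mem_range_of_exists_le_of_exists_ge hc ⟨a, ha.le⟩ ⟨b, hb.le⟩

/-- derivative of a monotone transport map -/
lemma transport_hasDerivAt {f g T : ℝ → ℝ} (hf : Continuous f) (hfi : Integrable f)
    (hg : Continuous g) (hgi : Integrable g) (hg0 : ∀ x, 0 < g x)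
    (hT : ∀ x, cdfR g (T x) = cdfR f x) (x : ℝ) :
    HasDerivAt T (f x / g (T x)) x := by
  have hs : HasStrictDerivAt (cdfR g) (g (T x)) (T x) :=
    hasStrictDerivAt_of_hasDerivAt_of_continuousAt
      (Filter.Eventually.of_forall fun y => cdfR_hasDerivAt hg hgi y) hg.continuousAt
  have hne := (hg0 (T x)).ne'
  have h1 : HasDerivAt (hs.localInverse _ _ _ hne) (g (T x))⁻¹ (cdfR f x) := by
    rw [← hT x]; exact (hs.to_localInverse hne).hasDerivAt
  have h2 := h1.comp x (cdfR_hasDerivAt hf hfi x)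
  have h3 : T =ᶠ[nhds x] (hs.localInverse _ _ _ hne) ∘ cdfR f := by
    have h4 := hs.hasStrictFDerivAt_equiv hne |>.eventually_right_inverse
    have h5 : Filter.Tendsto (cdfR f) (nhds x) (nhds (cdfR g (T x))) := by
      rw [hT x]; exact (cdfR_hasDerivAt hf hfi x).continuousAt
    filter_upwards [h5.eventually h4] with y hy
    apply (cdfR_strictMono hg hgi hg0).injective
    rw [hT y]; exact hy.symm
  have := h2.congr_of_eventuallyEq h3
  rwa [inv_mul_eq_div] at this

lemma transport_strictMono {f g T : ℝ → ℝ} (hf : Continuous f) (hfi : Integrable f)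
    (hf0 : ∀ x, 0 < f x)
    (hg : Continuous g) (hgi : Integrable g) (hg0 : ∀ x, 0 < g x)
    (hT : ∀ x, cdfR g (T x) = cdfR f x) : StrictMono T := by
  intro x y hxy
  rw [← (cdfR_strictMono hg hgi hg0).lt_iff_lt, hT, hT]
  exact cdfR_strictMono hf hfi hf0 hxy

lemma transport_surj {f g T : ℝ → ℝ} (hf : Continuous f) (hfi : Integrable f)
    (hg : Continuous g) (hgi : Integrable g) (hg0 : ∀ x, 0 < g x)
    (hm : ∫ t, f t = ∫ t, g t)
    (hT : ∀ x, cdfR g (T x) = cdfR f x) : Function.Surjective T := by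
  intro y
  obtain ⟨x, hx⟩ := cdfR_surj hf hfi (cdfR_pos hg hgi hg0 y) 
    (by rw [hm]; exact cdfR_lt hg hgi hg0 y)
  exact ⟨x, (cdfR_strictMono hg hgi hg0).injective (by rw [hT, hx])⟩

lemma transport_exists {f g : ℝ → ℝ} (hf : Continuous f) (hfi : Integrable f)
    (hf0 : ∀ x, 0 < f x) (hg : Continuous g) (hgi : Integrable g)
    (hm : ∫ t, f t = ∫ t, g t) : ∃ T : ℝ → ℝ, ∀ x, cdfR g (T x) = cdfR f x := by
  have : ∀ x, ∃ y, cdfR g y = cdfR f x := fun x =>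
    cdfR_surj hg hgi (cdfR_pos hf hfi hf0 x) (by rw [← hm]; exact cdfR_lt hf hfi hf0 x)
  choose T hT using this
  exact ⟨T, hT⟩

/-- One-dimensional change of variables for an increasing bijection. -/
lemma lintegral_transport {T T' : ℝ → ℝ} (hT : ∀ x, HasDerivAt T (T' x) x) (h0 : ∀ x, 0 ≤ T' x)
    (hm : StrictMono T) (hs : Function.Surjective T) (H : ℝ → ENNReal) :
    ∫⁻ x, ENNReal.ofReal (T' x) * H (T x) = ∫⁻ y, H y := by
  have := lintegral_image_eq_lintegral_abs_deriv_mul MeasurableSet.univ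
    (fun x _ => (hT x).hasDerivWithinAt) hm.injective.injOn H
  rw [Set.image_univ, hs.range_eq] at this
  simp only [Measure.restrict_univ] at this
  rw [this]
  congr 1; ext x; rw [abs_of_nonneg (h0 x)]

/-- joint continuity of conditional cdf -/
lemma continuous_cdf2 {f : ℝ × ℝ → ℝ} (hf : Continuous f) {b : ℝ → ℝ} (hb : Integrable b)
    (hfb : ∀ x y, |f (x, y)| ≤ b y) :
    Continuous fun p : ℝ × ℝ => cdfR (fun t => f (p.1, t)) p.2 := by
  have hIntg : ∀ x, Integrable fun t => f (x, t) := fun x =>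
    hb.mono' (by fun_prop : Continuous fun t => f (x,t)).aestronglyMeasurable
      (Filter.Eventually.of_forall fun t => hfb x t)
  have h : (fun p : ℝ × ℝ => cdfR (fun t => f (p.1, t)) p.2) =
      fun p => (∫ t in Set.Iic (0:ℝ), f (p.1, t)) + ∫ t in (0:ℝ)..p.2, f (p.1, t) := by
    funext p
    rw [← cdfR_sub (hIntg p.1)]; unfold cdfR; ring
  rw [h]
  refine Continuous.add ?_ ?_
  · refine continuous_of_dominated (bound := b) ?_ ?_ hb.integrableOn ?_
    · intro p
      exact (by fun_prop : Continuous fun t => f (p.1,t)).aestronglyMeasurable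
    · intro p
      exact Filter.Eventually.of_forall fun t => hfb p.1 t
    · exact Filter.Eventually.of_forall fun t => by fun_prop
  · apply intervalIntegral.continuous_parametric_intervalIntegral_of_continuous
    · fun_prop
    · fun_prop

lemma continuous_marg {f : ℝ × ℝ → ℝ} (hf : Continuous f) {b : ℝ → ℝ} (hb : Integrable b)
    (hfb : ∀ x y, |f (x, y)| ≤ b y) :
    Continuous fun x : ℝ => ∫ t, f (x, t) := by
  refine continuous_of_dominated (bound := b) ?_ ?_ hb ?_
  · intro p
    exact (by fun_prop : Continuous fun t => f (p,t)).aestronglyMeasurable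
  · intro p
    exact Filter.Eventually.of_forall fun t => hfb p t
  · exact Filter.Eventually.of_forall fun t => by fun_prop

/-- The Knothe map. -/
theorem knothe {f g : ℝ × ℝ → ℝ} (hf : Continuous f) (hg : Continuous g)
    (hf0 : ∀ p, 0 < f p) (hg0 : ∀ p, 0 < g p) {b : ℝ → ℝ} (hb : Integrable b)
    (hfb : ∀ x y, f (x, y) ≤ b y) (hgb : ∀ x y, g (x, y) ≤ b y)
    (hfi : Integrable f) (hgi : Integrable g) (hm : ∫ p, f p = ∫ p, g p) :
    ∃ (T₁ P : ℝ → ℝ) (T₂ Q : ℝ × ℝ → ℝ), Continuous T₁ ∧ Continuous P ∧ Continuous T₂ ∧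
      Continuous Q ∧ (∀ x, 0 < P x) ∧ (∀ p, 0 < Q p) ∧ (∀ x, HasDerivAt T₁ (P x) x) ∧
      (∀ x y, HasDerivAt (fun t => T₂ (x, t)) (Q (x, y)) y) ∧
      (∀ x y, f (x, y) = g (T₁ x, T₂ (x, y)) * P x * Q (x, y)) ∧
      ∀ H : ℝ × ℝ → ENNReal, Measurable H →
        ∫⁻ p : ℝ × ℝ, H (T₁ p.1, T₂ p) * ENNReal.ofReal (f p) =
          ∫⁻ p, H p * ENNReal.ofReal (g p) := by
  have hfb' : ∀ x y, |f (x, y)| ≤ b y := fun x y => by rw [abs_of_pos (hf0 _)]; exact hfb x y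
  have hgb' : ∀ x y, |g (x, y)| ≤ b y := fun x y => by rw [abs_of_pos (hg0 _)]; exact hgb x y
  have fs : ∀ x, Continuous fun t => f (x, t) := fun x => by fun_prop
  have gs : ∀ x, Continuous fun t => g (x, t) := fun x => by fun_prop
  have fint : ∀ x, Integrable fun t => f (x, t) := fun x =>
    hb.mono' (fs x).aestronglyMeasurable (Filter.Eventually.of_forall fun t => hfb' x t)
  have gint : ∀ x, Integrable fun t => g (x, t) := fun x =>
    hb.mono' (gs x).aestronglyMeasurable (Filter.Eventually.of_forall fun t => hgb' x t)
  set F : ℝ → ℝ := fun x => ∫ t, f (x, t) with hF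
  set G : ℝ → ℝ := fun x => ∫ t, g (x, t) with hG
  have Fc : Continuous F := continuous_marg hf hb hfb'
  have Gc : Continuous G := continuous_marg hg hb hgb'
  have Fp : ∀ x, 0 < F x := fun x => 
    (cdfR_pos (fs x) (fint x) (fun t => hf0 _) 0).trans (cdfR_lt (fs x) (fint x) (fun t => hf0 _) 0)
  have Gp : ∀ x, 0 < G x := fun x => 
    (cdfR_pos (gs x) (gint x) (fun t => hg0 _) 0).trans (cdfR_lt (gs x) (gint x) (fun t => hg0 _) 0)
  have Fi : Integrable F := hfi.integral_prod_left
  have Gi : Integrable G := hgi.integral_prod_left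
  have FG : ∫ x, F x = ∫ x, G x := by
    rw [hF, hG]
    rw [← integral_prod _ hfi, ← integral_prod _ hgi]; exact hm
  obtain ⟨T₁, hT₁⟩ := transport_exists Fc Fi Fp Gc Gi FG
  have dT₁ := transport_hasDerivAt Fc Fi Gc Gi Gp hT₁
  have mT₁ := transport_strictMono Fc Fi Fp Gc Gi Gp hT₁
  have sT₁ := transport_surj Fc Fi Gc Gi Gp FG hT₁
  have cT₁ : Continuous T₁ := continuous_iff_continuousAt.2 fun x => (dT₁ x).continuousAt
  set P : ℝ → ℝ := fun x => F x / G (T₁ x) with hP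
  have Pc : Continuous P := Fc.div (Gc.comp cT₁) fun x => (Gp _).ne'
  have Pp : ∀ x, 0 < P x := fun x => div_pos (Fp _) (Gp _)
  -- second coordinate
  set f' : ℝ × ℝ → ℝ := fun p => f p / P p.1 with hf'
  set g' : ℝ × ℝ → ℝ := fun p => g (T₁ p.1, p.2) with hg'
  have f'c : Continuous f' := hf.div (by fun_prop) fun p => (Pp _).ne'
  have g'c : Continuous g' := by fun_prop
  have f's : ∀ x, Continuous fun t => f' (x, t) := fun x => by fun_prop
  have f'i : ∀ x, Integrable fun t => f' (x, t) := fun x => (fint x).div_const (P x)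
  have f'p : ∀ p, 0 < f' p := fun p => div_pos (hf0 p) (Pp _)
  have hmass : ∀ x, ∫ t, f' (x, t) = ∫ t, g (T₁ x, t) := by
    intro x
    simp only [hf']
    rw [integral_div]
    change F x / (F x / G (T₁ x)) = G (T₁ x)
    have := (Fp x).ne'; have := (Gp (T₁ x)).ne'
    field_simp
  have ex : ∀ x, ∃ T : ℝ → ℝ, ∀ y, cdfR (fun t => g (T₁ x, t)) (T y) = cdfR (fun t => f' (x, t)) y :=
    fun x => transport_exists (f's x) (f'i x) (fun t => f'p _) (gs _) (gint _) (hmass x)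
  choose S hS using ex
  have dS := fun x => transport_hasDerivAt (f's x) (f'i x) (gs _) (gint _) (fun t => hg0 _) (hS x)
  have mS := fun x => transport_strictMono (f's x) (f'i x) (fun t => f'p _) (gs _) (gint _)
    (fun t => hg0 _) (hS x)
  have sS := fun x => transport_surj (f's x) (f'i x) (gs _) (gint _) (fun t => hg0 _)
    (hmass x) (hS x)
  set T₂ : ℝ × ℝ → ℝ := fun p => S p.1 p.2 with hT₂
  have cF2 : Continuous fun p : ℝ × ℝ => cdfR (fun t => f' (p.1, t)) p.2 := by
    have h1 := (continuous_cdf2 hf hb hfb').div (Pc.comp continuous_fst) fun p => (Pp _).ne'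
    refine h1.congr fun p => ?_
    simp only [cdfR, hf', integral_div]; rfl
  have cG2 : Continuous fun p : ℝ × ℝ => cdfR (fun t => g (p.1, t)) p.2 :=
    continuous_cdf2 hg hb hgb'
  have cT₂ : Continuous T₂ := by
    rw [OrderTopology.continuous_iff]
    intro c
    have hcc : Continuous fun p : ℝ × ℝ => cdfR (fun t => g (T₁ p.1, t)) c :=
      cG2.comp (by fun_prop : Continuous fun p : ℝ × ℝ => (T₁ p.1, c))
    constructor
    · have : T₂ ⁻¹' Set.Ioi c = {p | cdfR (fun t => g (T₁ p.1, t)) c < cdfR (fun t => f' (p.1, t)) p.2} := by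
        ext p
        simp only [Set.mem_preimage, Set.mem_Ioi, Set.mem_ofPred_eq]
        rw [← hS p.1 p.2, (cdfR_strictMono (gs _) (gint _) (fun t => hg0 _)).lt_iff_lt]
      rw [this]; exact isOpen_lt hcc cF2
    · have : T₂ ⁻¹' Set.Iio c = {p | cdfR (fun t => f' (p.1, t)) p.2 < cdfR (fun t => g (T₁ p.1, t)) c} := by
        ext p
        simp only [Set.mem_preimage, Set.mem_Iio, Set.mem_ofPred_eq]
        rw [← hS p.1 p.2, (cdfR_strictMono (gs _) (gint _) (fun t => hg0 _)).lt_iff_lt]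
      rw [this]; exact isOpen_lt cF2 hcc
  set Q : ℝ × ℝ → ℝ := fun p => f' p / g (T₁ p.1, T₂ p) with hQ
  have Qc : Continuous Q := f'c.div (by fun_prop) fun p => (hg0 _).ne'
  have Qp : ∀ p, 0 < Q p := fun p => div_pos (f'p _) (hg0 _)
  have hdet : ∀ x y, f (x, y) = g (T₁ x, T₂ (x, y)) * P x * Q (x, y) := by
    intro x y
    simp only [hQ, hf']
    have := (hg0 (T₁ x, T₂ (x, y))).ne'; have := (Pp x).ne'
    field_simp
  refine ⟨T₁, P, T₂, Q, cT₁, Pc, cT₂, Qc, Pp, Qp, dT₁, fun x y => dS x y, hdet, ?_⟩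
  intro H hH
  have m1 : Measurable fun p : ℝ × ℝ => H (T₁ p.1, T₂ p) * ENNReal.ofReal (f p) :=
    (hH.comp (by fun_prop)).mul (by fun_prop)
  have m2 : Measurable fun p : ℝ × ℝ => H p * ENNReal.ofReal (g p) := hH.mul (by fun_prop)
  rw [Measure.volume_eq_prod, lintegral_prod _ m1.aemeasurable, lintegral_prod _ m2.aemeasurable]
  rw [← lintegral_transport dT₁ (fun x => (Pp x).le) mT₁ sT₁
    (fun x => ∫⁻ y, H (x, y) * ENNReal.ofReal (g (x, y)))]
  congr 1; ext x
  rw [← lintegral_transport (dS x) (fun y => (Qp (x,y)).le) (mS x) (sS x)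
    (fun y => H (T₁ x, y) * ENNReal.ofReal (g (T₁ x, y))),
    ← lintegral_const_mul']
  · congr 1; ext y
    simp only
    rw [hdet x y, ENNReal.ofReal_mul (mul_pos (hg0 _) (Pp _)).le, ENNReal.ofReal_mul (hg0 _).le]
    change _ = ENNReal.ofReal (P x) * (ENNReal.ofReal (Q (x,y)) * (H (T₁ x, T₂ (x, y)) * _))
    ring
  · exact ENNReal.ofReal_ne_top

lemma exists_cutoff1 : ∃ χ χ' : ℝ → ℝ, ∃ C : ℝ, Continuous χ ∧ Continuous χ' ∧
    (∀ x, HasDerivAt χ (χ' x) x) ∧ (∀ x, 0 ≤ χ x) ∧ (∀ x, χ x ≤ 1) ∧ (∀ x, |x| ≤ 1 → χ x = 1) ∧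
    (∀ x, 2 ≤ |x| → χ x = 0) ∧ (∀ x, 2 ≤ |x| → χ' x = 0) ∧ (∀ x, |x| < 1 → χ' x = 0) ∧
    (∀ x, |χ' x| ≤ C) ∧ 0 ≤ C := by
  let b : ContDiffBump (0:ℝ) := ⟨1, 2, by norm_num, by norm_num⟩
  have hb : ContDiff ℝ 1 (b : ℝ → ℝ) := b.contDiff
  have hd : ∀ x, HasDerivAt (b : ℝ → ℝ) (deriv b x) x := fun x =>
    (hb.differentiable (by norm_num)).differentiableAt.hasDerivAt
  have hdc : Continuous (deriv (b : ℝ → ℝ)) := hb.continuous_deriv (by norm_num)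
  have hz : ∀ x : ℝ, 2 ≤ |x| → b x = 0 := fun x hx => b.zero_of_le_dist (by simpa using hx)
  obtain ⟨C, hC⟩ := (b.hasCompactSupport.deriv (𝕜 := ℝ)).exists_bound_of_continuous hdc
  refine ⟨b, deriv b, C, b.continuous, hdc, hd, fun x => b.nonneg, fun x => b.le_one, ?_, hz, ?_, ?_,
    hC, (norm_nonneg _).trans (hC 0)⟩
  · intro x hx
    exact b.one_of_mem_closedBall (by simpa using hx)
  · intro x hx
    have : IsLocalMin (b : ℝ → ℝ) x := Filter.Eventually.of_forall fun y => by
      rw [hz x hx]; exact b.nonneg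
    exact this.deriv_eq_zero
  · intro x hx
    have : (b : ℝ → ℝ) =ᶠ[nhds x] fun _ => 1 := by
      filter_upwards [(isOpen_lt continuous_abs continuous_const).mem_nhds hx] with y hy
      exact b.one_of_mem_closedBall (by simpa using le_of_lt hy)
    rw [this.deriv_eq]; simp

lemma hcs_prod {h : ℝ × ℝ → ℝ} (R : ℝ) (hx : ∀ p : ℝ × ℝ, R ≤ |p.1| → h p = 0)
    (hy : ∀ p : ℝ × ℝ, R ≤ |p.2| → h p = 0) : HasCompactSupport h := by
  apply HasCompactSupport.of_support_subset_isCompact (isCompact_closedBall (0 : ℝ × ℝ) R)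
  intro p hp
  simp only [Metric.mem_closedBall, dist_zero_right, Prod.norm_def, sup_le_iff, Real.norm_eq_abs]
  by_contra hcon
  rw [not_and_or] at hcon
  rcases hcon with h1 | h1
  · exact hp (hx p (le_of_not_ge h1))
  · exact hp (hy p (le_of_not_ge h1))

/-- integration by parts in a slice -/
lemma ibp1 {u u' v v' : ℝ → ℝ} (hu : ∀ x, HasDerivAt u (u' x) x) (hv : ∀ x, HasDerivAt v (v' x) x)
    (cu' : Continuous u') (cv' : Continuous v') (su : HasCompactSupport u)
    (su' : HasCompactSupport u') : ∫ x, u x * v' x = - ∫ x, u' x * v x := by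
  have cu : Continuous u := continuous_iff_continuousAt.2 fun x => (hu x).continuousAt
  have cv : Continuous v := continuous_iff_continuousAt.2 fun x => (hv x).continuousAt
  exact integral_mul_deriv_eq_deriv_mul_of_integrable (fun x _ => hu x) (fun x _ => hv x)
    ((cu.mul cv').integrable_of_hasCompactSupport su.mul_right)
    ((cu'.mul cv).integrable_of_hasCompactSupport su'.mul_right)
    ((cu.mul cv).integrable_of_hasCompactSupport su.mul_right)

lemma slice_cs1 {h : ℝ × ℝ → ℝ} (hh : HasCompactSupport h) (y : ℝ) :
    HasCompactSupport fun x => h (x, y) := by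
  have : Topology.IsClosedEmbedding fun x : ℝ => (x, y) := by
    refine Topology.IsClosedEmbedding.of_continuous_injective_isClosedMap (by fun_prop)
      (fun a b h => by simpa using h) ?_
    intro s hs
    have : (fun x : ℝ => (x, y)) '' s = s ×ˢ {y} := by ext ⟨a, b⟩; simp [eq_comm]
    rw [this]; exact hs.prod isClosed_singleton
  exact hh.comp_isClosedEmbedding this

lemma slice_cs2 {h : ℝ × ℝ → ℝ} (hh : HasCompactSupport h) (x : ℝ) :
    HasCompactSupport fun y => h (x, y) := by
  have : Topology.IsClosedEmbedding fun y : ℝ => (x, y) := by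
    refine Topology.IsClosedEmbedding.of_continuous_injective_isClosedMap (by fun_prop)
      (fun a b h => by simpa using h) ?_
    intro s hs
    have : (fun y : ℝ => (x, y)) '' s = {x} ×ˢ s := by ext ⟨a, b⟩; simp [eq_comm, and_comm]
    rw [this]; exact isClosed_singleton.prod hs
  exact hh.comp_isClosedEmbedding this

/-- integration by parts in the plane, first variable -/
lemma ibp2_fst {u u' v v' : ℝ × ℝ → ℝ} (hu : ∀ x y, HasDerivAt (fun t => u (t, y)) (u' (x, y)) x)
    (hv : ∀ x y, HasDerivAt (fun t => v (t, y)) (v' (x, y)) x)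
    (cu : Continuous u) (cv : Continuous v)
    (cu' : Continuous u') (cv' : Continuous v') (su : HasCompactSupport u)
    (su' : HasCompactSupport u') : ∫ p, u p * v' p = - ∫ p, u' p * v p := by
  have i1 : Integrable (fun p => u p * v' p) := (cu.mul cv').integrable_of_hasCompactSupport (μ := volume) su.mul_right
  have i2 : Integrable (fun p => u' p * v p) := (cu'.mul cv).integrable_of_hasCompactSupport (μ := volume) su'.mul_right
  rw [Measure.volume_eq_prod] at i1 i2 ⊢
  rw [integral_prod_symm _ i1, integral_prod_symm _ i2, ← integral_neg]
  congr 1; ext y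
  exact ibp1 (fun x => hu x y) (fun x => hv x y) (by fun_prop) (by fun_prop)
    (slice_cs1 su y) (slice_cs1 su' y)

lemma ibp2_snd {u u' v v' : ℝ × ℝ → ℝ} (hu : ∀ x y, HasDerivAt (fun t => u (x, t)) (u' (x, y)) y)
    (hv : ∀ x y, HasDerivAt (fun t => v (x, t)) (v' (x, y)) y)
    (cu : Continuous u) (cv : Continuous v)
    (cu' : Continuous u') (cv' : Continuous v') (su : HasCompactSupport u)
    (su' : HasCompactSupport u') : ∫ p, u p * v' p = - ∫ p, u' p * v p := by
  have i1 : Integrable (fun p => u p * v' p) := (cu.mul cv').integrable_of_hasCompactSupport (μ := volume) su.mul_right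
  have i2 : Integrable (fun p => u' p * v p) := (cu'.mul cv).integrable_of_hasCompactSupport (μ := volume) su'.mul_right
  rw [Measure.volume_eq_prod] at i1 i2 ⊢
  rw [integral_prod _ i1, integral_prod _ i2, ← integral_neg]
  congr 1; ext x
  exact ibp1 (fun y => hu x y) (fun y => hv x y) (by fun_prop) (by fun_prop)
    (slice_cs2 su x) (slice_cs2 su' x)

lemma push_integral {f g : ℝ × ℝ → ℝ} {T : ℝ × ℝ → ℝ × ℝ} (hf : Continuous f)
    (hf0 : ∀ p, 0 < f p) (hg0 : ∀ p, 0 < g p) (hT : Continuous T)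
    (hpush : ∀ H : ℝ × ℝ → ENNReal, Measurable H →
        ∫⁻ p : ℝ × ℝ, H (T p) * ENNReal.ofReal (f p) =
          ∫⁻ p, H p * ENNReal.ofReal (g p))
    {H : ℝ × ℝ → ℝ} (hH : Continuous H) (hH0 : ∀ p, 0 ≤ H p)
    (hi : Integrable fun p => H p * g p) :
    Integrable (fun p => H (T p) * f p) ∧ ∫ p, H (T p) * f p = ∫ p, H p * g p := by
  have key := hpush (fun p => ENNReal.ofReal (H p)) (by fun_prop)
  simp_rw [← ENNReal.ofReal_mul (hH0 _)] at key
  have c1 : Continuous fun p => H (T p) * f p := by fun_prop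
  have i : Integrable fun p => H (T p) * f p := by
    refine ⟨c1.aestronglyMeasurable, ?_⟩
    rw [hasFiniteIntegral_iff_ofReal
      (Filter.Eventually.of_forall fun p => mul_nonneg (hH0 _) (hf0 p).le), key]
    exact (hasFiniteIntegral_iff_ofReal
      (Filter.Eventually.of_forall fun p => mul_nonneg (hH0 _) (hg0 p).le)).1 hi.2
  refine ⟨i, ?_⟩
  rw [integral_eq_lintegral_of_nonneg_ae
    (Filter.Eventually.of_forall fun p => mul_nonneg (hH0 _) (hf0 p).le) c1.aestronglyMeasurable,
    integral_eq_lintegral_of_nonneg_ae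
    (Filter.Eventually.of_forall fun p => mul_nonneg (hH0 _) (hg0 p).le) hi.1, key]

lemma iadd {X : Type*} [MeasurableSpace X] {m : Measure X} {F G : X → ℝ} (hF : Integrable F m)
    (hG : Integrable G m) : Integrable (fun p => F p + G p) m := hF.add hG

lemma isub {X : Type*} [MeasurableSpace X] {m : Measure X} {F G : X → ℝ} (hF : Integrable F m)
    (hG : Integrable G m) : Integrable (fun p => F p - G p) m := hF.sub hG

lemma ineg {X : Type*} [MeasurableSpace X] {m : Measure X} {F : X → ℝ} (hF : Integrable F m) :
    Integrable (fun p => - F p) m := hF.neg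

lemma amgm_pt {f G P Q s θ : ℝ} (hG : 0 < G) (hP : 0 < P) (hQ : 0 < Q) (hs : 0 < s)
    (hf : f = G * P * Q) (hθ : 0 < θ) (hθ2 : θ < 1 / 2) :
    s ^ (2 * θ) * (G ^ (-θ) * f) ≤ f ^ (1 - θ) * ((1 - 2 * θ) + θ * s * (P + Q)) := by
  have h := Real.geom_mean_le_arith_mean3_weighted hθ.le hθ.le (by linarith : 0 ≤ 1 - 2 * θ)
    (mul_pos hs hP).le (mul_pos hs hQ).le zero_le_one (by ring)
  have hf0 : 0 < f := by rw [hf]; positivity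
  have e : s ^ (2 * θ) * (G ^ (-θ) * f) = f ^ (1 - θ) *
      ((s * P) ^ θ * (s * Q) ^ θ * 1 ^ (1 - 2 * θ)) := by
    rw [Real.one_rpow, mul_rpow hs.le hP.le, mul_rpow hs.le hQ.le, rpow_sub hf0, rpow_one, hf,
      mul_rpow (by positivity) hQ.le, mul_rpow hG.le hP.le, rpow_neg hG.le, two_mul, rpow_add hs]
    have := rpow_pos_of_pos hG θ
    have := rpow_pos_of_pos hP θ
    have := rpow_pos_of_pos hQ θ
    field_simp
  rw [e]
  refine mul_le_mul_of_nonneg_left (h.trans (le_of_eq (by ring))) (by positivity)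

theorem transport_ineq {f g : ℝ × ℝ → ℝ} (hf : Continuous f) (hg : Continuous g)
    (hf0 : ∀ p, 0 < f p) (hg0 : ∀ p, 0 < g p) {b : ℝ → ℝ} (hb : Integrable b)
    (hfb : ∀ x y, f (x, y) ≤ b y) (hgb : ∀ x y, g (x, y) ≤ b y)
    (hfi : Integrable f) (hgi : Integrable g) (hm : ∫ p, f p = ∫ p, g p)
    {θ s Λ : ℝ} (hθ : 0 < θ) (hθ2 : θ < 1 / 2) (hs : 0 < s) (hΛ : 0 < Λ)
    {k k1 k2 : ℝ × ℝ → ℝ} (hk : ∀ p, k p = f p ^ (1 - θ)) (ck1 : Continuous k1)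
    (ck2 : Continuous k2) (dk1 : ∀ x y, HasDerivAt (fun t => k (t, y)) (k1 (x, y)) x)
    (dk2 : ∀ x y, HasDerivAt (fun t => k (x, t)) (k2 (x, y)) y)
    (ik : Integrable k) (ig : Integrable fun p => g p ^ (1 - θ))
    (ig2 : Integrable fun p => (p.1 ^ 2 + p.2 ^ 2) * g p)
    (iD : Integrable fun p => (k1 p ^ 2 + k2 p ^ 2) / f p)
    (iE : Integrable fun p => k p ^ 2 / f p / (1 + ‖p‖) ^ 2) :
    s ^ (2 * θ) * ∫ p, g p ^ (1 - θ) ≤ (1 - 2 * θ) * (∫ p, k p) +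
      θ * s * (1 / 2 * (Λ * (∫ p, (k1 p ^ 2 + k2 p ^ 2) / f p) +
        Λ⁻¹ * ∫ p, (p.1 ^ 2 + p.2 ^ 2) * g p)) := by
  obtain ⟨T₁, P, T₂, Q, cT1, cP, cT2, cQ, P0, Q0, dT1, dT2, hMA, hpush⟩ :=
    knothe hf hg hf0 hg0 hb hfb hgb hfi hgi hm
  obtain ⟨χ, χ', C, cχ, cχ', dχ, χ0, χ1, χone, χz, χ'z, χ'in, χ'b, C0⟩ := exists_cutoff1
  set T : ℝ × ℝ → ℝ × ℝ := fun p => (T₁ p.1, T₂ p) with hT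
  have cT : Continuous T := by fun_prop
  have ck : Continuous k := by
    have : k = fun p => f p ^ (1 - θ) := funext hk
    rw [this]
    exact hf.rpow_const fun p => Or.inl (hf0 p).ne'
  have k0 : ∀ p, 0 ≤ k p := fun p => by rw [hk]; exact rpow_nonneg (hf0 p).le _
  have cgθ : Continuous fun p => g p ^ (-θ) := hg.rpow_const fun p => Or.inl (hg0 p).ne'
  have eg : ∀ p, g p ^ (-θ) * g p = g p ^ (1 - θ) := fun p => by
    rw [← rpow_add_one (hg0 p).ne']; congr 1; ring
  obtain ⟨iL, eL⟩ := push_integral (T := T) hf hf0 hg0 cT hpush (H := fun p => g p ^ (-θ)) cgθ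
    (fun p => rpow_nonneg (hg0 p).le _) (by simpa only [eg] using ig)
  obtain ⟨iT, eT⟩ := push_integral (T := T) hf hf0 hg0 cT hpush
    (H := fun p => p.1 ^ 2 + p.2 ^ 2) (by fun_prop) (fun p => by positivity) ig2
  simp only [eg] at eL
  -- cutoffs
  let N : ℕ → ℝ := fun n => n + 1
  have N1 : ∀ n, 1 ≤ N n := fun n => by simp [N]
  have N0 : ∀ n, 0 < N n := fun n => lt_of_lt_of_le one_pos (N1 n)
  let η : ℕ → ℝ × ℝ → ℝ := fun n p => χ (p.1 / N n) * χ (p.2 / N n)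
  let η1 : ℕ → ℝ × ℝ → ℝ := fun n p => χ' (p.1 / N n) / N n * χ (p.2 / N n)
  let η2 : ℕ → ℝ × ℝ → ℝ := fun n p => χ (p.1 / N n) * (χ' (p.2 / N n) / N n)
  have cη : ∀ n, Continuous (η n) := fun n => by fun_prop
  have cη1 : ∀ n, Continuous (η1 n) := fun n => by fun_prop
  have cη2 : ∀ n, Continuous (η2 n) := fun n => by fun_prop
  have η0 : ∀ n p, 0 ≤ η n p := fun n p => mul_nonneg (χ0 _) (χ0 _)
  have ηle : ∀ n p, η n p ≤ 1 := fun n p => mul_le_one₀ (χ1 _) (χ0 _) (χ1 _)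
  have big : ∀ n (x : ℝ), 2 * N n ≤ |x| → 2 ≤ |x / N n| := fun n x hx => by
    rw [abs_div, abs_of_pos (N0 n), le_div_iff₀ (N0 n)]; exact hx
  have sη : ∀ n, HasCompactSupport (η n) := fun n => hcs_prod (2 * N n)
    (fun p hp => by simp [η, χz _ (big n _ hp)]) (fun p hp => by simp [η, χz _ (big n _ hp)])
  have sη1 : ∀ n, HasCompactSupport (η1 n) := fun n => hcs_prod (2 * N n)
    (fun p hp => by simp [η1, χ'z _ (big n _ hp)]) (fun p hp => by simp [η1, χz _ (big n _ hp)])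
  have sη2 : ∀ n, HasCompactSupport (η2 n) := fun n => hcs_prod (2 * N n)
    (fun p hp => by simp [η2, χz _ (big n _ hp)]) (fun p hp => by simp [η2, χ'z _ (big n _ hp)])
  have dχN : ∀ n x, HasDerivAt (fun t => χ (t / N n)) (χ' (x / N n) / N n) x := fun n x => by
    have := (dχ (x / N n)).comp x ((hasDerivAt_id x).div_const (N n))
    simpa [Function.comp_def, div_eq_mul_inv] using this
  have dη1 : ∀ n x y, HasDerivAt (fun t => η n (t, y)) (η1 n (x, y)) x := fun n x y =>
    (dχN n x).mul_const (χ (y / N n))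
  have dη2 : ∀ n x y, HasDerivAt (fun t => η n (x, t)) (η2 n (x, y)) y := fun n x y =>
    (dχN n y).const_mul (χ (x / N n))
  -- limits
  have Ntop : Filter.Tendsto N Filter.atTop Filter.atTop :=
    Filter.tendsto_atTop_add_const_right _ _ tendsto_natCast_atTop_atTop
  have ev : ∀ x : ℝ, ∀ᶠ n in Filter.atTop, |x / N n| < 1 := fun x => by
    filter_upwards [Ntop.eventually_gt_atTop |x|] with n hn
    rw [abs_div, abs_of_pos (N0 n), div_lt_one (N0 n)]; exact hn
  have limη : ∀ F : ℝ × ℝ → ℝ, Integrable F →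
      Filter.Tendsto (fun n => ∫ p, η n p * F p) Filter.atTop (nhds (∫ p, F p)) := fun F hF => by
    refine tendsto_integral_of_dominated_convergence (fun p => |F p|)
      (fun n => (cη n).aestronglyMeasurable.mul hF.1) hF.abs (fun n => .of_forall fun p => ?_)
      (.of_forall fun p => ?_)
    · rw [Real.norm_eq_abs, abs_mul, abs_of_nonneg (η0 n p)]
      exact mul_le_of_le_one_left (abs_nonneg _) (ηle n p)
    · apply tendsto_const_nhds.congr'
      filter_upwards [ev p.1, ev p.2] with n h1 h2
      simp [η, χone _ h1.le, χone _ h2.le]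
  have bη : ∀ n p, |η1 n p| ≤ 3 * C / (1 + ‖p‖) ∧ |η2 n p| ≤ 3 * C / (1 + ‖p‖) := fun n p => by
    have hn := N0 n
    by_cases hp : 2 * N n ≤ |p.1| ∨ 2 * N n ≤ |p.2|
    · have : 0 ≤ 3 * C / (1 + ‖p‖) := by positivity
      rcases hp with hp | hp
      · simpa [η1, η2, χz _ (big n _ hp), χ'z _ (big n _ hp)] using this
      · simpa [η1, η2, χz _ (big n _ hp), χ'z _ (big n _ hp)] using this
    · push Not at hp
      have hn1 : 1 + ‖p‖ ≤ 3 * N n := by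
        have : ‖p‖ ≤ 2 * N n := by
          rw [Prod.norm_def]; exact sup_le hp.1.le hp.2.le
        linarith [N1 n]
      have : C / N n ≤ 3 * C / (1 + ‖p‖) := by
        rw [div_le_div_iff₀ hn (by positivity)]
        nlinarith
      have h1 : ∀ x y, |χ' x / N n * χ y| ≤ C / N n := fun x y => by
        rw [abs_mul, abs_div, abs_of_pos hn, abs_of_nonneg (χ0 y)]
        exact (mul_le_of_le_one_right (by positivity) (χ1 y)).trans
          (div_le_div_of_nonneg_right (χ'b x) hn.le)
      exact ⟨(h1 _ _).trans this, by
        rw [show η2 n p = χ' (p.2 / N n) / N n * χ (p.1 / N n) from mul_comm _ _]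
        exact (h1 _ _).trans this⟩
  let err : ℕ → ℝ × ℝ → ℝ := fun n p => k p * (|η1 n p| * |T₁ p.1| + |η2 n p| * |T₂ p|)
  have cerr : ∀ n, Continuous (err n) := fun n => by
    have := cη1 n; have := cη2 n; fun_prop
  have amg : ∀ p t, k p * (3 * C / (1 + ‖p‖) * |t|) ≤
      3 * C / 2 * (k p ^ 2 / f p / (1 + ‖p‖) ^ 2 + f p * t ^ 2) := fun p t => by
    have h1 : 0 < 1 + ‖p‖ := by positivity
    have hfp := hf0 p
    have : k p / (1 + ‖p‖) * |t| ≤ 1 / 2 * (k p ^ 2 / f p / (1 + ‖p‖) ^ 2 + f p * t ^ 2) := by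
      have e : 1 / 2 * (k p ^ 2 / f p / (1 + ‖p‖) ^ 2 + f p * t ^ 2) -  k p / (1 + ‖p‖) * |t| =
        1 / 2 * ((k p / (1 + ‖p‖) - f p * |t|) ^ 2 / f p) := by
        rw [← sq_abs t]; field_simp; ring
      have : 0 ≤ 1 / 2 * ((k p / (1 + ‖p‖) - f p * |t|) ^ 2 / f p) := by positivity
      linarith
    calc _ = 3 * C * (k p / (1 + ‖p‖) * |t|) := by ring
      _ ≤ 3 * C * (1 / 2 * (k p ^ 2 / f p / (1 + ‖p‖) ^ 2 + f p * t ^ 2)) := by gcongr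
      _ = _ := by ring
  have limerr : Filter.Tendsto (fun n => ∫ p, err n p) Filter.atTop (nhds 0) := by
    have : Filter.Tendsto (fun n => ∫ p, err n p) Filter.atTop (nhds (∫ p : ℝ × ℝ, (0:ℝ))) := by
      refine tendsto_integral_of_dominated_convergence
        (fun p => 3 * C * (k p ^ 2 / f p / (1 + ‖p‖) ^ 2) + 3 * C / 2 *
          (((T p).1 ^ 2 + (T p).2 ^ 2) * f p))
        (fun n => (cerr n).aestronglyMeasurable) ((iE.const_mul _).add (iT.const_mul _))
        (fun n => .of_forall fun p => ?_)
        (.of_forall fun p => ?_)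
      · have e0 : 0 ≤ err n p := mul_nonneg (k0 p) (by positivity)
        rw [Real.norm_eq_abs, abs_of_nonneg e0]
        have h1 := amg p (T₁ p.1)
        have h2 := amg p (T₂ p)
        have : err n p ≤ k p * (3 * C / (1 + ‖p‖) * |T₁ p.1|) +
            k p * (3 * C / (1 + ‖p‖) * |T₂ p|) := by
          rw [← mul_add]
          refine mul_le_mul_of_nonneg_left ?_ (k0 p)
          gcongr
          exacts [(bη n p).1, (bη n p).2]
        simp only [T]
        linarith
      · apply tendsto_const_nhds.congr'
        filter_upwards [ev p.1, ev p.2] with n h1 h2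
        simp [err, η1, η2, χ'in _ h1, χ'in _ h2]
    simpa using this
  have iD1 : Integrable fun p => k1 p ^ 2 / f p + k2 p ^ 2 / f p := by
    simpa only [add_div] using iD
  -- the inequality with cutoff
  have main : ∀ n, s ^ (2 * θ) * ∫ p, η n p * (g (T p) ^ (-θ) * f p) ≤ (1 - 2 * θ) * (∫ p, k p) +
      θ * s * (1 / 2 * (Λ * (∫ p, (k1 p ^ 2 + k2 p ^ 2) / f p) +
        Λ⁻¹ * ∫ p, (p.1 ^ 2 + p.2 ^ 2) * g p)) + θ * s * ∫ p, err n p := fun n => by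
    have ics : ∀ F : ℝ × ℝ → ℝ, Continuous F → Integrable fun p => η n p * F p := fun F cF =>
      ((cη n).mul cF).integrable_of_hasCompactSupport (sη n).mul_right
    have iη1 : ∀ F : ℝ × ℝ → ℝ, Continuous F → Integrable fun p => η1 n p * F p := fun F cF =>
      ((cη1 n).mul cF).integrable_of_hasCompactSupport (sη1 n).mul_right
    have iη2 : ∀ F : ℝ × ℝ → ℝ, Continuous F → Integrable fun p => η2 n p * F p := fun F cF =>
      ((cη2 n).mul cF).integrable_of_hasCompactSupport (sη2 n).mul_right
    have hcη := cη n; have hcη1 := cη1 n; have hcη2 := cη2 n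
    have step1 : ∫ p, s ^ (2 * θ) * (η n p * (g (T p) ^ (-θ) * f p)) ≤
        ∫ p, ((1 - 2 * θ) * k p + θ * s * ((η n p * k p) * P p.1 + (η n p * k p) * Q p)) := by
      refine integral_mono ((ics _ ((cgθ.comp cT).mul hf)).const_mul _) ?_ fun p => ?_
      · refine (ik.const_mul _).add (Integrable.const_mul (Integrable.add ?_ ?_) _)
        · simpa only [mul_assoc] using ics (fun p => k p * P p.1) (by fun_prop)
        · simpa only [mul_assoc] using ics (fun p => k p * Q p) (by fun_prop)
      · have h := amgm_pt (s := s) (hg0 (T p)) (P0 p.1) (Q0 p) hs (hMA p.1 p.2) hθ hθ2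
        have h' := mul_le_mul_of_nonneg_left h (η0 n p)
        rw [← hk] at h'
        have h2 : η n p * ((1 - 2 * θ) * k p) ≤ (1 - 2 * θ) * k p :=
          mul_le_of_le_one_left (mul_nonneg (by linarith) (k0 p)) (ηle n p)
        simp only
        linarith
    have iP : Integrable fun p : ℝ × ℝ => (η n p * k p) * P p.1 := by
      simpa only [mul_assoc] using ics (fun p => k p * P p.1) (by fun_prop)
    have iQ : Integrable fun p : ℝ × ℝ => (η n p * k p) * Q p := by
      simpa only [mul_assoc] using ics (fun p => k p * Q p) (by fun_prop)
    have b1 : ∫ p : ℝ × ℝ, (η n p * k p) * P p.1 =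
        - ∫ p : ℝ × ℝ, (η1 n p * k p + η n p * k1 p) * T₁ p.1 :=
      ibp2_fst (v := fun p => T₁ p.1) (v' := fun p => P p.1)
        (fun x y => (dη1 n x y).mul (dk1 x y)) (fun x y => dT1 x)
        (by fun_prop) (by fun_prop) (by fun_prop) (by fun_prop) (sη n).mul_right
        ((sη1 n).mul_right.add (sη n).mul_right)
    have b2 : ∫ p : ℝ × ℝ, (η n p * k p) * Q p =
        - ∫ p : ℝ × ℝ, (η2 n p * k p + η n p * k2 p) * T₂ p :=
      ibp2_snd (fun x y => (dη2 n x y).mul (dk2 x y)) (fun x y => dT2 x y)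
        (by fun_prop) (by fun_prop) (by fun_prop) (by fun_prop) (sη n).mul_right
        ((sη2 n).mul_right.add (sη n).mul_right)
    have ib1 : Integrable fun p : ℝ × ℝ => (η1 n p * k p + η n p * k1 p) * T₁ p.1 := by
      simp only [add_mul, mul_assoc]
      exact (iη1 _ (by fun_prop)).add (ics _ (by fun_prop))
    have ib2 : Integrable fun p : ℝ × ℝ => (η2 n p * k p + η n p * k2 p) * T₂ p := by
      simp only [add_mul, mul_assoc]
      exact (iη2 _ (by fun_prop)).add (ics _ (by fun_prop))
    have ierr : Integrable (err n) := by
      refine (cerr n).integrable_of_hasCompactSupport (hcs_prod (2 * N n) ?_ ?_)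
      · intro p hp; simp [err, η1, η2, χz _ (big n _ hp), χ'z _ (big n _ hp)]
      · intro p hp; simp [err, η1, η2, χz _ (big n _ hp), χ'z _ (big n _ hp)]
    have step2 : ∫ p, (-((η1 n p * k p + η n p * k1 p) * T₁ p.1) -
        (η2 n p * k p + η n p * k2 p) * T₂ p) ≤
        ∫ p, (err n p + (1 / 2 * Λ * ((k1 p ^ 2 + k2 p ^ 2) / f p) +
          1 / 2 * Λ⁻¹ * (((T p).1 ^ 2 + (T p).2 ^ 2) * f p))) := by
      refine integral_mono (ib1.neg.sub ib2) (ierr.add ((iD.const_mul _).add (iT.const_mul _)))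
        fun p => ?_
      have hfp := hf0 p
      have am : ∀ a t : ℝ, -(η n p * a * t) ≤ 1 / 2 * Λ * (a ^ 2 / f p) +
          1 / 2 * Λ⁻¹ * (t ^ 2 * f p) := fun a t => by
        have e : 1 / 2 * Λ * (a ^ 2 / f p) + 1 / 2 * Λ⁻¹ * (t ^ 2 * f p) + a * t =
          1 / 2 * ((Λ * a + t * f p) ^ 2 / (Λ * f p)) := by field_simp; ring
        have e' : 1 / 2 * Λ * (a ^ 2 / f p) + 1 / 2 * Λ⁻¹ * (t ^ 2 * f p) - a * t =
          1 / 2 * ((Λ * a - t * f p) ^ 2 / (Λ * f p)) := by field_simp; ring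
        have n1 : 0 ≤ 1 / 2 * ((Λ * a + t * f p) ^ 2 / (Λ * f p)) := by positivity
        have n2 : 0 ≤ 1 / 2 * ((Λ * a - t * f p) ^ 2 / (Λ * f p)) := by positivity
        have : |a * t| ≤ 1 / 2 * Λ * (a ^ 2 / f p) + 1 / 2 * Λ⁻¹ * (t ^ 2 * f p) :=
          abs_le.2 ⟨by linarith, by linarith⟩
        refine le_trans ?_ this
        calc -(η n p * a * t) ≤ |η n p * a * t| := neg_le_abs _
          _ = η n p * |a * t| := by rw [mul_assoc, abs_mul, abs_of_nonneg (η0 n p)]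
          _ ≤ _ := mul_le_of_le_one_left (abs_nonneg _) (ηle n p)
      have er : ∀ e t : ℝ, -(e * k p * t) ≤ k p * (|e| * |t|) := fun e t => by
        calc -(e * k p * t) ≤ |e * k p * t| := neg_le_abs _
          _ = _ := by rw [abs_mul, abs_mul, abs_of_nonneg (k0 p)]; ring
      have a1 := am (k1 p) (T₁ p.1)
      have a2 := am (k2 p) (T₂ p)
      have a3 := er (η1 n p) (T₁ p.1)
      have a4 := er (η2 n p) (T₂ p)
      simp only [err, T]
      rw [add_div]
      linarith
    have ib1' : Integrable fun p : ℝ × ℝ => -((η1 n p * k p + η n p * k1 p) * T₁ p.1) := ib1.neg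
    rw [integral_sub ib1' ib2, integral_neg, ← b1, sub_eq_add_neg, ← b2,
      integral_add ierr (iadd (iD.const_mul _) (iT.const_mul _)),
      integral_add (iD.const_mul _) (iT.const_mul _), integral_const_mul, integral_const_mul] at step2
    rw [integral_const_mul, integral_add (ik.const_mul _) ((iadd iP iQ).const_mul _),
      integral_const_mul, integral_const_mul, integral_add iP iQ] at step1
    have := mul_le_mul_of_nonneg_left step2 (mul_pos hθ hs).le
    rw [eT] at this
    linarith
  have l1 := (limη _ iL).const_mul (s ^ (2 * θ))
  have l2 := (limerr.const_mul (θ * s)).const_add ((1 - 2 * θ) * (∫ p, k p) +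
      θ * s * (1 / 2 * (Λ * (∫ p, (k1 p ^ 2 + k2 p ^ 2) / f p) +
        Λ⁻¹ * ∫ p, (p.1 ^ 2 + p.2 ^ 2) * g p)))
  have := le_of_tendsto_of_tendsto' l1 l2 main
  rw [eL] at this
  simpa using this

/-- measurable identification of the plane with Euclidean space -/
def eE : (ℝ × ℝ) ≃ᵐ EuclideanSpace ℝ (Fin 2) :=
  (MeasurableEquiv.finTwoArrow (α := ℝ)).symm.trans (MeasurableEquiv.toLp 2 (Fin 2 → ℝ))

lemma eE_apply (p : ℝ × ℝ) : eE p = !₂[p.1, p.2] := by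
  simp only [eE, MeasurableEquiv.trans_apply, MeasurableEquiv.coe_toLp]
  rfl

lemma eE_mp : MeasurePreserving eE volume volume :=
  (volume_preserving_finTwoArrow ℝ).symm.trans
    (EuclideanSpace.volume_preserving_symm_measurableEquiv_toLp (Fin 2)).symm

lemma norm_eE_sq (p : ℝ × ℝ) : ‖eE p‖ ^ 2 = p.1 ^ 2 + p.2 ^ 2 := by
  rw [eE_apply, EuclideanSpace.norm_sq_eq]; simp

lemma integral_eE (F : EuclideanSpace ℝ (Fin 2) → ℝ) : ∫ p, F (eE p) = ∫ x, F x :=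
  eE_mp.integral_comp eE.measurableEmbedding F

lemma integrable_eE {F : EuclideanSpace ℝ (Fin 2) → ℝ} :
    Integrable (fun p => F (eE p)) ↔ Integrable F :=
  eE_mp.integrable_comp_emb eE.measurableEmbedding

lemma radial_integrable {F : ℝ → ℝ} :
    Integrable (fun x : EuclideanSpace ℝ (Fin 2) => F ‖x‖) ↔
      IntegrableOn (fun r => r * F r) (Set.Ioi 0) := by
  rw [integrable_fun_norm_addHaar (volume : Measure (EuclideanSpace ℝ (Fin 2)))]
  simp

lemma radial_integral (F : ℝ → ℝ) :
    ∫ x : EuclideanSpace ℝ (Fin 2), F ‖x‖ = 2 * π * ∫ r in Set.Ioi 0, r * F r := by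
  rw [integral_fun_norm_addHaar (volume : Measure (EuclideanSpace ℝ (Fin 2)))]
  simp [Measure.real, EuclideanSpace.volume_ball_fin_two, pi_pos.le, mul_assoc]

lemma japanese_radial {q : ℝ} (hq : 1 < q) :
    IntegrableOn (fun r : ℝ => r * (1 + r ^ 2) ^ (-q)) (Set.Ioi 0) ∧
    ∫ r in Set.Ioi 0, r * (1 + r ^ 2) ^ (-q) = 1 / (2 * (q - 1)) := by
  have hd : ∀ r ∈ Set.Ici (0:ℝ), HasDerivAt (fun r : ℝ => -(1 / (2 * (q - 1))) * (1 + r ^ 2) ^ (1 - q))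
      (r * (1 + r ^ 2) ^ (-q)) r := fun r _ => by
    have h1 : HasDerivAt (fun r : ℝ => 1 + r ^ 2) (2 * r) r := by
      simpa using (hasDerivAt_pow 2 r).const_add 1
    have h2 := (h1.rpow_const (p := 1 - q) (Or.inl (by positivity))).const_mul (-(1 / (2 * (q - 1))))
    refine h2.congr_deriv ?_
    rw [show 1 - q - 1 = -q by ring]
    have : q - 1 ≠ 0 := by linarith
    field_simp
    ring
  have ht : Filter.Tendsto (fun r : ℝ => -(1 / (2 * (q - 1))) * (1 + r ^ 2) ^ (1 - q))
      Filter.atTop (nhds 0) := by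
    have h1 : Filter.Tendsto (fun r : ℝ => 1 + r ^ 2) Filter.atTop Filter.atTop :=
      Filter.tendsto_atTop_add_const_left _ _ (Filter.tendsto_pow_atTop (by norm_num))
    have h2 := (tendsto_rpow_neg_atTop (y := q - 1) (by linarith)).comp h1
    have h3 := h2.const_mul (-(1 / (2 * (q - 1))))
    simpa [Function.comp_def] using h3
  have hn : ∀ r ∈ Set.Ioi (0:ℝ), 0 ≤ r * (1 + r ^ 2) ^ (-q) := fun r hr =>
    mul_nonneg (le_of_lt hr) (by positivity)
  refine ⟨integrableOn_Ioi_deriv_of_nonneg' hd hn ht, ?_⟩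
  rw [integral_Ioi_of_hasDerivAt_of_nonneg' hd hn ht]
  simp

/-- the weight `1 + |p|²` -/
def Rw (p : ℝ × ℝ) : ℝ := 1 + (p.1 ^ 2 + p.2 ^ 2)

lemma Rw_one_le (p : ℝ × ℝ) : 1 ≤ Rw p := by unfold Rw; nlinarith [sq_nonneg p.1, sq_nonneg p.2]
lemma Rw_pos (p : ℝ × ℝ) : 0 < Rw p := one_pos.trans_le (Rw_one_le p)
lemma Rw_cont : Continuous Rw := by unfold Rw; fun_prop
lemma Rw_rpow_cont (q : ℝ) : Continuous fun p => Rw p ^ q :=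
  Rw_cont.rpow_const fun p => Or.inl (Rw_pos p).ne'

lemma Rw_int {q : ℝ} (hq : 1 < q) : Integrable (fun p => Rw p ^ (-q)) ∧
    ∫ p, Rw p ^ (-q) = π / (q - 1) := by
  have e : (fun p => Rw p ^ (-q)) = fun p => (fun r : ℝ => (1 + r ^ 2) ^ (-q)) ‖eE p‖ := by
    ext p; simp only [norm_eE_sq, Rw]
  constructor
  · rw [e]
    exact (integrable_eE (F := fun x => (fun r : ℝ => (1 + r ^ 2) ^ (-q)) ‖x‖)).2
      (radial_integrable.2 (japanese_radial hq).1)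
  · rw [e, integral_eE (fun x => (fun r : ℝ => (1 + r ^ 2) ^ (-q)) ‖x‖), radial_integral (fun r : ℝ => (1 + r ^ 2) ^ (-q)),
      (japanese_radial hq).2]
    have : q - 1 ≠ 0 := by linarith
    field_simp

lemma bd_int {F : ℝ × ℝ → ℝ} (hF : Continuous F) {M q : ℝ} (hq : 1 < q)
    (hb : ∀ p, |F p| ≤ M * Rw p ^ (-q)) : Integrable F :=
  ((Rw_int hq).1.const_mul M).mono' hF.aestronglyMeasurable (.of_forall hb)

lemma cs_bound {F : ℝ × ℝ → ℝ} (hF : Continuous F) {K : Set (ℝ × ℝ)} (hK : IsCompact K)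
    (h0 : ∀ p, p ∉ K → F p = 0) : ∃ M, 0 ≤ M ∧ ∀ p, |F p| ≤ M := by
  obtain ⟨M, hM⟩ := hK.exists_bound_of_continuousOn hF.continuousOn
  refine ⟨max M 0, le_max_right _ _, fun p => ?_⟩
  by_cases hp : p ∈ K
  · exact (hM p hp).trans (le_max_left _ _)
  · rw [h0 p hp]; simp

lemma rp {r : ℝ} (hr : 0 < r) (x y : ℝ) : r ^ x * r ^ y = r ^ (x + y) := (rpow_add hr x y).symm

set_option maxHeartbeats 1000000 in
theorem onofri_step {Ψ Ψ1 Ψ2 : ℝ × ℝ → ℝ} (cΨ : Continuous Ψ) (cΨ1 : Continuous Ψ1)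
    (cΨ2 : Continuous Ψ2) (d1 : ∀ x y, HasDerivAt (fun t => Ψ (t, y)) (Ψ1 (x, y)) x)
    (d2 : ∀ x y, HasDerivAt (fun t => Ψ (x, t)) (Ψ2 (x, y)) y)
    {K : Set (ℝ × ℝ)} (hK : IsCompact K) (h0 : ∀ p, p ∉ K → Ψ p = 0)
    (h1 : ∀ p, p ∉ K → Ψ1 p = 0) (h2 : ∀ p, p ∉ K → Ψ2 p = 0) {a : ℝ} (ha : 0 < a) :
    Integrable (fun p => exp (Ψ p) * Rw p ^ (-(2 + 2 * a))) ∧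
    Integrable (fun p => exp ((1 + a / (1 + a)) / 2 * Ψ p) * Rw p ^ (-(1 + 2 * a))) ∧
    Integrable (fun p => exp (a / (1 + a) * Ψ p) * Rw p ^ (-(2 * a)) *
      ((Ψ1 p - 4 * (1 + a) * p.1 / Rw p) ^ 2 + (Ψ2 p - 4 * (1 + a) * p.2 / Rw p) ^ 2)) ∧
    0 < ∫ p, exp (Ψ p) * Rw p ^ (-(2 + 2 * a)) ∧
    ((1 + 2 * a) / π * ∫ p, exp (Ψ p) * Rw p ^ (-(2 + 2 * a))) ^ (a / (1 + a)) * (π / (2 * a)) ≤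
      a / (1 + a) * (∫ p, exp ((1 + a / (1 + a)) / 2 * Ψ p) * Rw p ^ (-(1 + 2 * a))) +
      (1 + 2 * a) / (32 * (1 + a) ^ 3) *
      (∫ p, exp (a / (1 + a) * Ψ p) * Rw p ^ (-(2 * a)) *
      ((Ψ1 p - 4 * (1 + a) * p.1 / Rw p) ^ 2 + (Ψ2 p - 4 * (1 + a) * p.2 / Rw p) ^ 2)) +
      π / (4 * a * (1 + a)) := by
  have ha1 : 0 < 1 + a := by linarith
  set y := a / (1 + a) with hy
  set m := (1 + y) / 2 with hm
  set θ := 1 / (2 * (1 + a)) with hθ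
  have em : 1 - θ = m := by rw [hm, hy, hθ]; field_simp; ring
  have ey : 1 - 2 * θ = y := by rw [hy, hθ]; field_simp; ring
  have hy0 : 0 < y := by positivity
  have hm0 : 0 < m := by positivity
  have em2 : (2 + 2 * a) * m = 1 + 2 * a := by rw [hm, hy]; field_simp; ring
  have θ0 : 0 < θ := by positivity
  have θ2 : θ < 1 / 2 := by linarith
  obtain ⟨M, M0, hM⟩ := cs_bound cΨ hK h0
  have cR := Rw_cont
  have R0 : ∀ p, Rw p ≠ 0 := fun p => (Rw_pos p).ne'
  have cRq := Rw_rpow_cont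
  have eM : ∀ c, 0 ≤ c → ∀ p, exp (c * Ψ p) ≤ exp (c * M) := fun c hc p =>
    exp_le_exp.2 (mul_le_mul_of_nonneg_left ((le_abs_self _).trans (hM p)) hc)
  have eM1 : ∀ p, exp (Ψ p) ≤ exp M := fun p => exp_le_exp.2 ((le_abs_self _).trans (hM p))
  let f : ℝ × ℝ → ℝ := fun p => exp (Ψ p) * Rw p ^ (-(2 + 2 * a))
  have cf : Continuous f := by have := cRq (-(2 + 2 * a)); fun_prop
  have f0 : ∀ p, 0 < f p := fun p => mul_pos (exp_pos _) (rpow_pos_of_pos (Rw_pos p) _)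
  have fle : ∀ p, f p ≤ exp M * Rw p ^ (-(2 + 2 * a)) := fun p =>
    mul_le_mul_of_nonneg_right (eM1 p) (rpow_pos_of_pos (Rw_pos p) _).le
  have fi : Integrable f := bd_int cf (q := 2 + 2 * a) (by linarith) fun p => by
    rw [abs_of_pos (f0 p)]; exact fle p
  have fpos : 0 < ∫ p, f p := by
    refine (integral_pos_iff_support_of_nonneg (fun p => (f0 p).le) fi).2 ?_
    have : Function.support f = Set.univ := Set.eq_univ_of_forall fun p => (f0 p).ne'
    rw [this]; simp
  set Z := (1 + 2 * a) / π * ∫ p, f p with hZ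
  have Z0 : 0 < Z := by positivity
  let g : ℝ × ℝ → ℝ := fun p => Z * Rw p ^ (-(2 + 2 * a))
  have cg : Continuous g := by have := cRq (-(2 + 2 * a)); fun_prop
  have g0 : ∀ p, 0 < g p := fun p => mul_pos Z0 (rpow_pos_of_pos (Rw_pos p) _)
  have I1 := Rw_int (q := 2 + 2 * a) (by linarith)
  have I2 := Rw_int (q := 1 + 2 * a) (by linarith)
  have gi : Integrable g := I1.1.const_mul Z
  have mass : ∫ p, f p = ∫ p, g p := by
    rw [integral_const_mul, I1.2, hZ, show 2 + 2 * a - 1 = 1 + 2 * a by ring]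
    have : 1 + 2 * a ≠ 0 := by positivity
    field_simp
  have Rb : ∀ x y : ℝ, Rw (x, y) ^ (-(2 + 2 * a)) ≤ (1 + y ^ 2)⁻¹ := fun x y => by
    calc Rw (x, y) ^ (-(2 + 2 * a)) ≤ Rw (x, y) ^ (-1 : ℝ) :=
          rpow_le_rpow_of_exponent_le (Rw_one_le _) (by linarith)
      _ = (Rw (x, y))⁻¹ := rpow_neg_one _
      _ ≤ _ := inv_anti₀ (by positivity) (by unfold Rw; simp only; nlinarith [sq_nonneg x])
  -- k
  let k : ℝ × ℝ → ℝ := fun p => exp (m * Ψ p) * Rw p ^ (-(1 + 2 * a))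
  have k0 : ∀ p, 0 < k p := fun p => mul_pos (exp_pos _) (rpow_pos_of_pos (Rw_pos p) _)
  have hk : ∀ p, k p = f p ^ (1 - θ) := fun p => by
    simp only [k, f]
    rw [mul_rpow (exp_pos _).le (rpow_pos_of_pos (Rw_pos p) _).le, ← rpow_mul (Rw_pos p).le,
      ← exp_mul, em, neg_mul, em2, mul_comm m]
  have ck : Continuous k := by have := cRq (-(1 + 2 * a)); fun_prop
  let W1 : ℝ × ℝ → ℝ := fun p => Ψ1 p - 4 * (1 + a) * p.1 / Rw p
  let W2 : ℝ × ℝ → ℝ := fun p => Ψ2 p - 4 * (1 + a) * p.2 / Rw p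
  have cW1 : Continuous W1 := cΨ1.sub (Continuous.div (by fun_prop) cR R0)
  have cW2 : Continuous W2 := cΨ2.sub (Continuous.div (by fun_prop) cR R0)
  have der : ∀ (ψ r : ℝ → ℝ) (ψ' z : ℝ), HasDerivAt ψ ψ' z → HasDerivAt r (2 * z) z → 0 < r z →
      HasDerivAt (fun t => exp (m * ψ t) * r t ^ (-(1 + 2 * a)))
        (m * (exp (m * ψ z) * r z ^ (-(1 + 2 * a))) * (ψ' - 4 * (1 + a) * z / r z)) z := by
    intro ψ r ψ' z h1 h2 h3
    have := ((h1.const_mul m).exp).mul (h2.rpow_const (p := -(1 + 2 * a)) (Or.inl h3.ne'))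
    refine this.congr_deriv ?_
    rw [rpow_sub h3, rpow_one, ← em2]
    field_simp
    ring
  have dk1 : ∀ x y, HasDerivAt (fun t => k (t, y)) (m * k (x, y) * W1 (x, y)) x := fun x y =>
    der (fun t => Ψ (t, y)) (fun t => Rw (t, y)) _ x (d1 x y) (by
      simpa [Rw] using ((hasDerivAt_pow 2 x).add_const (y ^ 2)).const_add 1) (Rw_pos _)
  have dk2 : ∀ x y, HasDerivAt (fun t => k (x, t)) (m * k (x, y) * W2 (x, y)) y := fun x y =>
    der (fun t => Ψ (x, t)) (fun t => Rw (x, t)) _ y (d2 x y) (by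
      simpa [Rw] using ((hasDerivAt_pow 2 y).const_add (x ^ 2)).const_add 1) (Rw_pos _)
  have ik : Integrable k := bd_int ck (q := 1 + 2 * a) (M := exp (m * M)) (by linarith) fun p => by
    rw [abs_of_pos (k0 p)]
    exact mul_le_mul_of_nonneg_right (eM m hm0.le p) (rpow_pos_of_pos (Rw_pos p) _).le
  have egm : ∀ p, g p ^ (1 - θ) = Z ^ m * Rw p ^ (-(1 + 2 * a)) := fun p => by
    simp only [g]
    rw [mul_rpow Z0.le (rpow_pos_of_pos (Rw_pos p) _).le, ← rpow_mul (Rw_pos p).le, em, neg_mul, em2]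
  have ig : Integrable fun p => g p ^ (1 - θ) := by
    simp only [egm]; exact I2.1.const_mul _
  have eg2 : ∀ p : ℝ × ℝ, (p.1 ^ 2 + p.2 ^ 2) * g p =
      Z * (Rw p ^ (-(1 + 2 * a)) - Rw p ^ (-(2 + 2 * a))) := fun p => by
    have : Rw p ^ (-(1 + 2 * a)) = Rw p * Rw p ^ (-(2 + 2 * a)) := by
      rw [mul_comm (Rw p), ← rpow_add_one (R0 p)]; congr 1; ring
    rw [this]; simp only [g, Rw]; ring
  have ig2 : Integrable fun p : ℝ × ℝ => (p.1 ^ 2 + p.2 ^ 2) * g p := by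
    simp only [eg2]; exact (I2.1.sub I1.1).const_mul _
  have eD0 : ∀ p, k p ^ 2 / f p = exp (y * Ψ p) * Rw p ^ (-(2 * a)) := fun p => by
    rw [div_eq_iff (f0 p).ne']
    simp only [k, f]
    have e1 : exp (m * Ψ p) ^ 2 = exp (y * Ψ p) * exp (Ψ p) := by
      rw [← exp_nat_mul, ← exp_add]; congr 1; rw [hm]; push_cast; ring
    have e2 : (Rw p ^ (-(1 + 2 * a))) ^ 2 = Rw p ^ (-(2 * a)) * Rw p ^ (-(2 + 2 * a)) := by
      rw [rp (Rw_pos p), ← rpow_natCast, ← rpow_mul (Rw_pos p).le]; congr 1; push_cast; ring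
    rw [mul_pow, e1, e2]; ring
  have eD : ∀ p, ((m * k p * W1 p) ^ 2 + (m * k p * W2 p) ^ 2) / f p =
      m ^ 2 * (exp (y * Ψ p) * Rw p ^ (-(2 * a)) * (W1 p ^ 2 + W2 p ^ 2)) := fun p => by
    rw [← eD0]; ring
  obtain ⟨M1, M10, hM1⟩ := cs_bound (F := fun p => Ψ1 p ^ 2 * Rw p) (by fun_prop) hK
    (fun p hp => by simp [h1 p hp])
  obtain ⟨M2, M20, hM2⟩ := cs_bound (F := fun p => Ψ2 p ^ 2 * Rw p) (by fun_prop) hK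
    (fun p hp => by simp [h2 p hp])
  have bW : ∀ p, W1 p ^ 2 + W2 p ^ 2 ≤ (2 * M1 + 2 * M2 + 32 * (1 + a) ^ 2) * Rw p ^ (-1 : ℝ) :=
    fun p => by
    have hR := Rw_pos p
    rw [rpow_neg_one, ← div_eq_mul_inv, le_div_iff₀ hR]
    have b1 := (le_abs_self _).trans (hM1 p)
    have b2 := (le_abs_self _).trans (hM2 p)
    have c1 : (Ψ1 p - 4 * (1 + a) * p.1 / Rw p) ^ 2 ≤
      2 * Ψ1 p ^ 2 + 2 * (4 * (1 + a) * p.1 / Rw p) ^ 2 := by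
      nlinarith [sq_nonneg (Ψ1 p + 4 * (1 + a) * p.1 / Rw p)]
    have c2 : (Ψ2 p - 4 * (1 + a) * p.2 / Rw p) ^ 2 ≤
      2 * Ψ2 p ^ 2 + 2 * (4 * (1 + a) * p.2 / Rw p) ^ 2 := by
      nlinarith [sq_nonneg (Ψ2 p + 4 * (1 + a) * p.2 / Rw p)]
    have c3 : (2 * (4 * (1 + a) * p.1 / Rw p) ^ 2 + 2 * (4 * (1 + a) * p.2 / Rw p) ^ 2) * Rw p ≤
        32 * (1 + a) ^ 2 := by
      have : (2 * (4 * (1 + a) * p.1 / Rw p) ^ 2 + 2 * (4 * (1 + a) * p.2 / Rw p) ^ 2) * Rw p =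
        32 * (1 + a) ^ 2 * ((p.1 ^ 2 + p.2 ^ 2) / Rw p) := by field_simp; ring
      rw [this]
      refine mul_le_of_le_one_right (by positivity) ?_
      rw [div_le_one hR]; unfold Rw; linarith
    have := mul_le_mul_of_nonneg_right (add_le_add c1 c2) hR.le
    simp only [W1, W2]
    linarith
  have iB : Integrable fun p => exp (y * Ψ p) * Rw p ^ (-(2 * a)) * (W1 p ^ 2 + W2 p ^ 2) := by
    refine bd_int (by have := cRq (-(2 * a)); fun_prop) (q := 1 + 2 * a)
      (M := exp (y * M) * (2 * M1 + 2 * M2 + 32 * (1 + a) ^ 2)) (by linarith) fun p => ?_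
    have hR := rpow_pos_of_pos (Rw_pos p) (-(2 * a))
    rw [abs_of_nonneg (by positivity)]
    calc _ ≤ exp (y * M) * Rw p ^ (-(2 * a)) *
        ((2 * M1 + 2 * M2 + 32 * (1 + a) ^ 2) * Rw p ^ (-1 : ℝ)) := by
          gcongr
          · exact (le_abs_self _).trans (hM p)
          · exact bW p
      _ = _ := by
        rw [show -(1 + 2 * a) = -(2 * a) + (-1) by ring, rpow_add (Rw_pos p)]; ring
  have iD : Integrable fun p => ((m * k p * W1 p) ^ 2 + (m * k p * W2 p) ^ 2) / f p := by
    simp only [eD]; exact iB.const_mul _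
  have iE : Integrable fun p => k p ^ 2 / f p / (1 + ‖p‖) ^ 2 := by
    simp only [eD0]
    refine bd_int (by
      have := cRq (-(2 * a))
      exact Continuous.div (by fun_prop) (by fun_prop) fun p => by positivity) (q := 1 + 2 * a)
      (M := exp (y * M) * 2) (by linarith) fun p => ?_
    have hR := rpow_pos_of_pos (Rw_pos p) (-(2 * a))
    rw [abs_of_nonneg (by positivity), div_le_iff₀ (by positivity)]
    have n1 : p.1 ^ 2 ≤ ‖p‖ ^ 2 := sq_le_sq.2 (by
      rw [abs_of_nonneg (norm_nonneg p)]; exact norm_fst_le p)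
    have n2 : p.2 ^ 2 ≤ ‖p‖ ^ 2 := sq_le_sq.2 (by
      rw [abs_of_nonneg (norm_nonneg p)]; exact norm_snd_le p)
    have n3 : Rw p ≤ 2 * (1 + ‖p‖) ^ 2 := by
      unfold Rw; nlinarith [norm_nonneg p]
    have n4 : Rw p ^ (-(2 * a)) = Rw p ^ (-(1 + 2 * a)) * Rw p := by
      rw [← rpow_add_one (R0 p)]; congr 1; ring
    have hR' := rpow_pos_of_pos (Rw_pos p) (-(1 + 2 * a))
    calc exp (y * Ψ p) * Rw p ^ (-(2 * a)) ≤
        exp (y * M) * (Rw p ^ (-(1 + 2 * a)) * (2 * (1 + ‖p‖) ^ 2)) := by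
          rw [n4]; have := Rw_pos p; gcongr; exact (le_abs_self _).trans (hM p)
      _ = _ := by ring
  refine ⟨fi, ik, iB, fpos, ?_⟩
  have key := transport_ineq cf cg f0 g0 (b := fun y => max (exp M) Z * (1 + y ^ 2)⁻¹)
    (integrable_inv_one_add_sq.const_mul _)
    (fun x y => (fle (x, y)).trans (by
      have := Rb x y
      have := (rpow_pos_of_pos (Rw_pos (x, y)) (-(2 + 2 * a))).le
      gcongr; exact le_max_left _ _))
    (fun x y => by
      have := Rb x y
      have := (rpow_pos_of_pos (Rw_pos (x, y)) (-(2 + 2 * a))).le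
      simp only [g]
      gcongr; exact le_max_right _ _) fi gi mass (s := Z ^ (-(1 / 2) : ℝ))
    (Λ := Z ^ (1 / 2 : ℝ) / (2 * (1 + 2 * a))) θ0 θ2
    (by positivity) (by positivity) hk (by fun_prop) (by fun_prop) dk1 dk2 ik ig ig2 iD iE
  simp only [eg2, eD, egm] at key
  rw [integral_const_mul, integral_const_mul, integral_const_mul, integral_sub I2.1 I1.1, I1.2,
    I2.2, ey] at key
  have e1 : (Z ^ (-(1 / 2) : ℝ)) ^ (2 * θ) * (Z ^ m * (π / (1 + 2 * a - 1))) =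
      Z ^ y * (π / (2 * a)) := by
    rw [← rpow_mul Z0.le, ← mul_assoc, rp Z0, ← em, ← ey]
    congr 2 <;> ring
  rw [e1] at key
  refine key.trans (le_of_eq ?_)
  have e2 : (Z ^ (1 / 2 : ℝ) / (2 * (1 + 2 * a)))⁻¹ = 2 * (1 + 2 * a) * Z ^ (-(1/2) : ℝ) := by
    rw [rpow_neg Z0.le]; field_simp
  have e3 : Z ^ (-(1/2) : ℝ) * Z ^ (1/2 : ℝ) = 1 := by rw [rp Z0]; simp
  have e4 : Z ^ (-(1/2) : ℝ) * Z ^ (-(1/2) : ℝ) * Z = 1 := by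
    rw [rp Z0, ← rpow_add_one Z0.ne']; norm_num
  rw [e2]
  have hm' : m = (1 + 2 * a) / (2 * (1 + a)) := by rw [hm, hy]; field_simp; ring
  set s := Z ^ (-(1/2) : ℝ)
  set t := Z ^ (1/2 : ℝ)
  have h21 : 1 + 2 * a ≠ 0 := by positivity
  rw [add_assoc]
  congr 1
  simp only [W1, W2]
  generalize (∫ p, exp (y * Ψ p) * Rw p ^ (-(2 * a)) * ((Ψ1 p - 4 * (1 + a) * p.1 / Rw p) ^ 2 +
    (Ψ2 p - 4 * (1 + a) * p.2 / Rw p) ^ 2)) = B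
  calc _ = θ / 2 * ((s * t) * (m ^ 2 * B) / (2 * (1 + 2 * a)) + (s * s * Z) * (2 * (1 + 2 * a)) *
        (π / (1 + 2 * a - 1) - π / (2 + 2 * a - 1))) := by ring
    _ = _ := by
      rw [e3, e4, hm', hθ, show 1 + 2 * a - 1 = 2 * a by ring, show 2 + 2 * a - 1 = 1 + 2 * a by ring]
      field_simp
      ring

lemma int_K {F : ℝ × ℝ → ℝ} {K : Set (ℝ × ℝ)} (h : ∀ p, p ∉ K → F p = 0) :
    ∫ p, F p = ∫ p in K, F p :=
  (setIntegral_eq_integral_of_forall_compl_eq_zero h).symm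

theorem onofri_plane {Ψ Ψ1 Ψ2 : ℝ × ℝ → ℝ} (cΨ : Continuous Ψ) (cΨ1 : Continuous Ψ1)
    (cΨ2 : Continuous Ψ2) (d1 : ∀ x y, HasDerivAt (fun t => Ψ (t, y)) (Ψ1 (x, y)) x)
    (d2 : ∀ x y, HasDerivAt (fun t => Ψ (x, t)) (Ψ2 (x, y)) y)
    {K : Set (ℝ × ℝ)} (hK : IsCompact K) (h0 : ∀ p, p ∉ K → Ψ p = 0)
    (h1 : ∀ p, p ∉ K → Ψ1 p = 0) (h2 : ∀ p, p ∉ K → Ψ2 p = 0) :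
    log (∫ p, exp (Ψ p) * (1 / (π * Rw p ^ 2))) ≤
      1 / (16 * π) * (∫ p, (Ψ1 p ^ 2 + Ψ2 p ^ 2)) + ∫ p, Ψ p * (1 / (π * Rw p ^ 2)) := by
  have cR := Rw_cont
  have R0 : ∀ p, Rw p ≠ 0 := fun p => (Rw_pos p).ne'
  have cRy : Continuous fun z : (ℝ × ℝ) × (ℝ × ℝ) => z.1.1 := by fun_prop
  have cpow : ∀ q : (ℝ × ℝ) × (ℝ × ℝ) → ℝ, Continuous q →
      Continuous fun z : (ℝ × ℝ) × (ℝ × ℝ) => Rw z.2 ^ q z := fun q hq =>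
    (cR.comp continuous_snd).rpow hq fun z => Or.inl (R0 _)
  -- the parametric integrands
  let D1 : ℝ × ℝ → ℝ × ℝ → ℝ := fun z p => (exp ((1 + z.2) / 2 * Ψ p) - 1) * Rw p ^ (-(1 + 2 * z.1))
  let D2 : ℝ × ℝ → ℝ × ℝ → ℝ := fun z p => exp (z.2 * Ψ p) * Rw p ^ (-(2 * z.1)) *
      ((Ψ1 p - 4 * (1 + z.1) * p.1 / Rw p) ^ 2 + (Ψ2 p - 4 * (1 + z.1) * p.2 / Rw p) ^ 2) -
      16 * (1 + z.1) ^ 2 * (Rw p ^ (-(1 + 2 * z.1)) - Rw p ^ (-(2 + 2 * z.1)))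
  let D3 : ℝ × ℝ → ℝ × ℝ → ℝ := fun z p => (exp (Ψ p) - 1) * Rw p ^ (-(2 + 2 * z.1))
  have eR : ∀ (p : ℝ × ℝ) (a : ℝ), Rw p ^ (-(1 + 2 * a)) - Rw p ^ (-(2 + 2 * a)) =
      (p.1 ^ 2 + p.2 ^ 2) * Rw p ^ (-(2 * a)) / Rw p ^ 2 := fun p a => by
    rw [show -(1 + 2 * a) = -(2 * a) - 1 by ring, show -(2 + 2 * a) = -(2 * a) - 2 by ring,
      rpow_sub (Rw_pos p), rpow_sub (Rw_pos p), rpow_one, rpow_two]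
    have := Rw_pos p
    field_simp
    unfold Rw
    ring
  have z1 : ∀ z p, p ∉ K → D1 z p = 0 := fun z p hp => by simp [D1, h0 p hp]
  have z2 : ∀ z p, p ∉ K → D2 z p = 0 := fun z p hp => by
    simp only [D2, h0 p hp, h1 p hp, h2 p hp, eR]
    simp
    ring
  have z3 : ∀ z p, p ∉ K → D3 z p = 0 := fun z p hp => by simp [D3, h0 p hp]
  have c1 : Continuous (Function.uncurry D1) := by
    have := cpow (fun z => -(1 + 2 * z.1.1)) (by fun_prop)
    simp only [D1, Function.uncurry_def]; fun_prop
  have c3 : Continuous (Function.uncurry D3) := by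
    have := cpow (fun z => -(2 + 2 * z.1.1)) (by fun_prop)
    simp only [D3, Function.uncurry_def]; fun_prop
  have c2 : Continuous (Function.uncurry D2) := by
    have t1 := cpow (fun z => -(2 + 2 * z.1.1)) (by fun_prop)
    have t2 := cpow (fun z => -(1 + 2 * z.1.1)) (by fun_prop)
    have t3 := cpow (fun z => -(2 * z.1.1)) (by fun_prop)
    have t4 : Continuous fun z : (ℝ × ℝ) × (ℝ × ℝ) => 4 * (1 + z.1.1) * z.2.1 / Rw z.2 :=
      Continuous.div (by fun_prop) (by fun_prop) fun z => R0 _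
    have t5 : Continuous fun z : (ℝ × ℝ) × (ℝ × ℝ) => 4 * (1 + z.1.1) * z.2.2 / Rw z.2 :=
      Continuous.div (by fun_prop) (by fun_prop) fun z => R0 _
    simp only [D2, Function.uncurry_def]; fun_prop
  have C1 := continuous_parametric_integral_of_continuous (μ := volume) c1 hK
  have C2 := continuous_parametric_integral_of_continuous (μ := volume) c2 hK
  have C3 := continuous_parametric_integral_of_continuous (μ := volume) c3 hK
  simp only [← int_K (z1 _), ← int_K (z2 _), ← int_K (z3 _)] at C1 C2 C3
  -- inequality at positive a
  have main : ∀ a : ℝ, 0 < a → π / (2 * (1 + a)) *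
      log (1 + (1 + 2 * a) / π * ∫ p, D3 (a, a / (1 + a)) p) ≤
      a / (1 + a) * (∫ p, D1 (a, a / (1 + a)) p) + (1 + 2 * a) / (32 * (1 + a) ^ 3) *
        ∫ p, D2 (a, a / (1 + a)) p := by
    intro a ha
    obtain ⟨i3, i1, i2, pos, key⟩ := onofri_step cΨ cΨ1 cΨ2 d1 d2 hK h0 h1 h2 ha
    have J1 := Rw_int (q := 2 + 2 * a) (by linarith)
    have J2 := Rw_int (q := 1 + 2 * a) (by linarith)
    have e3 : 1 + (1 + 2 * a) / π * ∫ p, D3 (a, a / (1 + a)) p =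
        (1 + 2 * a) / π * ∫ p, exp (Ψ p) * Rw p ^ (-(2 + 2 * a)) := by
      simp only [D3, sub_mul, one_mul]
      rw [integral_sub i3 J1.1, J1.2, show 2 + 2 * a - 1 = 1 + 2 * a by ring]
      field_simp
      ring
    have e1 : ∫ p, D1 (a, a / (1 + a)) p =
        (∫ p, exp ((1 + a / (1 + a)) / 2 * Ψ p) * Rw p ^ (-(1 + 2 * a))) - π / (2 * a) := by
      simp only [D1, sub_mul, one_mul]
      rw [integral_sub i1 J2.1, J2.2, show 1 + 2 * a - 1 = 2 * a by ring]
    have e2 : ∫ p, D2 (a, a / (1 + a)) p =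
        (∫ p, exp (a / (1 + a) * Ψ p) * Rw p ^ (-(2 * a)) *
      ((Ψ1 p - 4 * (1 + a) * p.1 / Rw p) ^ 2 + (Ψ2 p - 4 * (1 + a) * p.2 / Rw p) ^ 2)) -
        16 * (1 + a) ^ 2 * (π / (2 * a) - π / (1 + 2 * a)) := by
      simp only [D2]
      rw [integral_sub i2 ((isub J2.1 J1.1).const_mul _), integral_const_mul,
        integral_sub J2.1 J1.1, J1.2, J2.2, show 1 + 2 * a - 1 = 2 * a by ring,
        show 2 + 2 * a - 1 = 1 + 2 * a by ring]
    rw [e3]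
    set Z := (1 + 2 * a) / π * ∫ p, exp (Ψ p) * Rw p ^ (-(2 + 2 * a)) with hZ
    have Z0 : 0 < Z := by positivity
    have hZy : 1 + a / (1 + a) * log Z ≤ Z ^ (a / (1 + a)) := by
      rw [rpow_def_of_pos Z0]
      have := add_one_le_exp (log Z * (a / (1 + a)))
      linarith
    have hh := (mul_le_mul_of_nonneg_right hZy (by positivity : 0 ≤ π / (2 * a))).trans key
    rw [e1, e2]
    have s1 : (1 + a / (1 + a) * log Z) * (π / (2 * a)) =
      π / (2 * a) + π / (2 * (1 + a)) * log Z := by field_simp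
    rw [s1] at hh
    have s2 : a / (1 + a) * (π / (2 * a)) + (1 + 2 * a) / (32 * (1 + a) ^ 3) *
        (16 * (1 + a) ^ 2 * (π / (2 * a) - π / (1 + 2 * a))) + π / (4 * a * (1 + a)) =
        π / (2 * a) := by
      field_simp
      ring
    linarith
  -- pass to the limit
  have iR : Integrable (fun p => Rw p ^ (-2 : ℝ)) := (Rw_int (by norm_num)).1
  have iRe : ∫ p, Rw p ^ (-2 : ℝ) = π := by rw [(Rw_int (by norm_num)).2]; norm_num
  have cs3 : HasCompactSupport (fun p => (exp (Ψ p) - 1) * Rw p ^ (-2 : ℝ)) :=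
    HasCompactSupport.intro hK fun p hp => by simp [h0 p hp]
  have i3 : Integrable (fun p => (exp (Ψ p) - 1) * Rw p ^ (-2 : ℝ)) :=
    Continuous.integrable_of_hasCompactSupport (by have := Rw_rpow_cont (-2); fun_prop) cs3
  have e30 : 1 + (1 + 2 * 0) / π * ∫ p, D3 (0, 0) p = ∫ p, exp (Ψ p) * (1 / (π * Rw p ^ 2)) := by
    have : ∀ p, exp (Ψ p) * (1 / (π * Rw p ^ 2)) =
        1 / π * ((exp (Ψ p) - 1) * Rw p ^ (-2 : ℝ) + Rw p ^ (-2 : ℝ)) := fun p => by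
      rw [rpow_neg (Rw_pos p).le, rpow_two]; field_simp; ring
    simp only [this]
    rw [integral_const_mul, integral_add i3 iR, iRe]
    simp only [D3]
    norm_num
    field_simp
    ring
  have hpos : 0 < ∫ p, exp (Ψ p) * (1 / (π * Rw p ^ 2)) := by
    have ii : Integrable fun p => exp (Ψ p) * (1 / (π * Rw p ^ 2)) := by
      have : ∀ p, exp (Ψ p) * (1 / (π * Rw p ^ 2)) =
        1 / π * ((exp (Ψ p) - 1) * Rw p ^ (-2 : ℝ) + Rw p ^ (-2 : ℝ)) := fun p => by
        rw [rpow_neg (Rw_pos p).le, rpow_two]; field_simp; ring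
      simp only [this]
      exact (iadd i3 iR).const_mul _
    have pp : ∀ p, 0 < exp (Ψ p) * (1 / (π * Rw p ^ 2)) := fun p => by
      have := Rw_pos p; positivity
    refine (integral_pos_iff_support_of_nonneg (fun p => (pp p).le) ii).2 ?_
    have : Function.support (fun p => exp (Ψ p) * (1 / (π * Rw p ^ 2))) = Set.univ :=
      Set.eq_univ_of_forall fun p => (pp p).ne'
    rw [this]; simp
  have ta : Filter.Tendsto (fun a : ℝ => a) (nhdsWithin 0 (Set.Ioi 0)) (nhds 0) :=
    tendsto_nhdsWithin_of_tendsto_nhds Filter.tendsto_id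
  have ty : Filter.Tendsto (fun a : ℝ => a / (1 + a)) (nhdsWithin 0 (Set.Ioi 0)) (nhds 0) := by
    have : Filter.Tendsto (fun a : ℝ => a / (1 + a)) (nhdsWithin 0 (Set.Ioi 0))
        (nhds (0 / (1 + 0))) := ta.div (ta.const_add 1) (by norm_num)
    simpa using this
  have tz : Filter.Tendsto (fun a : ℝ => (a, a / (1 + a))) (nhdsWithin 0 (Set.Ioi 0))
      (nhds (0, 0)) := ta.prodMk_nhds ty
  have T1 := (C1.tendsto (0, 0)).comp tz
  have T2 := (C2.tendsto (0, 0)).comp tz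
  have T3 := (C3.tendsto (0, 0)).comp tz
  have q1 : Filter.Tendsto (fun a : ℝ => (1 + 2 * a) / π) (nhdsWithin 0 (Set.Ioi 0))
      (nhds ((1 + 2 * 0) / π)) := ((ta.const_mul 2).const_add 1).div_const _
  have L1 : Filter.Tendsto (fun a : ℝ => π / (2 * (1 + a)) *
      log (1 + (1 + 2 * a) / π * ∫ p, D3 (a, a / (1 + a)) p)) (nhdsWithin 0 (Set.Ioi 0))
      (nhds (π / (2 * (1 + 0)) * log (∫ p, exp (Ψ p) * (1 / (π * Rw p ^ 2))))) := by
    refine (tendsto_const_nhds.div ((ta.const_add 1).const_mul 2) (by norm_num)).mul ?_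
    rw [← e30] at hpos ⊢
    exact ((q1.mul T3).const_add 1).log hpos.ne'
  have L2 : Filter.Tendsto (fun a : ℝ => a / (1 + a) * (∫ p, D1 (a, a / (1 + a)) p) +
      (1 + 2 * a) / (32 * (1 + a) ^ 3) * ∫ p, D2 (a, a / (1 + a)) p) (nhdsWithin 0 (Set.Ioi 0))
      (nhds (0 * (∫ p, D1 (0, 0) p) + (1 + 2 * 0) / (32 * (1 + 0) ^ 3) * ∫ p, D2 (0, 0) p)) :=
    (ty.mul T1).add (Filter.Tendsto.mul (((ta.const_mul 2).const_add 1).div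
      (((ta.const_add 1).pow 3).const_mul 32) (by norm_num)) T2)
  have fin := le_of_tendsto_of_tendsto L1 L2 (by
    filter_upwards [self_mem_nhdsWithin] with a ha using main a ha)
  -- integrate by parts
  have csΨ : HasCompactSupport Ψ := HasCompactSupport.intro hK h0
  have csΨ1 : HasCompactSupport Ψ1 := HasCompactSupport.intro hK h1
  have csΨ2 : HasCompactSupport Ψ2 := HasCompactSupport.intro hK h2
  have dq : ∀ (r : ℝ → ℝ) (z : ℝ), HasDerivAt r (2 * z) z → 0 < r z →
      HasDerivAt (fun t => t / r t) ((r z - 2 * z ^ 2) / r z ^ 2) z := by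
    intro r z h hr
    refine ((hasDerivAt_id z).div h hr.ne').congr_deriv ?_
    simp; ring
  have cx1 : Continuous fun p : ℝ × ℝ => p.1 / Rw p := Continuous.div (by fun_prop) cR R0
  have cx2 : Continuous fun p : ℝ × ℝ => p.2 / Rw p := Continuous.div (by fun_prop) cR R0
  have cy1 : Continuous fun p : ℝ × ℝ => (Rw p - 2 * p.1 ^ 2) / Rw p ^ 2 :=
    Continuous.div (by fun_prop) (by fun_prop) fun p => pow_ne_zero _ (R0 p)
  have cy2 : Continuous fun p : ℝ × ℝ => (Rw p - 2 * p.2 ^ 2) / Rw p ^ 2 :=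
    Continuous.div (by fun_prop) (by fun_prop) fun p => pow_ne_zero _ (R0 p)
  have b1 : ∫ p : ℝ × ℝ, Ψ p * ((Rw p - 2 * p.1 ^ 2) / Rw p ^ 2) = - ∫ p, Ψ1 p * (p.1 / Rw p) :=
    ibp2_fst (v := fun p => p.1 / Rw p) (v' := fun p => (Rw p - 2 * p.1 ^ 2) / Rw p ^ 2) d1
      (fun x y => dq (fun t => Rw (t, y)) x (by
      simpa [Rw] using ((hasDerivAt_pow 2 x).add_const (y ^ 2)).const_add 1) (Rw_pos _))
      cΨ cx1 cΨ1 cy1 csΨ csΨ1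
  have b2 : ∫ p : ℝ × ℝ, Ψ p * ((Rw p - 2 * p.2 ^ 2) / Rw p ^ 2) = - ∫ p, Ψ2 p * (p.2 / Rw p) :=
    ibp2_snd (v := fun p => p.2 / Rw p) (v' := fun p => (Rw p - 2 * p.2 ^ 2) / Rw p ^ 2) d2
      (fun x y => dq (fun t => Rw (x, t)) y (by
      simpa [Rw] using ((hasDerivAt_pow 2 y).const_add (x ^ 2)).const_add 1) (Rw_pos _))
      cΨ cx2 cΨ2 cy2 csΨ csΨ2
  have ics : ∀ F G : ℝ × ℝ → ℝ, Continuous F → Continuous G → HasCompactSupport F →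
      Integrable fun p => F p * G p := fun F G cF cG sF =>
    (cF.mul cG).integrable_of_hasCompactSupport sF.mul_right
  have j1 := ics _ _ cΨ1 cx1 csΨ1
  have j2 := ics _ _ cΨ2 cx2 csΨ2
  have j3 := ics _ _ cΨ cy1 csΨ
  have j4 := ics _ _ cΨ cy2 csΨ
  have js : Integrable fun p => Ψ1 p ^ 2 + Ψ2 p ^ 2 := by
    simp only [sq]; exact iadd (ics _ _ cΨ1 cΨ1 csΨ1) (ics _ _ cΨ2 cΨ2 csΨ2)
  have eD2 : ∫ p, D2 (0, 0) p = (∫ p, (Ψ1 p ^ 2 + Ψ2 p ^ 2)) - 8 * ((∫ p, Ψ1 p * (p.1 / Rw p)) +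
      ∫ p, Ψ2 p * (p.2 / Rw p)) := by
    rw [← integral_add j1 j2, ← integral_const_mul, ← integral_sub js ((iadd j1 j2).const_mul _)]
    congr 1; ext p
    simp only [D2, eR]
    have := Rw_pos p
    simp
    field_simp
    ring
  have eΨ : ∫ p, Ψ p * (1 / (π * Rw p ^ 2)) =
      1 / (2 * π) * ((∫ p : ℝ × ℝ, Ψ p * ((Rw p - 2 * p.1 ^ 2) / Rw p ^ 2)) +
        ∫ p : ℝ × ℝ, Ψ p * ((Rw p - 2 * p.2 ^ 2) / Rw p ^ 2)) := by
    rw [← integral_add j3 j4, ← integral_const_mul]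
    congr 1; ext p
    have := Rw_pos p
    field_simp
    unfold Rw
    ring
  rw [eD2] at fin
  rw [eΨ, b1, b2]
  have hpi := pi_pos
  have fin2 := mul_le_mul_of_nonneg_left fin (by positivity : 0 ≤ 2 / π)
  have l : 2 / π * (π / (2 * (1 + 0)) * log (∫ p, exp (Ψ p) * (1 / (π * Rw p ^ 2)))) =
    log (∫ p, exp (Ψ p) * (1 / (π * Rw p ^ 2))) := by field_simp; ring
  rw [l] at fin2
  refine fin2.trans (le_of_eq ?_)
  field_simp
  ring

/-- Euclidean plane -/
abbrev E2 : Type := EuclideanSpace ℝ (Fin 2)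

lemma dual_norm_sq (L : E2 →L[ℝ] ℝ) : ‖L‖ ^ 2 = (L !₂[1, 0]) ^ 2 + (L !₂[0, 1]) ^ 2 := by
  obtain ⟨w, rfl⟩ := (InnerProductSpace.toDual ℝ E2).surjective L
  rw [LinearIsometryEquiv.norm_map]
  simp [EuclideanSpace.norm_sq_eq, PiLp.inner_apply]

lemma eE_cont : Continuous eE := by
  have : (eE : ℝ × ℝ → E2) = fun p => !₂[p.1, p.2] := funext eE_apply
  rw [this]; fun_prop

lemma Rw_eq (p : ℝ × ℝ) : Rw p = 1 + ‖eE p‖ ^ 2 := by rw [norm_eE_sq]; rfl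

lemma mu0_int : Integrable (fun x : E2 => 1 / (π * (1 + ‖x‖ ^ 2) ^ 2)) ∧
    ∫ x : E2, 1 / (π * (1 + ‖x‖ ^ 2) ^ 2) = 1 := by
  have e : ∀ p, 1 / (π * (1 + ‖eE p‖ ^ 2) ^ 2) = 1 / π * Rw p ^ (-2 : ℝ) := fun p => by
    rw [← Rw_eq, rpow_neg (Rw_pos p).le, rpow_two]; field_simp
  have h := Rw_int (q := 2) (by norm_num)
  constructor
  · rw [← integrable_eE]; simp only [e]; exact h.1.const_mul _
  · rw [← integral_eE]; simp only [e]; rw [integral_const_mul, h.2]; norm_num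

lemma mu0_int_norm : Integrable (fun x : E2 => ‖x‖ * (1 / (π * (1 + ‖x‖ ^ 2) ^ 2))) := by
  rw [← integrable_eE]
  refine bd_int (q := 3 / 2) (M := 1 / π) ?_ (by norm_num) fun p => ?_
  · have := eE_cont
    refine Continuous.mul (by fun_prop) (Continuous.div (by fun_prop) (by fun_prop) fun p => ?_)
    positivity
  · rw [abs_of_nonneg (by positivity)]
    have h1 : ‖eE p‖ ≤ Rw p ^ (1 / 2 : ℝ) := by
      rw [← sqrt_eq_rpow]; apply le_sqrt_of_sq_le; rw [Rw_eq]; linarith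
    have h2 : 1 / (π * (1 + ‖eE p‖ ^ 2) ^ 2) = 1 / π * Rw p ^ (-2 : ℝ) := by
      rw [← Rw_eq, rpow_neg (Rw_pos p).le, rpow_two]; field_simp
    have h3 := rpow_pos_of_pos (Rw_pos p) (-2)
    calc _ ≤ Rw p ^ (1 / 2 : ℝ) * (1 / π * Rw p ^ (-2 : ℝ)) := by rw [h2]; gcongr
      _ = 1 / π * (Rw p ^ (1 / 2 : ℝ) * Rw p ^ (-2 : ℝ)) := by ring
      _ = _ := by rw [rp (Rw_pos p)]; norm_num

theorem onofri_E {Φ : E2 → ℝ} (hΦ : ContDiff ℝ 1 Φ) (hc : HasCompactSupport Φ) :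
    log (∫ x, exp (Φ x) * (1 / (π * (1 + ‖x‖ ^ 2) ^ 2))) ≤
      1 / (16 * π) * (∫ x, ‖fderiv ℝ Φ x‖ ^ 2) + ∫ x, Φ x * (1 / (π * (1 + ‖x‖ ^ 2) ^ 2)) := by
  have cΦ := hΦ.continuous
  have cD := hΦ.continuous_fderiv (by norm_num)
  have ce := eE_cont
  have hd : ∀ x, HasFDerivAt Φ (fderiv ℝ Φ x) x := fun x =>
    (hΦ.differentiable (by norm_num)).differentiableAt.hasFDerivAt
  obtain ⟨ρ, hρ⟩ := hc.isCompact.isBounded.subset_closedBall (0 : E2)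
  have out : ∀ p : ℝ × ℝ, p ∉ Metric.closedBall (0 : ℝ × ℝ) ρ → eE p ∉ tsupport Φ := by
    intro p hp h
    apply hp
    have h2 := hρ h
    simp only [Metric.mem_closedBall, dist_zero_right] at h2 ⊢
    refine le_trans ?_ h2
    rw [Prod.norm_def]
    refine sup_le ?_ ?_ <;> rw [Real.norm_eq_abs] <;> apply abs_le_of_sq_le_sq _ (norm_nonneg _) <;>
      rw [norm_eE_sq] <;> nlinarith [sq_nonneg p.1, sq_nonneg p.2]
  have key := onofri_plane (Ψ := fun p => Φ (eE p)) (Ψ1 := fun p => fderiv ℝ Φ (eE p) !₂[1, 0])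
    (Ψ2 := fun p => fderiv ℝ Φ (eE p) !₂[0, 1]) (K := Metric.closedBall (0 : ℝ × ℝ) ρ)
    (by fun_prop) (by fun_prop) (by fun_prop)
    (fun x y => by
      have h : HasDerivAt (fun t : ℝ => eE (t, y)) !₂[1, 0] x := by
        simp only [eE_apply]
        rw [show (fun t : ℝ => !₂[t, y]) = fun t : ℝ => t • !₂[(1:ℝ), 0] + !₂[0, y] by
          ext t i; fin_cases i <;> simp]
        simpa using ((hasDerivAt_id x).smul_const (!₂[(1:ℝ), 0] : E2)).add_const (!₂[0, y] : E2)
      exact (hd (eE (x, y))).comp_hasDerivAt x h)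
    (fun x y => by
      have h : HasDerivAt (fun t : ℝ => eE (x, t)) !₂[0, 1] y := by
        simp only [eE_apply]
        rw [show (fun t : ℝ => !₂[x, t]) = fun t : ℝ => t • !₂[(0:ℝ), 1] + !₂[x, 0] by
          ext t i; fin_cases i <;> simp]
        simpa using ((hasDerivAt_id y).smul_const (!₂[(0:ℝ), 1] : E2)).add_const (!₂[x, 0] : E2)
      exact (hd (eE (x, y))).comp_hasDerivAt y h)
    (isCompact_closedBall _ _)
    (fun p hp => image_eq_zero_of_notMem_tsupport (out p hp))
    (fun p hp => by
      have := image_eq_zero_of_notMem_tsupport (fun h => out p hp (tsupport_fderiv_subset ℝ h))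
      rw [this]; simp)
    (fun p hp => by
      have := image_eq_zero_of_notMem_tsupport (fun h => out p hp (tsupport_fderiv_subset ℝ h))
      rw [this]; simp)
  simp only [← dual_norm_sq, Rw_eq] at key
  rw [← integral_eE, ← integral_eE (fun x => ‖fderiv ℝ Φ x‖ ^ 2),
    ← integral_eE (fun x => Φ x * (1 / (π * (1 + ‖x‖ ^ 2) ^ 2)))]
  exact key

/-- the radial power map -/
def hpow (γ : ℝ) (X : E2) : E2 := (‖X‖ ^ γ) • X

/-- its derivative -/
def dpow (γ : ℝ) (X : E2) : E2 →L[ℝ] E2 :=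
  (‖X‖ ^ γ) • ContinuousLinearMap.id ℝ E2 +
    (γ * ‖X‖ ^ (γ - 2)) • (innerSL ℝ X).smulRight X

lemma dpow_apply (γ : ℝ) (X v : E2) :
    dpow γ X v = (‖X‖ ^ γ) • v + (γ * ‖X‖ ^ (γ - 2) * inner ℝ X v) • X := by
  simp [dpow, smul_smul]

lemma norm_hpow {γ : ℝ} (hγ : 0 ≤ γ) (X : E2) : ‖hpow γ X‖ = ‖X‖ ^ (γ + 1) := by
  rw [hpow, norm_smul, Real.norm_eq_abs, abs_of_nonneg (by positivity),
    rpow_add_one' (norm_nonneg _) (by positivity)]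

lemma norm_dpow_le {γ : ℝ} (hγ : 0 ≤ γ) (X : E2) : ‖dpow γ X‖ ≤ (1 + γ) * ‖X‖ ^ γ := by
  refine ContinuousLinearMap.opNorm_le_bound _ (by positivity) fun v => ?_
  rw [dpow_apply]
  by_cases hX : X = 0
  · subst hX
    simp only [inner_zero_left, mul_zero, zero_smul, add_zero, norm_smul]
    rw [Real.norm_eq_abs, abs_of_nonneg (by positivity)]
    have : 0 ≤ ‖(0 : E2)‖ ^ γ * ‖v‖ := by positivity
    nlinarith
  have hn : 0 < ‖X‖ := norm_pos_iff.2 hX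
  refine (norm_add_le _ _).trans ?_
  rw [norm_smul, norm_smul, Real.norm_eq_abs, Real.norm_eq_abs, abs_of_nonneg (by positivity),
    abs_mul, abs_of_nonneg (by positivity)]
  have h1 := abs_real_inner_le_norm X v
  have h2 : ‖X‖ ^ (γ - 2) * ‖X‖ * ‖X‖ = ‖X‖ ^ γ := by
    rw [mul_assoc, ← sq, ← rpow_two, ← rpow_add hn]; congr 1; ring
  calc _ ≤ ‖X‖ ^ γ * ‖v‖ + γ * ‖X‖ ^ (γ - 2) * (‖X‖ * ‖v‖) * ‖X‖ := by gcongr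
    _ = ‖X‖ ^ γ * ‖v‖ + γ * (‖X‖ ^ (γ - 2) * ‖X‖ * ‖X‖) * ‖v‖ := by ring
    _ = _ := by rw [h2]; ring

lemma hasFDerivAt_hpow {γ : ℝ} (hγ : 0 ≤ γ) (X : E2) : HasFDerivAt (hpow γ) (dpow γ X) X := by
  rcases hγ.eq_or_lt with h | hγ'
  · subst h
    have e1 : hpow 0 = id := by ext X; simp [hpow]
    have e2 : dpow 0 X = ContinuousLinearMap.id ℝ E2 := by ext v; simp [dpow_apply]
    rw [e1, e2]; exact hasFDerivAt_id X
  by_cases hX : X = 0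
  · subst hX
    have e2 : dpow γ 0 = 0 := by ext v; simp [dpow_apply, zero_rpow hγ'.ne']
    rw [e2, hasFDerivAt_iff_isLittleO_nhds_zero]
    simp only [hpow, zero_add, smul_zero, sub_zero, zero_apply]
    have : Filter.Tendsto (fun X : E2 => ‖X‖ ^ γ) (nhds 0) (nhds 0) := by
      have : Continuous (fun X : E2 => ‖X‖ ^ γ) := continuous_norm.rpow_const fun _ => Or.inr hγ
      have := this.tendsto 0
      simpa [zero_rpow hγ'.ne'] using this
    have h2 := ((Asymptotics.isLittleO_one_iff ℝ).2 this).smul_isBigO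
      (Asymptotics.isBigO_refl (fun X : E2 => X) (nhds 0))
    simpa using h2
  · have hn : 0 < ‖X‖ := norm_pos_iff.2 hX
    have h1 : HasFDerivAt (fun X : E2 => (‖X‖ ^ 2) ^ (γ / 2))
        ((γ * ‖X‖ ^ (γ - 2)) • innerSL ℝ X) X := by
      refine ((hasStrictFDerivAt_norm_sq X).hasFDerivAt.rpow_const
        (p := γ / 2) (Or.inl (by positivity))).congr_fderiv ?_
      rw [← rpow_two, ← rpow_mul hn.le, show 2 * (γ / 2 - 1) = γ - 2 by ring, two_smul, ← two_smul ℝ,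
        smul_smul]
      congr 1; ring
    have e : (fun X : E2 => (‖X‖ ^ 2) ^ (γ / 2)) = fun X => ‖X‖ ^ γ := by
      ext X; rw [← rpow_two, ← rpow_mul (norm_nonneg _)]; congr 1; ring
    rw [e] at h1
    refine (h1.smul (hasFDerivAt_id X)).congr_fderiv ?_
    ext v : 1
    simp [dpow_apply, smul_smul]

lemma continuous_dpow {γ : ℝ} (hγ : 0 ≤ γ) : Continuous (dpow γ) := by
  rcases hγ.eq_or_lt with h | hγ'
  · subst h
    have e2 : dpow 0 = fun _ => ContinuousLinearMap.id ℝ E2 := by ext X v; simp [dpow_apply]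
    rw [e2]; exact continuous_const
  rw [continuous_iff_continuousAt]
  intro X
  by_cases hX : X = 0
  · subst hX
    have e2 : dpow γ 0 = 0 := by ext v; simp [dpow_apply, zero_rpow hγ'.ne']
    rw [ContinuousAt, e2, tendsto_zero_iff_norm_tendsto_zero]
    have : Continuous (fun X : E2 => (1 + γ) * ‖X‖ ^ γ) :=
      (continuous_norm.rpow_const fun _ => Or.inr hγ).const_mul _
    have := this.tendsto 0
    rw [norm_zero, zero_rpow hγ'.ne', mul_zero] at this
    exact squeeze_zero (fun _ => norm_nonneg _) (norm_dpow_le hγ) this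
  · have hn : ‖X‖ ≠ 0 := norm_ne_zero_iff.2 hX
    have c1 : ∀ q : ℝ, ContinuousAt (fun X : E2 => ‖X‖ ^ q) X := fun q =>
      (continuous_norm (E := E2)).continuousAt.rpow_const (Or.inl hn)
    have c2 : Continuous fun X : E2 => (innerSL ℝ X).smulRight X := by
      have : Continuous fun z : (E2 →L[ℝ] ℝ) × E2 => z.1.smulRight z.2 :=
        (ContinuousLinearMap.smulRightL ℝ E2 E2).continuous₂
      exact this.comp (((innerSL ℝ (E := E2)).continuous).prodMk continuous_id)
    exact ((c1 γ).smul continuousAt_const).add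
      (((c1 (γ - 2)).const_mul γ).smul c2.continuousAt)

lemma det_dpow {γ : ℝ} (X : E2) (hX : X ≠ 0) : (dpow γ X).det = (1 + γ) * ‖X‖ ^ (2 * γ) := by
  have hn : 0 < ‖X‖ := norm_pos_iff.2 hX
  have hsq : ‖X‖ ^ 2 = X 0 ^ 2 + X 1 ^ 2 := by simp [EuclideanSpace.norm_sq_eq]
  rw [ContinuousLinearMap.det, ← LinearMap.det_toMatrix (EuclideanSpace.basisFun (Fin 2) ℝ).toBasis,
    Matrix.det_fin_two]
  simp only [LinearMap.toMatrix_apply, ContinuousLinearMap.coe_coe, OrthonormalBasis.coe_toBasis,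
    OrthonormalBasis.coe_toBasis_repr_apply, EuclideanSpace.basisFun_repr,
    EuclideanSpace.basisFun_apply, dpow_apply]
  simp
  have h2 : ‖X‖ ^ γ * (‖X‖ ^ (γ - 2) * ‖X‖ ^ 2) = ‖X‖ ^ (2 * γ) := by
    rw [← rpow_two, ← rpow_add hn, ← rpow_add hn]; congr 1; ring
  have h3 : ‖X‖ ^ γ * ‖X‖ ^ γ = ‖X‖ ^ (2 * γ) := by
    rw [← rpow_add hn]; congr 1; ring
  rw [hsq] at h2
  have i0 : inner ℝ X (EuclideanSpace.single (0 : Fin 2) (1 : ℝ)) = X 0 := by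
    simp [PiLp.inner_apply]
  have i1 : inner ℝ X (EuclideanSpace.single (1 : Fin 2) (1 : ℝ)) = X 1 := by
    simp [PiLp.inner_apply]
  rw [i0, i1]
  linear_combination h3 + γ * h2

lemma hpow_inj {γ : ℝ} (hγ : 0 ≤ γ) : Function.Injective (hpow γ) := by
  intro X Y h
  have hn : ‖X‖ = ‖Y‖ := by
    have := congrArg norm h
    rw [norm_hpow hγ, norm_hpow hγ] at this
    exact (rpow_left_inj (norm_nonneg _) (norm_nonneg _) (by positivity)).1 this
  by_cases hX : ‖X‖ = 0
  · have hx : X = 0 := norm_eq_zero.1 hX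
    have hy : Y = 0 := norm_eq_zero.1 (hn ▸ hX)
    rw [hx, hy]
  · have : ‖X‖ ^ γ ≠ 0 := (rpow_pos_of_pos (lt_of_le_of_ne (norm_nonneg _) (Ne.symm hX)) _).ne'
    simp only [hpow, ← hn] at h
    exact smul_right_injective _ this h

lemma hpow_image {γ : ℝ} (hγ : 0 ≤ γ) : hpow γ '' {0}ᶜ = {0}ᶜ := by
  ext Y
  simp only [Set.mem_image, Set.mem_compl_iff, Set.mem_singleton_iff]
  constructor
  · rintro ⟨X, hX, rfl⟩ h
    apply hX
    have := congrArg norm h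
    rw [norm_hpow hγ, norm_zero, rpow_eq_zero (norm_nonneg _) (by positivity)] at this
    exact norm_eq_zero.1 this
  · intro hY
    have hn : 0 < ‖Y‖ := norm_pos_iff.2 hY
    refine ⟨(‖Y‖ ^ (1 / (γ + 1) - 1)) • Y, ?_, ?_⟩
    · exact smul_ne_zero (rpow_pos_of_pos hn _).ne' hY
    · rw [hpow, smul_smul, norm_smul, Real.norm_eq_abs, abs_of_nonneg (by positivity),
        ← rpow_add_one hn.ne', ← rpow_mul hn.le, ← rpow_add hn]
      have : (1 / (γ + 1) - 1 + 1) * γ + (1 / (γ + 1) - 1) = 0 := by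
        field_simp; ring
      rw [this, rpow_zero, one_smul]

lemma cov_integral {γ : ℝ} (hγ : 0 ≤ γ) (F : E2 → ℝ) :
    ∫ x, F x = ∫ X, (1 + γ) * ‖X‖ ^ (2 * γ) * F (hpow γ X) := by
  have h := integral_image_eq_integral_abs_det_fderiv_smul volume
    (MeasurableSet.compl (measurableSet_singleton (0 : E2)))
    (fun X _ => (hasFDerivAt_hpow hγ X).hasFDerivWithinAt) (hpow_inj hγ).injOn F
  rw [hpow_image hγ, restrict_compl_singleton] at h
  rw [h]
  refine integral_congr_ae ?_
  have hae : ∀ᵐ X : E2, X ∈ ({0}ᶜ : Set E2) := compl_mem_ae_iff.2 (measure_singleton 0)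
  filter_upwards [hae] with X hX
  simp only [smul_eq_mul]
  rw [det_dpow X hX, abs_of_nonneg (by positivity)]

lemma cov_integrable {γ : ℝ} (hγ : 0 ≤ γ) (F : E2 → ℝ) :
    Integrable F ↔ Integrable fun X => (1 + γ) * ‖X‖ ^ (2 * γ) * F (hpow γ X) := by
  have h := integrableOn_image_iff_integrableOn_abs_det_fderiv_smul volume
    (MeasurableSet.compl (measurableSet_singleton (0 : E2)))
    (fun X _ => (hasFDerivAt_hpow hγ X).hasFDerivWithinAt) (hpow_inj hγ).injOn F
  rw [hpow_image hγ] at h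
  simp only [IntegrableOn, restrict_compl_singleton] at h
  rw [h]
  refine integrable_congr ?_
  have hae : ∀ᵐ X : E2, X ∈ ({0}ᶜ : Set E2) := compl_mem_ae_iff.2 (measure_singleton 0)
  filter_upwards [hae] with X hX
  simp only [smul_eq_mul]
  rw [det_dpow X hX, abs_of_nonneg (by positivity)]

lemma ae_ne_zero_E2 : ∀ᵐ X : E2, X ≠ 0 := compl_mem_ae_iff.2 (measure_singleton 0)

lemma mu_nonneg {α : ℝ} (h1 : -1 < α) (x : E2) : 0 ≤ muAlpha α x := by
  have : 0 < 1 + α := by linarith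
  rw [muAlpha]; positivity

lemma mu_pos {α : ℝ} (h1 : -1 < α) {x : E2} (hx : x ≠ 0) : 0 < muAlpha α x := by
  have : 0 < 1 + α := by linarith
  have : 0 < ‖x‖ := norm_pos_iff.2 hx
  rw [muAlpha]; positivity

lemma mu_meas (α : ℝ) : Measurable (fun x : E2 => muAlpha α x) := by
  unfold muAlpha
  fun_prop

lemma norm_hpow_rpow {α : ℝ} (h1 : -1 < α) (h2 : α ≤ 0) (X : E2) (q : ℝ) :
    ‖hpow (1 / (1 + α) - 1) X‖ ^ q = ‖X‖ ^ (q / (1 + α)) := by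
  have hb : 0 < 1 + α := by linarith
  have hγ : 0 ≤ 1 / (1 + α) - 1 := by
    rw [sub_nonneg, le_div_iff₀ hb]; linarith
  rw [norm_hpow hγ, ← rpow_mul (norm_nonneg _)]
  congr 1
  field_simp
  ring

lemma gam_nonneg {α : ℝ} (h1 : -1 < α) (h2 : α ≤ 0) : 0 ≤ 1 / (1 + α) - 1 := by
  have hb : 0 < 1 + α := by linarith
  rw [sub_nonneg, le_div_iff₀ hb]; linarith

lemma mu_pull {α : ℝ} (h1 : -1 < α) (h2 : α ≤ 0) {X : E2} (hX : X ≠ 0) :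
    (1 + (1 / (1 + α) - 1)) * ‖X‖ ^ (2 * (1 / (1 + α) - 1)) * muAlpha α (hpow (1 / (1 + α) - 1) X)
      = 1 / (π * (1 + ‖X‖ ^ 2) ^ 2) := by
  have hb : 0 < 1 + α := by linarith
  have hn : 0 < ‖X‖ := norm_pos_iff.2 hX
  rw [muAlpha, norm_hpow_rpow h1 h2, norm_hpow_rpow h1 h2]
  have e1 : 2 * (1 + α) / (1 + α) = 2 := by field_simp
  rw [e1, rpow_two]
  have e2 : ‖X‖ ^ (2 * (1 / (1 + α) - 1)) * ‖X‖ ^ (2 * α / (1 + α)) = 1 := by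
    rw [← rpow_add hn]
    have : 2 * (1 / (1 + α) - 1) + 2 * α / (1 + α) = 0 := by field_simp; ring
    rw [this, rpow_zero]
  calc _ = ((1 + α) * (1 + (1 / (1 + α) - 1))) * (‖X‖ ^ (2 * (1 / (1 + α) - 1)) * ‖X‖ ^ (2 * α / (1 + α)))
          / (π * (1 + ‖X‖ ^ 2) ^ 2) := by field_simp
    _ = _ := by
      rw [e2]
      have : (1 + α) * (1 + (1 / (1 + α) - 1)) = 1 := by field_simp; ring
      rw [this, one_mul]

lemma cov_mu {α : ℝ} (h1 : -1 < α) (h2 : α ≤ 0) (F : E2 → ℝ) :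
    ∫ x, F x * muAlpha α x =
      ∫ X, F (hpow (1 / (1 + α) - 1) X) * (1 / (π * (1 + ‖X‖ ^ 2) ^ 2)) := by
  rw [cov_integral (gam_nonneg h1 h2)]
  refine integral_congr_ae ?_
  filter_upwards [ae_ne_zero_E2] with X hX
  rw [← mu_pull h1 h2 hX]; ring

lemma cov_mu_integrable {α : ℝ} (h1 : -1 < α) (h2 : α ≤ 0) (F : E2 → ℝ) :
    Integrable (fun x => F x * muAlpha α x) ↔
      Integrable (fun X => F (hpow (1 / (1 + α) - 1) X) * (1 / (π * (1 + ‖X‖ ^ 2) ^ 2))) := by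
  rw [cov_integrable (gam_nonneg h1 h2)]
  refine integrable_congr ?_
  filter_upwards [ae_ne_zero_E2] with X hX
  rw [← mu_pull h1 h2 hX]; ring

lemma mu_int {α : ℝ} (h1 : -1 < α) (h2 : α ≤ 0) : Integrable (fun x : E2 => muAlpha α x) := by
  have := (cov_mu_integrable h1 h2 (fun _ => 1)).2 (by simpa using mu0_int.1)
  simpa using this

lemma mu_integral {α : ℝ} (h1 : -1 < α) (h2 : α ≤ 0) : ∫ x : E2, muAlpha α x = 1 := by
  have := cov_mu h1 h2 (fun _ => 1)
  simp only [one_mul] at this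
  rw [this, mu0_int.2]

lemma mu_int_norm {α : ℝ} (h1 : -1 < α) (h2 : α ≤ 0) :
    Integrable (fun x : E2 => ‖x‖ ^ (1 + α) * muAlpha α x) := by
  have hb : 0 < 1 + α := by linarith
  refine (cov_mu_integrable h1 h2 (fun x => ‖x‖ ^ (1 + α))).2 ?_
  simp only [norm_hpow_rpow h1 h2, div_self hb.ne', rpow_one]
  exact mu0_int_norm

lemma onofri_alpha {α : ℝ} (h1 : -1 < α) (h2 : α ≤ 0) {ψ : E2 → ℝ}
    (hψ : ContDiff ℝ 1 ψ) (hc : HasCompactSupport ψ) :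
    log (∫ x, exp (ψ x) * muAlpha α x) ≤
      1 / (16 * π * (1 + α)) * (∫ x, ‖fderiv ℝ ψ x‖ ^ 2) + ∫ x, ψ x * muAlpha α x := by
  have hb : 0 < 1 + α := by linarith
  set γ := 1 / (1 + α) - 1 with hγd
  have hγ : 0 ≤ γ := gam_nonneg h1 h2
  have hd : ∀ X, HasFDerivAt (fun X => ψ (hpow γ X)) ((fderiv ℝ ψ (hpow γ X)).comp (dpow γ X)) X :=
    fun X => ((hψ.differentiable one_ne_zero) (hpow γ X)).hasFDerivAt.comp X (hasFDerivAt_hpow hγ X)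
  have hch : Continuous (hpow γ) :=
    continuous_iff_continuousAt.2 fun X => (hasFDerivAt_hpow hγ X).continuousAt
  have hfd : fderiv ℝ (fun X => ψ (hpow γ X)) = fun X => (fderiv ℝ ψ (hpow γ X)).comp (dpow γ X) := by
    ext1 X; exact (hd X).fderiv
  have hΦ : ContDiff ℝ 1 (fun X => ψ (hpow γ X)) := by
    rw [contDiff_one_iff_fderiv]
    refine ⟨fun X => (hd X).differentiableAt, ?_⟩
    rw [hfd]
    exact ((hψ.continuous_fderiv one_ne_zero).comp hch).clm_comp (continuous_dpow hγ)
  have hΦc : HasCompactSupport (fun X => ψ (hpow γ X)) := by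
    obtain ⟨R, hR⟩ := hc.isCompact.isBounded.subset_closedBall (0 : E2)
    refine HasCompactSupport.intro (isCompact_closedBall (0 : E2) (max R 1)) fun X hX => ?_
    apply image_eq_zero_of_notMem_tsupport
    intro hm
    have := hR hm
    rw [mem_closedBall_zero_iff] at this hX
    rw [norm_hpow hγ] at this
    have h3 : 1 < ‖X‖ ∧ R < ‖X‖ := by
      push Not at hX
      exact ⟨(le_max_right _ _).trans_lt hX, (le_max_left _ _).trans_lt hX⟩
    have : ‖X‖ ≤ ‖X‖ ^ (γ + 1) := by
      conv_lhs => rw [← rpow_one ‖X‖]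
      exact rpow_le_rpow_of_exponent_le h3.1.le (by linarith)
    linarith
  have key := onofri_E hΦ hΦc
  rw [cov_mu h1 h2 (fun x => exp (ψ x)), cov_mu h1 h2 ψ]
  refine key.trans ?_
  gcongr ?_ + _
  have hcs : HasCompactSupport (fun x => ‖fderiv ℝ ψ x‖ ^ 2) := by
    exact (hc.fderiv (𝕜 := ℝ)).comp_left (g := fun z => ‖z‖ ^ 2) (by simp)
  have hIntg : Integrable (fun x => ‖fderiv ℝ ψ x‖ ^ 2) :=
    ((hψ.continuous_fderiv one_ne_zero).norm.pow 2).integrable_of_hasCompactSupport hcs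
  have hIntg2 := (cov_integrable hγ _).1 hIntg
  rw [cov_integral hγ (fun x => ‖fderiv ℝ ψ x‖ ^ 2)]
  have e : 1 / (16 * π * (1 + α)) = 1 / (16 * π) * (1 + γ) := by
    rw [hγd]; field_simp; ring
  rw [e, mul_assoc (1 / (16 * π)), ← integral_const_mul (1 + γ)]
  gcongr 1 / (16 * π) * ?_
  refine integral_mono_of_nonneg (Filter.Eventually.of_forall fun X => by positivity)
    (hIntg2.const_mul _) (Filter.Eventually.of_forall fun X => ?_)
  simp only [hfd]
  have b1 : ‖(fderiv ℝ ψ (hpow γ X)).comp (dpow γ X)‖ ≤ ‖fderiv ℝ ψ (hpow γ X)‖ * ((1 + γ) * ‖X‖ ^ γ) :=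
    (ContinuousLinearMap.opNorm_comp_le _ _).trans (by gcongr; exact norm_dpow_le hγ X)
  calc _ ≤ (‖fderiv ℝ ψ (hpow γ X)‖ * ((1 + γ) * ‖X‖ ^ γ)) ^ 2 := by gcongr
    _ = _ := by
      have : ‖X‖ ^ (2 * γ) = (‖X‖ ^ γ) ^ 2 := by
        rw [mul_comm, rpow_mul (norm_nonneg _), rpow_two]
      rw [this]; ring

/-- time-rescaled heat kernel, as a function of the squared distance -/
def gk (τ q : ℝ) : ℝ := 1 / (4 * π) * exp (-(q * exp (-τ) / 4))
/-- truncated Green function -/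
def kap (A B q : ℝ) : ℝ := ∫ τ in A..B, gk τ q
/-- its derivative up to a factor -/
def mm (A B q : ℝ) : ℝ := ∫ τ in A..B, exp (-τ) / 2 * gk τ q

lemma gk_cont : Continuous (fun p : ℝ × ℝ => gk p.1 p.2) := by unfold gk; fun_prop
lemma gk_cont1 (q : ℝ) : Continuous (fun τ => gk τ q) := by unfold gk; fun_prop
lemma gk_cont2 (τ : ℝ) : Continuous (fun q => gk τ q) := by unfold gk; fun_prop
lemma gk_pos (τ q : ℝ) : 0 < gk τ q := by unfold gk; positivity
lemma gk_le (τ : ℝ) {q : ℝ} (hq : 0 ≤ q) : gk τ q ≤ 1 / (4 * π) := by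
  unfold gk
  have : exp (-(q * exp (-τ) / 4)) ≤ 1 := exp_le_one_iff.2 (by
    have : 0 ≤ q * exp (-τ) / 4 := by positivity
    linarith)
  exact mul_le_of_le_one_right (by positivity) this
lemma gk_mono {τ B q : ℝ} (h : τ ≤ B) (hq : 0 ≤ q) : gk τ q ≤ gk B q := by
  unfold gk; gcongr

lemma mm_cont (A B : ℝ) : Continuous (fun q => mm A B q) := by
  unfold mm
  refine intervalIntegral.continuous_parametric_intervalIntegral_of_continuous' ?_ A B
  unfold gk Function.uncurry; fun_prop

lemma kap_cont (A B : ℝ) : Continuous (fun q => kap A B q) := by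
  unfold kap
  refine intervalIntegral.continuous_parametric_intervalIntegral_of_continuous' ?_ A B
  unfold gk Function.uncurry; fun_prop

lemma hasDerivAt_gk_q (τ q : ℝ) : HasDerivAt (fun q => gk τ q) (-(1 / 2) * (exp (-τ) / 2 * gk τ q)) q := by
  unfold gk
  have h : HasDerivAt (fun q : ℝ => -(q * exp (-τ) / 4)) (-(exp (-τ) / 4)) q := by
    refine (((hasDerivAt_id q).mul_const (exp (-τ))).div_const 4).neg.congr_deriv ?_
    simp
  refine (h.exp.const_mul _).congr_deriv ?_
  ring

lemma hasDerivAt_gk_t (τ q : ℝ) : HasDerivAt (fun τ => gk τ q) (q * exp (-τ) / 4 * gk τ q) τ := by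
  unfold gk
  have h : HasDerivAt (fun τ : ℝ => -(q * exp (-τ) / 4)) (q * exp (-τ) / 4) τ := by
    have := (((hasDerivAt_id τ).neg.exp.const_mul q).div_const 4).neg
    refine this.congr_deriv ?_
    simp; ring
  refine (h.exp.const_mul _).congr_deriv ?_
  ring

lemma hasDerivAt_kap (A B q : ℝ) : HasDerivAt (fun q => kap A B q) (-(1 / 2) * mm A B q) q := by
  unfold kap mm
  rw [← intervalIntegral.integral_const_mul]
  set C := fun τ : ℝ => exp (-τ) / 4 * (1 / (4 * π) * exp ((|q| + 1) * exp (-τ) / 4))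
  refine (intervalIntegral.hasDerivAt_integral_of_dominated_loc_of_deriv_le
    (F := fun q τ => gk τ q) (F' := fun q τ => -(1 / 2) * (exp (-τ) / 2 * gk τ q)) (bound := C)
    (Metric.ball_mem_nhds q one_pos) ?_ ?_ ?_ ?_ ?_ ?_).2
  · exact Filter.Eventually.of_forall fun x => (gk_cont1 x).aestronglyMeasurable
  · exact (gk_cont1 q).intervalIntegrable _ _
  · have := gk_cont1 q
    exact Continuous.aestronglyMeasurable (by fun_prop)
  · refine Filter.Eventually.of_forall fun τ _ x hx => ?_
    rw [Metric.mem_ball, Real.dist_eq] at hx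
    have hx2 : -x ≤ |q| + 1 := by
      have := abs_lt.1 hx; have := neg_abs_le q; linarith
    have h1 := gk_pos τ x
    rw [Real.norm_eq_abs, abs_mul, abs_of_nonneg (by positivity : 0 ≤ exp (-τ) / 2 * gk τ x)]
    norm_num
    have : gk τ x ≤ 1 / (4 * π) * exp ((|q| + 1) * exp (-τ) / 4) := by
      unfold gk
      gcongr
      rw [← neg_div, ← neg_mul]
      gcongr
    calc _ = exp (-τ) / 4 * gk τ x := by ring
      _ ≤ _ := by simp only [C]; gcongr
  · exact Continuous.intervalIntegrable (by fun_prop) _ _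
  · exact Filter.Eventually.of_forall fun τ _ x hx => hasDerivAt_gk_q τ x

lemma mm_mul (A B q : ℝ) : q * mm A B q = 2 * (gk B q - gk A q) := by
  have h := intervalIntegral.integral_eq_sub_of_hasDerivAt (a := A) (b := B)
    (fun τ _ => hasDerivAt_gk_t τ q)
    (Continuous.intervalIntegrable (by have := gk_cont1 q; fun_prop) _ _)
  rw [← h, mm, ← intervalIntegral.integral_const_mul, ← intervalIntegral.integral_const_mul]
  congr 1; ext τ; ring

lemma kap_nonneg {A B : ℝ} (h : A ≤ B) (q : ℝ) : 0 ≤ kap A B q :=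
  intervalIntegral.integral_nonneg h fun τ _ => (gk_pos τ q).le

lemma mm_nonneg {A B : ℝ} (h : A ≤ B) (q : ℝ) : 0 ≤ mm A B q :=
  intervalIntegral.integral_nonneg h fun τ _ => by have := gk_pos τ q; positivity

lemma kap_le {A B q : ℝ} (h : A ≤ B) (hq : 0 ≤ q) : kap A B q ≤ (B - A) * gk B q := by
  have : ∫ τ in A..B, gk τ q ≤ ∫ τ in A..B, gk B q :=
    intervalIntegral.integral_mono_on h ((gk_cont1 q).intervalIntegrable _ _)
      (intervalIntegrable_const) fun τ hτ => gk_mono hτ.2 hq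
  simpa [kap] using this

lemma mm_le {A B q : ℝ} (h : A ≤ B) (hq : 0 ≤ q) :
    mm A B q ≤ (B - A) * (exp (-A) / 2 * gk B q) := by
  have : mm A B q ≤ ∫ τ in A..B, exp (-A) / 2 * gk B q :=
    intervalIntegral.integral_mono_on h
      (Continuous.intervalIntegrable (by have := gk_cont1 q; fun_prop) _ _)
      (intervalIntegrable_const) fun τ hτ => by
        have := gk_mono hτ.2 hq
        have := gk_pos τ q
        have := hτ.1
        gcongr
  rw [intervalIntegral.integral_const, smul_eq_mul] at this
  exact this

lemma hasDerivAt_kap_r (A B : ℝ) {r : ℝ} (hr : 0 < r) :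
    HasDerivAt (fun r => kap A B (r ^ 2)) (-(2 / r) * (gk B (r ^ 2) - gk A (r ^ 2))) r := by
  have h := (hasDerivAt_kap A B (r ^ 2)).comp r (hasDerivAt_pow 2 r)
  refine h.congr_deriv ?_
  have := mm_mul A B (r ^ 2)
  push_cast
  have e : gk B (r ^ 2) - gk A (r ^ 2) = r ^ 2 * mm A B (r ^ 2) / 2 := by rw [this]; ring
  rw [e]; field_simp

lemma kap_ftc (A B : ℝ) {r : ℝ} (hr : 0 < r) :
    kap A B (r ^ 2) - kap A B 1 = ∫ ρ in (1:ℝ)..r, -(2 / ρ) * (gk B (ρ ^ 2) - gk A (ρ ^ 2)) := by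
  have hp : ∀ ρ ∈ Set.uIcc 1 r, 0 < ρ := fun ρ hρ => lt_of_lt_of_le (lt_min one_pos hr) hρ.1
  rw [intervalIntegral.integral_eq_sub_of_hasDerivAt (f := fun r => kap A B (r ^ 2))
    (fun ρ hρ => hasDerivAt_kap_r A B (hp ρ hρ))]
  · simp
  · refine ContinuousOn.intervalIntegrable ?_
    have := gk_cont2 A
    have := gk_cont2 B
    refine ContinuousOn.mul ?_ (by fun_prop)
    exact (continuousOn_const.div continuousOn_id fun ρ hρ => (hp ρ hρ).ne').neg

lemma kap_integrand_bd {A B : ℝ} (h : A ≤ B) {ρ : ℝ} (hρ : 0 < ρ) :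
    ‖-(2 / ρ) * (gk B (ρ ^ 2) - gk A (ρ ^ 2))‖ ≤ 1 / (2 * π) * ρ⁻¹ := by
  have h1 := gk_mono h (sq_nonneg ρ)
  have h2 := gk_le B (sq_nonneg ρ)
  have h3 := gk_pos A (ρ ^ 2)
  rw [norm_mul, norm_neg, Real.norm_eq_abs, Real.norm_eq_abs, abs_of_nonneg (by positivity),
    abs_of_nonneg (by linarith)]
  calc _ ≤ 2 / ρ * (1 / (4 * π)) := by gcongr; linarith
    _ = _ := by field_simp; norm_num

lemma kap_log_bd {A B : ℝ} (h : A ≤ B) {r : ℝ} (hr : 0 < r) :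
    |kap A B (r ^ 2) - kap A B 1| ≤ 1 / (2 * π) * |log r| := by
  have hp : ∀ ρ ∈ Set.uIcc 1 r, 0 < ρ := fun ρ hρ => lt_of_lt_of_le (lt_min one_pos hr) hρ.1
  rw [kap_ftc A B hr, ← Real.norm_eq_abs]
  have hi : IntervalIntegrable (fun ρ : ℝ => 1 / (2 * π) * ρ⁻¹) volume 1 r :=
    ContinuousOn.intervalIntegrable (continuousOn_const.mul
      (continuousOn_id.inv₀ fun ρ hρ => (hp ρ hρ).ne'))
  refine (intervalIntegral.norm_integral_le_abs_of_norm_le (g := fun ρ => 1 / (2 * π) * ρ⁻¹) ?_ hi).trans ?_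
  · exact (ae_restrict_iff' measurableSet_uIoc).2 (Filter.Eventually.of_forall fun ρ hρ =>
      kap_integrand_bd h (hp ρ (Set.uIoc_subset_uIcc hρ)))
  · rw [intervalIntegral.integral_const_mul, integral_inv (fun h0 => lt_irrefl _ (hp 0 h0)), div_one,
      abs_mul, abs_of_pos (by positivity : 0 < 1 / (2 * π))]

lemma kap_log_tendsto {A B : ℕ → ℝ} (h : ∀ n, A n ≤ B n) (hA : Filter.Tendsto A Filter.atTop Filter.atBot)
    (hB : Filter.Tendsto B Filter.atTop Filter.atTop) {r : ℝ} (hr : 0 < r) :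
    Filter.Tendsto (fun n => kap (A n) (B n) (r ^ 2) - kap (A n) (B n) 1) Filter.atTop
      (nhds (-(1 / (2 * π)) * log r)) := by
  have hp : ∀ ρ ∈ Set.uIcc 1 r, 0 < ρ := fun ρ hρ => lt_of_lt_of_le (lt_min one_pos hr) hρ.1
  simp only [kap_ftc _ _ hr]
  have hi : IntervalIntegrable (fun ρ : ℝ => 1 / (2 * π) * ρ⁻¹) volume 1 r :=
    ContinuousOn.intervalIntegrable (continuousOn_const.mul
      (continuousOn_id.inv₀ fun ρ hρ => (hp ρ hρ).ne'))
  have e : -(1 / (2 * π)) * log r = ∫ ρ in (1:ℝ)..r, -(2 / ρ) * (1 / (4 * π) - 0) := by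
    have : ∀ ρ : ℝ, -(2 / ρ) * (1 / (4 * π) - 0) = -(1 / (2 * π)) * ρ⁻¹ := fun ρ => by
      by_cases hρ : ρ = 0
      · simp [hρ]
      · field_simp; norm_num
    simp only [this]
    rw [intervalIntegral.integral_const_mul, integral_inv (fun h0 => lt_irrefl _ (hp 0 h0)), div_one]
  rw [e]
  refine intervalIntegral.tendsto_integral_filter_of_dominated_convergence
    (fun ρ => 1 / (2 * π) * ρ⁻¹) ?_ ?_ hi ?_
  · refine Filter.Eventually.of_forall fun n => Measurable.aestronglyMeasurable ?_
    have := (gk_cont2 (A n)).measurable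
    have := (gk_cont2 (B n)).measurable
    fun_prop
  · exact Filter.Eventually.of_forall fun n => Filter.Eventually.of_forall fun ρ hρ =>
      kap_integrand_bd (h n) (hp ρ (Set.uIoc_subset_uIcc hρ))
  · refine Filter.Eventually.of_forall fun ρ hρ => ?_
    have hρ0 := hp ρ (Set.uIoc_subset_uIcc hρ)
    refine Filter.Tendsto.const_mul _ (Filter.Tendsto.sub ?_ ?_)
    · have h0 : Filter.Tendsto (fun n => exp (-(B n))) Filter.atTop (nhds 0) :=
        tendsto_exp_neg_atTop_nhds_zero.comp hB
      have h1 : Filter.Tendsto (fun n => gk (B n) (ρ ^ 2)) Filter.atTop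
          (nhds (1 / (4 * π) * exp (-(ρ ^ 2 * 0 / 4)))) :=
        ((((h0.const_mul (ρ ^ 2)).div_const 4).neg).rexp).const_mul _
      simpa using h1
    · have h0 : Filter.Tendsto (fun n => exp (-(A n))) Filter.atTop Filter.atTop :=
        tendsto_exp_atTop.comp (Filter.tendsto_neg_atBot_atTop.comp hA)
      have h1 : Filter.Tendsto (fun n => ρ ^ 2 * exp (-(A n)) / 4) Filter.atTop Filter.atTop :=
        (h0.const_mul_atTop (by positivity)).atTop_div_const (by norm_num)
      have h2 := (tendsto_exp_neg_atTop_nhds_zero.comp h1).const_mul (1 / (4 * π))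
      rw [mul_zero] at h2
      exact h2

lemma gauss_integral {κ : ℝ} (hκ : 0 < κ) : ∫ x : E2, exp (-κ * ‖x‖ ^ 2) = π / κ := by
  rw [GaussianFourier.integral_rexp_neg_mul_sq_norm hκ]
  simp

lemma gauss_integrable {κ : ℝ} (hκ : 0 < κ) : Integrable (fun x : E2 => exp (-κ * ‖x‖ ^ 2)) := by
  by_contra h
  have := gauss_integral hκ
  rw [integral_undef h] at this
  have : 0 < π / κ := by positivity
  linarith

lemma gk_eq (τ : ℝ) (q : ℝ) : gk τ q = 1 / (4 * π) * exp (-(exp (-τ) / 4) * q) := by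
  unfold gk; congr 2; ring

lemma gk_integrable (τ : ℝ) : Integrable (fun x : E2 => gk τ (‖x‖ ^ 2)) := by
  simp only [gk_eq]
  exact (gauss_integrable (by positivity)).const_mul _

lemma gk_integral (τ : ℝ) : ∫ x : E2, gk τ (‖x‖ ^ 2) = exp τ := by
  simp only [gk_eq]
  rw [integral_const_mul, gauss_integral (by positivity), exp_neg]
  field_simp

lemma gk_norm_integrable (τ : ℝ) : Integrable (fun x : E2 => ‖x‖ * gk τ (‖x‖ ^ 2)) := by
  set κ := exp (-τ) / 4 with hκ
  have hk : 0 < κ := by positivity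
  refine ((gauss_integrable (half_pos hk)).const_mul ((1 + 2 / κ) * (1 / (4 * π)))).mono' ?_ ?_
  · have := gk_cont2 τ
    exact Continuous.aestronglyMeasurable (by fun_prop)
  · refine Filter.Eventually.of_forall fun x => ?_
    rw [gk_eq, ← hκ, Real.norm_eq_abs, abs_of_nonneg (by positivity)]
    have h1 : ‖x‖ ≤ (1 + 2 / κ) * exp (κ / 2 * ‖x‖ ^ 2) := by
      have h2 : κ / 2 * ‖x‖ ^ 2 + 1 ≤ exp (κ / 2 * ‖x‖ ^ 2) := add_one_le_exp _
      have h3 : ‖x‖ ≤ 1 + ‖x‖ ^ 2 := by nlinarith [sq_nonneg (‖x‖ - 1)]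
      calc ‖x‖ ≤ 1 + ‖x‖ ^ 2 := h3
        _ ≤ (1 + 2 / κ) * (κ / 2 * ‖x‖ ^ 2 + 1) := by
          have : (1 + 2 / κ) * (κ / 2 * ‖x‖ ^ 2 + 1) = κ / 2 * ‖x‖ ^ 2 + 1 + ‖x‖ ^ 2 + 2 / κ := by
            field_simp
            ring
          rw [this]
          have : 0 ≤ κ / 2 * ‖x‖ ^ 2 := by positivity
          have : 0 ≤ 2 / κ := by positivity
          linarith
        _ ≤ _ := by gcongr
    calc _ ≤ ((1 + 2 / κ) * exp (κ / 2 * ‖x‖ ^ 2)) * (1 / (4 * π) * exp (-κ * ‖x‖ ^ 2)) := by gcongr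
      _ = (1 + 2 / κ) * (1 / (4 * π)) * (exp (κ / 2 * ‖x‖ ^ 2) * exp (-κ * ‖x‖ ^ 2)) := by ring
      _ = _ := by rw [← exp_add]; congr 2; ring

lemma scale_integral (F : E2 → ℝ) (y : E2) {r : ℝ} (hr : 0 < r) :
    ∫ x, F x = r ^ 2 * ∫ z, F (y + r • z) := by
  rw [Measure.integral_comp_smul volume (fun x => F (y + x)) r, integral_add_left_eq_self]
  simp
  field_simp

lemma gk_conv (σ τ : ℝ) (y z : E2) :
    ∫ x, gk σ (‖x - y‖ ^ 2) * gk τ (‖x - z‖ ^ 2) =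
      exp σ * exp τ / (exp σ + exp τ) * gk (log (exp σ + exp τ)) (‖y - z‖ ^ 2) := by
  set a := exp σ with ha
  set b := exp τ with hb
  have ha0 : 0 < a := exp_pos _
  have hb0 : 0 < b := exp_pos _
  have e : ∀ x, gk σ (‖x - y‖ ^ 2) * gk τ (‖x - z‖ ^ 2) =
      1 / (4 * π) * (gk (log (a + b)) (‖y - z‖ ^ 2)) *
        exp (-((a + b) / (4 * a * b)) * ‖x - (a + b)⁻¹ • (b • y + a • z)‖ ^ 2) := by
    intro x
    have hn : ‖x - y‖ ^ 2 / (4 * a) + ‖x - z‖ ^ 2 / (4 * b) = ‖y - z‖ ^ 2 / (4 * (a + b)) +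
        ((a + b) / (4 * a * b)) * ‖x - (a + b)⁻¹ • (b • y + a • z)‖ ^ 2 := by
      simp only [EuclideanSpace.norm_sq_eq, Fin.sum_univ_two, Real.norm_eq_abs, sq_abs]
      simp
      field_simp
      ring
    unfold gk
    rw [exp_neg (log (a + b)), exp_log (by positivity), exp_neg σ, exp_neg τ, ← ha, ← hb]
    have : 1 / (4 * π) * exp (-(‖x - y‖ ^ 2 * a⁻¹ / 4)) * (1 / (4 * π) * exp (-(‖x - z‖ ^ 2 * b⁻¹ / 4)))
      = 1 / (4 * π) * (1 / (4 * π)) * exp (-(‖x - y‖ ^ 2 / (4 * a) + ‖x - z‖ ^ 2 / (4 * b))) := by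
      rw [neg_add, exp_add]
      have e1 : ‖x - y‖ ^ 2 * a⁻¹ / 4 = ‖x - y‖ ^ 2 / (4 * a) := by field_simp
      have e2 : ‖x - z‖ ^ 2 * b⁻¹ / 4 = ‖x - z‖ ^ 2 / (4 * b) := by field_simp
      rw [e1, e2]; ring
    rw [this, hn, neg_add, exp_add]
    have e1 : ‖y - z‖ ^ 2 * (a + b)⁻¹ / 4 = ‖y - z‖ ^ 2 / (4 * (a + b)) := by field_simp
    rw [e1]; ring_nf
  simp only [e]
  rw [integral_const_mul, integral_sub_right_eq_self
    (fun x : E2 => exp (-((a + b) / (4 * a * b)) * ‖x‖ ^ 2)), gauss_integral (by positivity)]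
  field_simp

/-- heat semigroup -/
def Pt (A : ℝ) (w : E2 → ℝ) (y : E2) : ℝ := ∫ z : E2, gk 0 (‖z‖ ^ 2) * w (y + exp (A / 2) • z)

lemma gk_scale (τ : ℝ) (z : E2) : gk τ (‖exp (τ / 2) • z‖ ^ 2) = gk 0 (‖z‖ ^ 2) := by
  unfold gk
  rw [norm_smul, Real.norm_eq_abs, abs_of_pos (exp_pos _), mul_pow, ← exp_nat_mul]
  congr 3
  have : exp ((2:ℕ) * (τ / 2)) * exp (-τ) = 1 := by rw [← exp_add]; push_cast; ring_nf; simp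
  rw [mul_right_comm, this]; simp

lemma exp_half_sq (τ : ℝ) : exp (τ / 2) ^ 2 = exp τ := by
  rw [← exp_nat_mul]; congr 1; push_cast; ring

lemma Pt_eq (A : ℝ) (w : E2 → ℝ) (y : E2) :
    Pt A w y = exp (-A) * ∫ x, gk A (‖x - y‖ ^ 2) * w x := by
  rw [scale_integral (fun x => gk A (‖x - y‖ ^ 2) * w x) y (exp_pos (A / 2)), exp_half_sq,
    ← mul_assoc, ← exp_add]
  simp only [add_sub_cancel_left, gk_scale]
  simp [Pt]

lemma Pt_hasDeriv {w : E2 → ℝ} (hw : ContDiff ℝ 1 w) {M M' : ℝ} (hM : ∀ x, |w x| ≤ M)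
    (hM' : ∀ x, ‖fderiv ℝ w x‖ ≤ M') (y : E2) (τ : ℝ) :
    HasDerivAt (fun τ => Pt τ w y)
      (∫ z : E2, gk 0 (‖z‖ ^ 2) * fderiv ℝ w (y + exp (τ / 2) • z) ((exp (τ / 2) / 2) • z)) τ := by
  have hM0 : 0 ≤ M' := (norm_nonneg _).trans (hM' 0)
  have cw := hw.continuous
  have cd := hw.continuous_fderiv one_ne_zero
  have cg := gk_cont2 0
  unfold Pt
  refine (hasDerivAt_integral_of_dominated_loc_of_deriv_le
    (F := fun τ (z : E2) => gk 0 (‖z‖ ^ 2) * w (y + exp (τ / 2) • z))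
    (F' := fun τ (z : E2) => gk 0 (‖z‖ ^ 2) * fderiv ℝ w (y + exp (τ / 2) • z) ((exp (τ / 2) / 2) • z))
    (bound := fun z => M' * (exp ((τ + 1) / 2) / 2) * (‖z‖ * gk 0 (‖z‖ ^ 2)))
    (Metric.ball_mem_nhds τ one_pos) ?_ ?_ ?_ ?_ ?_ ?_).2
  · exact Filter.Eventually.of_forall fun x => Continuous.aestronglyMeasurable (by fun_prop)
  · refine ((gk_integrable 0).const_mul M).mono' (Continuous.aestronglyMeasurable (by fun_prop)) ?_
    refine Filter.Eventually.of_forall fun z => ?_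
    have := gk_pos 0 (‖z‖ ^ 2)
    rw [Real.norm_eq_abs, abs_mul, abs_of_pos this, mul_comm]
    gcongr
    exact hM _
  · refine Continuous.aestronglyMeasurable ?_
    refine Continuous.mul (by fun_prop) (Continuous.clm_apply (by fun_prop) (by fun_prop))
  · refine Filter.Eventually.of_forall fun z t ht => ?_
    rw [Metric.mem_ball, Real.dist_eq] at ht
    have h1 : t ≤ τ + 1 := by have := (abs_lt.1 ht).2; linarith
    have h2 := gk_pos 0 (‖z‖ ^ 2)
    rw [norm_mul, Real.norm_eq_abs, abs_of_pos h2]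
    have h3 : ‖fderiv ℝ w (y + exp (t / 2) • z) ((exp (t / 2) / 2) • z)‖ ≤
        M' * ((exp ((τ + 1) / 2) / 2) * ‖z‖) := by
      refine (ContinuousLinearMap.le_opNorm _ _).trans ?_
      rw [norm_smul, Real.norm_eq_abs, abs_of_pos (by positivity)]
      gcongr
      exact hM' _
    calc _ ≤ gk 0 (‖z‖ ^ 2) * (M' * ((exp ((τ + 1) / 2) / 2) * ‖z‖)) := by gcongr
      _ = _ := by ring
  · exact (gk_norm_integrable 0).const_mul _
  · refine Filter.Eventually.of_forall fun z t ht => ?_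
    have h1 : HasDerivAt (fun t : ℝ => y + exp (t / 2) • z) ((exp (t / 2) / 2) • z) t := by
      have h2 : HasDerivAt (fun t : ℝ => exp (t / 2)) (exp (t / 2) / 2) t := by
        refine (((hasDerivAt_id t).div_const 2).exp).congr_deriv ?_
        simp; ring
      exact (h2.smul_const z).const_add y
    exact ((hw.differentiable one_ne_zero _).hasFDerivAt.comp_hasDerivAt t h1).const_mul _

lemma Pt_deriv_eq {w : E2 → ℝ} (y : E2) (τ : ℝ) :
    (∫ z : E2, gk 0 (‖z‖ ^ 2) * fderiv ℝ w (y + exp (τ / 2) • z) ((exp (τ / 2) / 2) • z)) =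
      ∫ x, exp (-τ) / 2 * gk τ (‖x - y‖ ^ 2) * fderiv ℝ w x (x - y) := by
  rw [scale_integral (fun x => exp (-τ) / 2 * gk τ (‖x - y‖ ^ 2) * fderiv ℝ w x (x - y)) y
    (exp_pos (τ / 2)), exp_half_sq, ← integral_const_mul]
  congr 1; ext z
  simp only [add_sub_cancel_left, gk_scale, map_smul, smul_eq_mul]
  have : exp τ * exp (-τ) = 1 := by rw [← exp_add]; simp
  linear_combination (-(gk 0 (‖z‖ ^ 2)) * exp (τ / 2) / 2 * fderiv ℝ w (y + exp (τ / 2) • z) z) * this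

lemma Pt_prod_integrable {w : E2 → ℝ} (hw : ContDiff ℝ 1 w) {M' : ℝ}
    (hM' : ∀ x, ‖fderiv ℝ w x‖ ≤ M') (y : E2) {A B : ℝ} (h : A ≤ B) :
    Integrable (Function.uncurry fun τ x => exp (-τ) / 2 * gk τ (‖x - y‖ ^ 2) * fderiv ℝ w x (x - y))
      ((volume.restrict (Set.uIoc A B)).prod volume) := by
  have hM0 : 0 ≤ M' := (norm_nonneg _).trans (hM' 0)
  have cd := hw.continuous_fderiv one_ne_zero
  have hfin : IsFiniteMeasure (volume.restrict (Set.uIoc A B)) := by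
    rw [Set.uIoc_of_le h]; infer_instance
  have hb : Integrable (fun x => exp (-A) / 2 * M' * (‖x - y‖ * gk B (‖x - y‖ ^ 2))) :=
    ((gk_norm_integrable B).comp_sub_right y).const_mul _
  refine (hb.comp_snd (volume.restrict (Set.uIoc A B))).mono' ?_ ?_
  · refine Continuous.aestronglyMeasurable ?_
    unfold Function.uncurry
    refine Continuous.mul ?_ (Continuous.clm_apply (by fun_prop) (by fun_prop))
    unfold gk; fun_prop
  · have h1 : ∀ᵐ p ∂((volume.restrict (Set.uIoc A B)).prod (volume : Measure E2)), p.1 ∈ Set.uIoc A B :=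
      Measure.quasiMeasurePreserving_fst.ae (ae_restrict_mem measurableSet_uIoc)
    filter_upwards [h1] with p hp
    rw [Set.uIoc_of_le h] at hp
    simp only [Function.uncurry]
    have g1 := gk_mono hp.2 (sq_nonneg ‖p.2 - y‖)
    have g0 := gk_pos p.1 (‖p.2 - y‖ ^ 2)
    have g2 := gk_pos B (‖p.2 - y‖ ^ 2)
    rw [norm_mul, Real.norm_eq_abs, abs_of_pos (by positivity)]
    have h3 : ‖fderiv ℝ w p.2 (p.2 - y)‖ ≤ M' * ‖p.2 - y‖ :=
      (ContinuousLinearMap.le_opNorm _ _).trans (by gcongr; exact hM' _)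
    have h4 := hp.1.le
    calc _ ≤ exp (-A) / 2 * gk B (‖p.2 - y‖ ^ 2) * (M' * ‖p.2 - y‖) := by gcongr
      _ = _ := by ring

lemma Pt_sub {w : E2 → ℝ} (hw : ContDiff ℝ 1 w) {M M' : ℝ} (hM : ∀ x, |w x| ≤ M)
    (hM' : ∀ x, ‖fderiv ℝ w x‖ ≤ M') (y : E2) {A B : ℝ} (h : A ≤ B) :
    Pt B w y - Pt A w y = ∫ x, mm A B (‖x - y‖ ^ 2) * fderiv ℝ w x (x - y) := by
  have hd : ∀ τ, HasDerivAt (fun τ => Pt τ w y)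
      (∫ x, exp (-τ) / 2 * gk τ (‖x - y‖ ^ 2) * fderiv ℝ w x (x - y)) τ := fun τ => by
    rw [← Pt_deriv_eq]; exact Pt_hasDeriv hw hM hM' y τ
  have hIntg := Pt_prod_integrable hw hM' y h
  have hi : IntervalIntegrable
      (fun τ => ∫ x, exp (-τ) / 2 * gk τ (‖x - y‖ ^ 2) * fderiv ℝ w x (x - y)) volume A B := by
    rw [intervalIntegrable_iff]
    exact hIntg.integral_prod_left
  rw [← intervalIntegral.integral_eq_sub_of_hasDerivAt (fun τ _ => hd τ) hi,
    intervalIntegral_integral_swap hIntg]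
  congr 1; ext x
  rw [intervalIntegral.integral_mul_const]; rfl

lemma Pt_bound {w : E2 → ℝ} {M : ℝ} (hM : ∀ x, |w x| ≤ M) (y : E2) (A : ℝ) :
    |Pt A w y| ≤ M := by
  have h : ‖Pt A w y‖ ≤ ∫ z : E2, M * gk 0 (‖z‖ ^ 2) := by
    refine norm_integral_le_of_norm_le ((gk_integrable 0).const_mul M)
      (Filter.Eventually.of_forall fun z => ?_)
    have := gk_pos 0 (‖z‖ ^ 2)
    rw [Real.norm_eq_abs, abs_mul, abs_of_pos this, mul_comm]
    gcongr
    exact hM _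
  rw [integral_const_mul, gk_integral] at h
  simpa using h

lemma Pt_tendsto_small {w : E2 → ℝ} (hw : Continuous w) {M : ℝ} (hM : ∀ x, |w x| ≤ M) (y : E2)
    {A : ℕ → ℝ} (hA : Filter.Tendsto A Filter.atTop Filter.atBot) :
    Filter.Tendsto (fun n => Pt (A n) w y) Filter.atTop (nhds (w y)) := by
  have cg := gk_cont2 0
  have e : w y = ∫ z : E2, gk 0 (‖z‖ ^ 2) * w y := by
    rw [integral_mul_const, gk_integral]; simp
  rw [e]
  unfold Pt
  refine tendsto_integral_of_dominated_convergence (fun z : E2 => M * gk 0 (‖z‖ ^ 2)) ?_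
    ((gk_integrable 0).const_mul M) ?_ ?_
  · exact fun n => Continuous.aestronglyMeasurable (by fun_prop)
  · refine fun n => Filter.Eventually.of_forall fun z => ?_
    have := gk_pos 0 (‖z‖ ^ 2)
    rw [Real.norm_eq_abs, abs_mul, abs_of_pos this, mul_comm]
    gcongr
    exact hM _
  · refine Filter.Eventually.of_forall fun z => Filter.Tendsto.const_mul _ ?_
    have h0 : Filter.Tendsto (fun n => exp (A n / 2)) Filter.atTop (nhds 0) :=
      tendsto_exp_atBot.comp (hA.atBot_div_const (by norm_num))
    have h1 : Filter.Tendsto (fun n => y + exp (A n / 2) • z) Filter.atTop (nhds (y + (0:ℝ) • z)) :=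
      (h0.smul_const z).const_add y
    rw [zero_smul, add_zero] at h1
    exact (hw.tendsto y).comp h1

lemma Pt_tendsto_large {w : E2 → ℝ} (hw : Integrable w) (y : E2)
    {B : ℕ → ℝ} (hB : Filter.Tendsto B Filter.atTop Filter.atTop) :
    Filter.Tendsto (fun n => Pt (B n) w y) Filter.atTop (nhds 0) := by
  have hb : ∀ n, ‖Pt (B n) w y‖ ≤ exp (-(B n)) * (1 / (4 * π) * ∫ x, ‖w x‖) := fun n => by
    rw [Pt_eq, norm_mul, Real.norm_eq_abs, abs_of_pos (exp_pos _), ← integral_const_mul]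
    gcongr
    refine norm_integral_le_of_norm_le (hw.norm.const_mul _) (Filter.Eventually.of_forall fun x => ?_)
    rw [norm_mul, Real.norm_eq_abs, abs_of_pos (gk_pos _ _)]
    gcongr
    exact gk_le _ (sq_nonneg _)
  refine squeeze_zero_norm hb ?_
  have := (tendsto_exp_neg_atTop_nhds_zero.comp hB).mul_const (1 / (4 * π) * ∫ x, ‖w x‖)
  rw [zero_mul] at this
  exact this

lemma conv_int {f g : E2 → ℝ} (hf : Integrable f) (hg : Integrable g) :
    Integrable (fun p : E2 × E2 => f p.2 * g (p.1 - p.2)) (volume.prod volume) :=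
  hf.convolution_integrand (ContinuousLinearMap.mul ℝ ℝ) hg

/-- regularised potential -/
def phi (A B : ℝ) (f : E2 → ℝ) (x : E2) : ℝ := ∫ y, f y * kap A B (‖x - y‖ ^ 2)

/-- its derivative -/
def dphi (A B : ℝ) (f : E2 → ℝ) (x : E2) : E2 →L[ℝ] ℝ :=
  ∫ y, (-(f y * mm A B (‖x - y‖ ^ 2))) • innerSL ℝ (x - y)

/-- envelope of the gradient kernel -/
def hB (A B : ℝ) (x : E2) : ℝ := (B - A) * (exp (-A) / 2) * (‖x‖ * gk B (‖x‖ ^ 2))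

lemma hB_int (A B : ℝ) : Integrable (hB A B) := (gk_norm_integrable B).const_mul _

lemma hB_cont (A B : ℝ) : Continuous (hB A B) := by
  unfold hB
  have := gk_cont2 B
  fun_prop

lemma hB_bd {A B : ℝ} (h : A ≤ B) : ∃ C, 0 ≤ C ∧ ∀ x, hB A B x ≤ C := by
  set κ := exp (-B) / 4 with hκ
  have hk : 0 < κ := by positivity
  have hAB : 0 ≤ B - A := by linarith
  refine ⟨(B - A) * (exp (-A) / 2) * ((1 + 1 / κ) * (1 / (4 * π))), by positivity, fun x => ?_⟩
  unfold hB
  refine mul_le_mul_of_nonneg_left ?_ (by positivity)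
  rw [gk_eq, ← hκ, neg_mul, exp_neg]
  have h2 : κ * ‖x‖ ^ 2 + 1 ≤ exp (κ * ‖x‖ ^ 2) := add_one_le_exp _
  have h3 : ‖x‖ ≤ (1 + 1 / κ) * exp (κ * ‖x‖ ^ 2) := by
    have h3 : ‖x‖ ≤ 1 + ‖x‖ ^ 2 := by nlinarith [sq_nonneg (‖x‖ - 1)]
    calc ‖x‖ ≤ 1 + ‖x‖ ^ 2 := h3
      _ ≤ (1 + 1 / κ) * (κ * ‖x‖ ^ 2 + 1) := by
        have : (1 + 1 / κ) * (κ * ‖x‖ ^ 2 + 1) = κ * ‖x‖ ^ 2 + 1 + ‖x‖ ^ 2 + 1 / κ := by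
          field_simp
          ring
        rw [this]
        have : 0 ≤ κ * ‖x‖ ^ 2 := by positivity
        have : 0 ≤ 1 / κ := by positivity
        linarith
      _ ≤ _ := by gcongr
  have h4 := exp_pos (κ * ‖x‖ ^ 2)
  calc _ ≤ ((1 + 1 / κ) * exp (κ * ‖x‖ ^ 2)) * (1 / (4 * π) * (exp (κ * ‖x‖ ^ 2))⁻¹) := by gcongr
    _ = _ := by field_simp

lemma mm_norm_le {A B : ℝ} (h : A ≤ B) (x : E2) : mm A B (‖x‖ ^ 2) * ‖x‖ ≤ hB A B x := by
  have := mm_le h (sq_nonneg ‖x‖)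
  calc _ ≤ (B - A) * (exp (-A) / 2 * gk B (‖x‖ ^ 2)) * ‖x‖ := by gcongr
    _ = _ := by unfold hB; ring

lemma dk_norm {A B : ℝ} (h : A ≤ B) (t : ℝ) (x : E2) :
    ‖(-(t * mm A B (‖x‖ ^ 2))) • innerSL ℝ x‖ ≤ |t| * hB A B x := by
  rw [norm_smul, norm_neg, Real.norm_eq_abs, abs_mul, abs_of_nonneg (mm_nonneg h _), innerSL_apply_norm,
    mul_assoc]
  gcongr
  exact mm_norm_le h x

lemma hasFDerivAt_kapn (A B : ℝ) (y x : E2) :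
    HasFDerivAt (fun x : E2 => kap A B (‖x - y‖ ^ 2)) ((-mm A B (‖x - y‖ ^ 2)) • innerSL ℝ (x - y)) x := by
  have h1 : HasFDerivAt (fun x : E2 => ‖x - y‖ ^ 2) ((2:ℝ) • innerSL ℝ (x - y)) x := by
    have h2 := (hasStrictFDerivAt_norm_sq (x - y)).hasFDerivAt.comp x ((hasFDerivAt_id x).sub_const y)
    refine h2.congr_fderiv ?_
    ext v; simp [two_smul]
  refine ((hasDerivAt_kap A B (‖x - y‖ ^ 2)).comp_hasFDerivAt x h1).congr_fderiv ?_
  rw [smul_smul]; congr 1; ring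

lemma kap_le' {A B : ℝ} (h : A ≤ B) {q : ℝ} (hq : 0 ≤ q) : |kap A B q| ≤ (B - A) * (1 / (4 * π)) := by
  have hAB : 0 ≤ B - A := by linarith
  rw [abs_of_nonneg (kap_nonneg h q)]
  refine (kap_le h hq).trans ?_
  gcongr
  exact gk_le B hq

lemma phi_integrand {A B : ℝ} (h : A ≤ B) {f : E2 → ℝ} (hf : Integrable f) (x : E2) :
    Integrable (fun y => f y * kap A B (‖x - y‖ ^ 2)) := by
  have := kap_cont A B
  refine (hf.norm.const_mul ((B - A) * (1 / (4 * π)))).mono' 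
    (hf.aestronglyMeasurable.mul (Continuous.aestronglyMeasurable (by fun_prop))) ?_
  refine Filter.Eventually.of_forall fun y => ?_
  rw [norm_mul, mul_comm]
  gcongr
  exact kap_le' h (sq_nonneg _)

lemma phi_bd {A B : ℝ} (h : A ≤ B) {f : E2 → ℝ} (hf : Integrable f) (x : E2) :
    |phi A B f x| ≤ (B - A) * (1 / (4 * π)) * ∫ y, ‖f y‖ := by
  rw [← integral_const_mul, ← Real.norm_eq_abs, phi]
  refine norm_integral_le_of_norm_le (hf.norm.const_mul _) (Filter.Eventually.of_forall fun y => ?_)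
  rw [norm_mul, mul_comm]
  gcongr
  exact kap_le' h (sq_nonneg _)

lemma dk_meas {A B : ℝ} {f : E2 → ℝ} (hf : Integrable f) (x : E2) :
    AEStronglyMeasurable (fun y => (-(f y * mm A B (‖x - y‖ ^ 2))) • innerSL ℝ (x - y)) := by
  have := mm_cont A B
  refine AEStronglyMeasurable.smul ((hf.aestronglyMeasurable.mul
    (Continuous.aestronglyMeasurable (by fun_prop))).neg) (Continuous.aestronglyMeasurable ?_)
  exact (innerSL ℝ (E := E2)).continuous.comp (by fun_prop)

lemma phi_hasFDeriv {A B : ℝ} (h : A ≤ B) {f : E2 → ℝ} (hf : Integrable f) (x : E2) :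
    HasFDerivAt (phi A B f) (dphi A B f x) x := by
  obtain ⟨C, hC0, hC⟩ := hB_bd h
  unfold phi dphi
  refine hasFDerivAt_integral_of_dominated_of_fderiv_le
    (F := fun x y => f y * kap A B (‖x - y‖ ^ 2))
    (F' := fun x y => (-(f y * mm A B (‖x - y‖ ^ 2))) • innerSL ℝ (x - y))
    (bound := fun y => ‖f y‖ * C) (Metric.ball_mem_nhds x one_pos) ?_ (phi_integrand h hf x) 
    (dk_meas hf x) ?_ (hf.norm.mul_const C) ?_
  · exact Filter.Eventually.of_forall fun x => (phi_integrand h hf x).aestronglyMeasurable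
  · refine Filter.Eventually.of_forall fun y z _ => (dk_norm h _ _).trans ?_
    rw [Real.norm_eq_abs]
    gcongr
    exact hC _
  · refine Filter.Eventually.of_forall fun y z _ => ?_
    refine ((hasFDerivAt_kapn A B y z).const_mul (f y)).congr_fderiv ?_
    rw [smul_smul]; congr 1; ring

lemma dphi_cont {A B : ℝ} (h : A ≤ B) {f : E2 → ℝ} (hf : Integrable f) : Continuous (dphi A B f) := by
  obtain ⟨C, hC0, hC⟩ := hB_bd h
  unfold dphi
  have := mm_cont A B
  refine continuous_of_dominated (bound := fun y => ‖f y‖ * C) (fun x => dk_meas hf x) ?_ 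
    (hf.norm.mul_const C) ?_
  · refine fun x => Filter.Eventually.of_forall fun y => (dk_norm h _ _).trans ?_
    rw [Real.norm_eq_abs]
    gcongr
    exact hC _
  · refine Filter.Eventually.of_forall fun y => ?_
    have c1 : Continuous fun x : E2 => -(f y * mm A B (‖x - y‖ ^ 2)) := by fun_prop
    exact c1.smul ((innerSL ℝ (E := E2)).continuous.comp (continuous_id.sub continuous_const))

lemma phi_contDiff {A B : ℝ} (h : A ≤ B) {f : E2 → ℝ} (hf : Integrable f) :
    ContDiff ℝ 1 (phi A B f) := by
  rw [contDiff_one_iff_fderiv]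
  refine ⟨fun x => (phi_hasFDeriv h hf x).differentiableAt, ?_⟩
  have : fderiv ℝ (phi A B f) = dphi A B f := funext fun x => (phi_hasFDeriv h hf x).fderiv
  rw [this]; exact dphi_cont h hf

lemma dphi_le {A B : ℝ} (h : A ≤ B) {f : E2 → ℝ} (hf : Integrable f) (x : E2) :
    ‖dphi A B f x‖ ≤ ∫ y, ‖f y‖ * hB A B (x - y) := by
  obtain ⟨C, hC0, hC⟩ := hB_bd h
  have hAB : 0 ≤ B - A := by linarith
  refine norm_integral_le_of_norm_le ?_ (Filter.Eventually.of_forall fun y => dk_norm h _ _)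
  have := hB_cont A B
  refine (hf.norm.mul_const C).mono' (hf.aestronglyMeasurable.norm.mul 
    (Continuous.aestronglyMeasurable (by fun_prop))) (Filter.Eventually.of_forall fun y => ?_)
  rw [norm_mul, norm_norm]
  have h0 : 0 ≤ hB A B (x - y) := by
    have := gk_pos B (‖x - y‖ ^ 2)
    unfold hB; positivity
  rw [Real.norm_of_nonneg h0]
  gcongr
  exact hC _

lemma dphi_bd {A B : ℝ} (h : A ≤ B) {f : E2 → ℝ} (hf : Integrable f) :
    ∃ C, 0 ≤ C ∧ ∀ x, ‖dphi A B f x‖ ≤ C := by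
  obtain ⟨C, hC0, hC⟩ := hB_bd h
  refine ⟨(∫ y, ‖f y‖ * C), integral_nonneg fun y => by positivity, fun x => ?_⟩
  refine norm_integral_le_of_norm_le (hf.norm.mul_const C) (Filter.Eventually.of_forall fun y => 
    (dk_norm h _ _).trans ?_)
  rw [Real.norm_eq_abs]
  gcongr
  exact hC _

lemma dphi_sq_int {A B : ℝ} (h : A ≤ B) {f : E2 → ℝ} (hf : Integrable f) :
    Integrable (fun x => ‖dphi A B f x‖ ^ 2) := by
  obtain ⟨C, hC0, hC⟩ := dphi_bd h hf
  have h1 : Integrable (fun x => ∫ y, ‖f y‖ * hB A B (x - y)) :=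
    (conv_int hf.norm (hB_int A B)).integral_prod_left
  refine (h1.const_mul C).mono' ((dphi_cont h hf).norm.pow 2).aestronglyMeasurable
    (Filter.Eventually.of_forall fun x => ?_)
  rw [norm_pow, norm_norm, sq]
  gcongr
  · exact hC x
  · exact dphi_le h hf x

lemma phi_tendsto {A B : ℝ} (h : A ≤ B) {f : E2 → ℝ} (hf : Integrable f) :
    Filter.Tendsto (phi A B f) (Filter.cocompact E2) (nhds 0) := by
  have hk := kap_cont A B
  have e : (0:ℝ) = ∫ y, f y * 0 := by simp
  have : (Filter.cocompact E2).IsCountablyGenerated := by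
    rw [← Metric.cobounded_eq_cocompact, ← comap_norm_atTop]; infer_instance
  rw [e]
  unfold phi
  refine tendsto_integral_filter_of_dominated_convergence (fun y => (B - A) * (1 / (4 * π)) * ‖f y‖)
    ?_ ?_ (hf.norm.const_mul _) ?_
  · exact Filter.Eventually.of_forall fun x => (phi_integrand h hf x).aestronglyMeasurable
  · refine Filter.Eventually.of_forall fun x => Filter.Eventually.of_forall fun y => ?_
    rw [norm_mul, mul_comm]
    gcongr
    exact kap_le' h (sq_nonneg _)
  · refine Filter.Eventually.of_forall fun y => Filter.Tendsto.const_mul _ ?_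
    have h1 : Filter.Tendsto (fun x : E2 => ‖x - y‖) (Filter.cocompact E2) Filter.atTop := by
      refine tendsto_norm_cocompact_atTop.comp ?_
      exact (Homeomorph.subRight y).isClosedEmbedding.tendsto_cocompact
    have h2 : Filter.Tendsto (fun x : E2 => ‖x - y‖ ^ 2 * exp (-B) / 4) (Filter.cocompact E2) Filter.atTop := by
      refine Filter.Tendsto.atTop_div_const (by norm_num) (Filter.Tendsto.atTop_mul_const (exp_pos _) ?_)
      exact (Filter.tendsto_pow_atTop two_ne_zero).comp h1
    have h3 := ((tendsto_exp_neg_atTop_nhds_zero.comp h2).const_mul (1 / (4 * π))).const_mul (B - A)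
    rw [mul_zero, mul_zero] at h3
    refine squeeze_zero (fun x => kap_nonneg h _) (fun x => kap_le h (sq_nonneg _)) h3

lemma dphi_apply {A B : ℝ} (h : A ≤ B) {f : E2 → ℝ} (hf : Integrable f) (x v : E2) :
    dphi A B f x v = -∫ y, f y * mm A B (‖x - y‖ ^ 2) * inner ℝ (x - y) v := by
  obtain ⟨C, hC0, hC⟩ := hB_bd h
  unfold dphi
  rw [ContinuousLinearMap.integral_apply, ← integral_neg]
  · congr 1; ext y
    simp only [smul_apply, innerSL_apply_apply, smul_eq_mul, neg_mul]
  · refine (hf.norm.mul_const C).mono' (dk_meas hf x) (Filter.Eventually.of_forall fun y => 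
      (dk_norm h _ _).trans ?_)
    rw [Real.norm_eq_abs]
    gcongr
    exact hC _

lemma inner_gradient (w : E2 → ℝ) (x v : E2) : inner ℝ v (gradient w x) = fderiv ℝ w x v := by
  rw [real_inner_comm, gradient, InnerProductSpace.toDual_symm_apply]

lemma norm_gradient (w : E2 → ℝ) (x : E2) : ‖gradient w x‖ = ‖fderiv ℝ w x‖ := by
  rw [gradient, LinearIsometryEquiv.norm_map]

lemma energy_id {A B : ℝ} (h : A ≤ B) {f : E2 → ℝ} (hf : Integrable f)
    {w : E2 → ℝ} (hw : ContDiff ℝ 1 w) {M M' : ℝ} (hM : ∀ x, |w x| ≤ M)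
    (hM' : ∀ x, ‖fderiv ℝ w x‖ ≤ M') :
    ∫ x, dphi A B f x (gradient w x) = ∫ y, f y * (Pt A w y - Pt B w y) := by
  have hM0 : 0 ≤ M' := (norm_nonneg _).trans (hM' 0)
  have cd := hw.continuous_fderiv one_ne_zero
  have cm := mm_cont A B
  have hIntg : Integrable (Function.uncurry fun x y : E2 =>
      f y * mm A B (‖x - y‖ ^ 2) * fderiv ℝ w x (x - y)) (volume.prod volume) := by
    refine ((conv_int hf.norm (hB_int A B)).const_mul M').mono' ?_ ?_
    · refine AEStronglyMeasurable.mul (hf.aestronglyMeasurable.comp_snd.mul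
        (Continuous.aestronglyMeasurable (by fun_prop))) (Continuous.aestronglyMeasurable ?_)
      exact Continuous.clm_apply (by fun_prop) (by fun_prop)
    · refine Filter.Eventually.of_forall fun p => ?_
      simp only [Function.uncurry]
      rw [norm_mul, norm_mul, Real.norm_of_nonneg (mm_nonneg h _)]
      have h3 : ‖fderiv ℝ w p.1 (p.1 - p.2)‖ ≤ M' * ‖p.1 - p.2‖ :=
        (ContinuousLinearMap.le_opNorm _ _).trans (by gcongr; exact hM' _)
      have h4 := mm_nonneg h (‖p.1 - p.2‖ ^ 2)
      calc _ ≤ ‖f p.2‖ * mm A B (‖p.1 - p.2‖ ^ 2) * (M' * ‖p.1 - p.2‖) := by gcongr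
        _ = M' * (‖f p.2‖ * (mm A B (‖p.1 - p.2‖ ^ 2) * ‖p.1 - p.2‖)) := by ring
        _ ≤ _ := by gcongr; exact mm_norm_le h _
  simp only [dphi_apply h hf, inner_gradient]
  rw [integral_neg, integral_integral_swap hIntg, ← integral_neg]
  congr 1; ext y
  have := Pt_sub hw hM hM' y h
  rw [← neg_sub (Pt B w y), this, mul_neg, ← integral_const_mul]
  simp only [mul_assoc]

/-- log-sum-exp -/
def th (C τ : ℝ) : ℝ := log (exp C + exp τ)

lemma th_deriv (C τ : ℝ) : HasDerivAt (th C) (exp τ / (exp C + exp τ)) τ := by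
  unfold th
  exact ((hasDerivAt_exp τ).const_add (exp C)).log (by positivity)

lemma th_mono (C : ℝ) {A B : ℝ} (h : A ≤ B) : th C A ≤ th C B := by
  unfold th
  gcongr

lemma th_comm (A B : ℝ) : th A B = th B A := by unfold th; rw [add_comm]

lemma th_self (A : ℝ) : th A A = A + log 2 := by
  unfold th
  rw [← two_mul, log_mul (by norm_num) (exp_pos _).ne', log_exp, add_comm]

lemma th_ge (A B : ℝ) : B ≤ th A B := by
  unfold th
  rw [le_log_iff_exp_le (by positivity)]
  have := exp_pos A; linarith

lemma kap_semigroup {A B : ℝ} (h : A ≤ B) (C : ℝ) (y z : E2) :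
    exp (-C) * ∫ x, gk C (‖x - y‖ ^ 2) * kap A B (‖x - z‖ ^ 2) =
      kap (th C A) (th C B) (‖y - z‖ ^ 2) := by
  have hfin : IsFiniteMeasure (volume.restrict (Set.uIoc A B)) := by
    rw [Set.uIoc_of_le h]; infer_instance
  have hIntg : Integrable (Function.uncurry fun τ x => gk C (‖x - y‖ ^ 2) * gk τ (‖x - z‖ ^ 2))
      ((volume.restrict (Set.uIoc A B)).prod (volume : Measure E2)) := by
    have hb : Integrable (fun x => gk C (‖x - y‖ ^ 2) * (1 / (4 * π))) :=
      ((gk_integrable C).comp_sub_right y).mul_const _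
    refine (hb.comp_snd (volume.restrict (Set.uIoc A B))).mono' ?_ ?_
    · refine Continuous.aestronglyMeasurable ?_
      unfold Function.uncurry gk; fun_prop
    · refine Filter.Eventually.of_forall fun p => ?_
      simp only [Function.uncurry]
      have h1 := gk_pos C (‖p.2 - y‖ ^ 2)
      have h2 := gk_pos p.1 (‖p.2 - z‖ ^ 2)
      rw [Real.norm_of_nonneg (by positivity)]
      gcongr
      exact gk_le _ (sq_nonneg _)
  have e : ∀ x, gk C (‖x - y‖ ^ 2) * kap A B (‖x - z‖ ^ 2) =
      ∫ τ in A..B, gk C (‖x - y‖ ^ 2) * gk τ (‖x - z‖ ^ 2) := fun x => by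
    rw [intervalIntegral.integral_const_mul]; rfl
  simp only [e]
  rw [← intervalIntegral_integral_swap hIntg, ← intervalIntegral.integral_const_mul]
  simp only [gk_conv]
  unfold kap
  rw [← intervalIntegral.integral_comp_mul_deriv (f := th C) (g := fun τ => gk τ (‖y - z‖ ^ 2))
    (fun τ _ => th_deriv C τ) ?_ (gk_cont1 _)]
  · congr 1; ext τ
    simp only [Function.comp, th]
    have : exp (-C) * exp C = 1 := by rw [← exp_add]; simp
    linear_combination (exp τ / (exp C + exp τ) * gk (log (exp C + exp τ)) (‖y - z‖ ^ 2)) * this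
  · exact (Continuous.div (by fun_prop) (by fun_prop) fun τ => by positivity).continuousOn

lemma Pt_phi {A B : ℝ} (h : A ≤ B) (C : ℝ) {f : E2 → ℝ} (hf : Integrable f) (y : E2) :
    Pt C (phi A B f) y = phi (th C A) (th C B) f y := by
  have ck := kap_cont A B
  have cg := gk_cont2 C
  have hIntg : Integrable (Function.uncurry fun x z : E2 =>
      gk C (‖x - y‖ ^ 2) * (f z * kap A B (‖x - z‖ ^ 2))) (volume.prod volume) := by
    refine ((((gk_integrable C).comp_sub_right y).mul_prod hf).norm.mul_const
      ((B - A) * (1 / (4 * π)))).mono' ?_ ?_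
    · refine AEStronglyMeasurable.mul (Continuous.aestronglyMeasurable (by fun_prop))
        (hf.aestronglyMeasurable.comp_snd.mul (Continuous.aestronglyMeasurable (by fun_prop)))
    · refine Filter.Eventually.of_forall fun p => ?_
      simp only [Function.uncurry]
      rw [← mul_assoc, norm_mul]
      gcongr
      exact kap_le' h (sq_nonneg _)
  rw [Pt_eq]
  unfold phi
  have e : ∀ x, gk C (‖x - y‖ ^ 2) * ∫ z, f z * kap A B (‖x - z‖ ^ 2) =
      ∫ z, gk C (‖x - y‖ ^ 2) * (f z * kap A B (‖x - z‖ ^ 2)) :=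
    fun x => (integral_const_mul _ _).symm
  simp only [e]
  rw [integral_integral_swap hIntg, ← integral_const_mul]
  congr 1; ext z
  rw [← kap_semigroup h C y z]
  have : ∀ x, gk C (‖x - y‖ ^ 2) * (f z * kap A B (‖x - z‖ ^ 2)) =
    f z * (gk C (‖x - y‖ ^ 2) * kap A B (‖x - z‖ ^ 2)) := fun x => by ring
  simp only [this]
  rw [integral_const_mul]; ring

/-- the quadratic form -/
def Qf (A B : ℝ) (f : E2 → ℝ) : ℝ := ∫ x, f x * phi A B f x

lemma Qf_prod_int {A B : ℝ} (h : A ≤ B) {f : E2 → ℝ} (hf : Integrable f) :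
    Integrable (fun p : E2 × E2 => f p.1 * (f p.2 * kap A B (‖p.1 - p.2‖ ^ 2))) (volume.prod volume) := by
  have ck := kap_cont A B
  refine ((hf.mul_prod hf).norm.mul_const ((B - A) * (1 / (4 * π)))).mono' ?_ ?_
  · refine hf.aestronglyMeasurable.comp_fst.mul
      (hf.aestronglyMeasurable.comp_snd.mul (Continuous.aestronglyMeasurable (by fun_prop)))
  · refine Filter.Eventually.of_forall fun p => ?_
    rw [← mul_assoc, norm_mul]
    gcongr
    exact kap_le' h (sq_nonneg _)

lemma Qf_eq {A B : ℝ} (h : A ≤ B) {f : E2 → ℝ} (hf : Integrable f) :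
    Qf A B f = ∫ p : E2 × E2, f p.1 * (f p.2 * kap A B (‖p.1 - p.2‖ ^ 2)) ∂(volume.prod volume) := by
  rw [integral_prod _ (Qf_prod_int h hf)]
  simp only [integral_const_mul]
  rfl

lemma Qf_add {A B C : ℝ} (h : A ≤ B) (h2 : B ≤ C) {f : E2 → ℝ} (hf : Integrable f) :
    Qf A B f + Qf B C f = Qf A C f := by
  rw [Qf_eq h hf, Qf_eq h2 hf, Qf_eq (h.trans h2) hf,
    ← integral_add (Qf_prod_int h hf) (Qf_prod_int h2 hf)]
  congr 1; ext p
  have : kap A B (‖p.1 - p.2‖ ^ 2) + kap B C (‖p.1 - p.2‖ ^ 2) = kap A C (‖p.1 - p.2‖ ^ 2) :=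
    intervalIntegral.integral_add_adjacent_intervals ((gk_cont1 _).intervalIntegrable _ _)
      ((gk_cont1 _).intervalIntegrable _ _)
  rw [← this]; ring

lemma phi_int {A B : ℝ} (h : A ≤ B) {f : E2 → ℝ} (hf : Integrable f) :
    Integrable (fun x => f x * phi A B f x) := by
  have := (Qf_prod_int h hf).integral_prod_left
  simp only [integral_const_mul] at this
  exact this

lemma dphi_energy {A B : ℝ} (h : A ≤ B) {f : E2 → ℝ} (hf : Integrable f) :
    ∫ x, ‖dphi A B f x‖ ^ 2 =
      2 * Qf (A + log 2) (th A B) f - Qf (A + log 2) (B + log 2) f := by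
  obtain ⟨C, hC0, hC⟩ := dphi_bd h hf
  have hfd : ∀ x, fderiv ℝ (phi A B f) x = dphi A B f x := fun x => (phi_hasFDeriv h hf x).fderiv
  have e := energy_id h hf (phi_contDiff h hf) (phi_bd h hf) (M' := C) (fun x => by rw [hfd]; exact hC x)
  have e1 : ∀ x, dphi A B f x (gradient (phi A B f) x) = ‖dphi A B f x‖ ^ 2 := fun x => by
    rw [← hfd, ← inner_gradient, real_inner_self_eq_norm_sq, norm_gradient]
  simp only [e1, Pt_phi h _ hf, mul_sub] at e
  have t1 : A + log 2 ≤ th A B := by rw [← th_self]; exact th_mono A h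
  have t2 : th A B ≤ B + log 2 := by rw [← th_self, th_comm A B]; exact th_mono B h
  rw [e, th_self, th_self, th_comm B A, integral_sub (phi_int t1 hf) (phi_int t2 hf)]
  have := Qf_add t1 t2 hf
  have u1 : ∫ x, f x * phi (A + log 2) (th A B) f x = Qf (A + log 2) (th A B) f := rfl
  have u2 : ∫ x, f x * phi (th A B) (B + log 2) f x = Qf (th A B) (B + log 2) f := rfl
  rw [u1, u2]; linarith

lemma ae_ne_prod : ∀ᵐ p ∂((volume : Measure E2).prod (volume : Measure E2)), p.1 - p.2 ≠ 0 :=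
  (quasiMeasurePreserving_sub volume volume).ae ae_ne_zero_E2

lemma Qf_tendsto {f : E2 → ℝ} (hf : Integrable f) (h0 : ∫ x, f x = 0)
    (hlog : Integrable (fun p : E2 × E2 => f p.1 * (f p.2 * log ‖p.1 - p.2‖)) (volume.prod volume))
    {A B : ℕ → ℝ} (h : ∀ n, A n ≤ B n) (hA : Filter.Tendsto A Filter.atTop Filter.atBot)
    (hB : Filter.Tendsto B Filter.atTop Filter.atTop) :
    Filter.Tendsto (fun n => Qf (A n) (B n) f) Filter.atTop (nhds (∫ x, f x * invLap2 f x)) := by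
  have e1 : ∀ n, Qf (A n) (B n) f = ∫ p : E2 × E2, f p.1 * (f p.2 *
      (kap (A n) (B n) (‖p.1 - p.2‖ ^ 2) - kap (A n) (B n) 1)) ∂(volume.prod volume) := fun n => by
    have : ∀ p : E2 × E2, f p.1 * (f p.2 * (kap (A n) (B n) (‖p.1 - p.2‖ ^ 2) - kap (A n) (B n) 1))
        = f p.1 * (f p.2 * kap (A n) (B n) (‖p.1 - p.2‖ ^ 2)) - f p.1 * f p.2 * kap (A n) (B n) 1 :=
      fun p => by ring
    simp only [this]
    rw [integral_sub (Qf_prod_int (h n) hf) ((hf.mul_prod hf).mul_const _), ← Qf_eq (h n) hf,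
      integral_mul_const, integral_prod_mul, h0]
    simp
  have e2 : ∫ x, f x * invLap2 f x = ∫ p : E2 × E2, f p.1 * (f p.2 *
      (-(1 / (2 * π)) * log ‖p.1 - p.2‖)) ∂(volume.prod volume) := by
    have h3 : Integrable (fun p : E2 × E2 => f p.1 * (f p.2 *
      (-(1 / (2 * π)) * log ‖p.1 - p.2‖))) (volume.prod volume) := by
      refine (hlog.const_mul (-(1 / (2 * π)))).congr (Filter.Eventually.of_forall fun p => ?_)
      simp only; ring
    rw [integral_prod _ h3]
    congr 1; ext x
    change f x * invLap2 f x = ∫ y, f x * (f y * (-(1 / (2 * π)) * log ‖x - y‖))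
    rw [integral_const_mul, invLap2, ← integral_const_mul]
    congr 2; ext y; ring
  simp only [e1]
  rw [e2]
  refine tendsto_integral_of_dominated_convergence
    (fun p => 1 / (2 * π) * ‖f p.1 * (f p.2 * log ‖p.1 - p.2‖)‖) ?_ (hlog.norm.const_mul _) ?_ ?_
  · intro n
    have ck := kap_cont (A n) (B n)
    exact hf.aestronglyMeasurable.comp_fst.mul
      (hf.aestronglyMeasurable.comp_snd.mul (Continuous.aestronglyMeasurable (by fun_prop)))
  · intro n
    filter_upwards [ae_ne_prod] with p hp
    have := kap_log_bd (h n) (norm_pos_iff.2 hp)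
    simp only [norm_mul, Real.norm_eq_abs]
    calc _ ≤ |f p.1| * (|f p.2| * (1 / (2 * π) * |log ‖p.1 - p.2‖|)) := by gcongr
      _ = _ := by ring
  · filter_upwards [ae_ne_prod] with p hp
    exact ((kap_log_tendsto h hA hB (norm_pos_iff.2 hp)).const_mul _).const_mul _

/-- truncated power kernel -/
def Gk (β : ℝ) (z : E2) : ℝ := (Set.Ioo (0 : ℝ) 1).indicator (fun r => r ^ (β - 2)) ‖z‖

lemma Gk_nonneg (β : ℝ) (z : E2) : 0 ≤ Gk β z :=
  Set.indicator_nonneg (fun r hr => rpow_nonneg hr.1.le _) _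

lemma Gk_int {β : ℝ} (hb : 0 < β) : Integrable (Gk β) := by
  unfold Gk
  rw [radial_integrable (F := (Set.Ioo (0 : ℝ) 1).indicator (fun r => r ^ (β - 2)))]
  have h : IntegrableOn (fun r : ℝ => r ^ (β - 1)) (Set.Ioo 0 1) :=
    (intervalIntegral.integrableOn_Ioo_rpow_iff one_pos).2 (by linarith)
  have h2 : Integrable ((Set.Ioo (0 : ℝ) 1).indicator fun r : ℝ => r ^ (β - 1)) :=
    h.integrable_indicator measurableSet_Ioo
  refine h2.integrableOn.congr_fun (fun r hr => ?_) measurableSet_Ioi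
  by_cases hr1 : r ∈ Set.Ioo (0 : ℝ) 1
  · simp only [Set.indicator_of_mem hr1]
    rw [show β - 1 = 1 + (β - 2) by ring, rpow_add hr1.1, rpow_one]
  · simp [Set.indicator_of_notMem hr1]

lemma Gk_bound {β r s : ℝ} (hb : 0 < β) (hb1 : β ≤ 1) (hr : 0 < r) (hs : 0 < s) (hr1 : r < 1) :
    s ^ (2 * β - 2) * r ^ (-β) ≤ (Set.Ioo (0 : ℝ) 1).indicator (fun r => r ^ (β - 2)) r +
      (Set.Ioo (0 : ℝ) 1).indicator (fun r => r ^ (β - 2)) s := by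
  have e : ∀ t : ℝ, 0 < t → t ^ (β - 2) = t ^ (2 * β - 2) * t ^ (-β) := fun t ht => by
    rw [← rpow_add ht]; congr 1; ring
  rcases le_total r s with h | h
  · have : 0 ≤ (Set.Ioo (0 : ℝ) 1).indicator (fun r => r ^ (β - 2)) s :=
      Set.indicator_nonneg (fun r hr => rpow_nonneg hr.1.le _) _
    rw [Set.indicator_of_mem (show r ∈ Set.Ioo (0 : ℝ) 1 from ⟨hr, hr1⟩), e r hr]
    have h2 : s ^ (2 * β - 2) ≤ r ^ (2 * β - 2) := rpow_le_rpow_of_nonpos hr h (by linarith)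
    have := mul_le_mul_of_nonneg_right h2 (rpow_nonneg hr.le (-β))
    linarith
  · have : 0 ≤ (Set.Ioo (0 : ℝ) 1).indicator (fun r => r ^ (β - 2)) r :=
      Set.indicator_nonneg (fun r hr => rpow_nonneg hr.1.le _) _
    rw [Set.indicator_of_mem (show s ∈ Set.Ioo (0 : ℝ) 1 from ⟨hs, h.trans_lt hr1⟩), e s hs]
    have h2 : r ^ (-β) ≤ s ^ (-β) := rpow_le_rpow_of_nonpos hs h (by linarith)
    have := mul_le_mul_of_nonneg_left h2 (rpow_nonneg hs.le (2 * β - 2))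
    linarith

lemma mu_le {α : ℝ} (h1 : -1 < α) (x : E2) :
    muAlpha α x ≤ (1 + α) / π * ‖x‖ ^ (2 * (1 + α) - 2) := by
  unfold muAlpha
  have hb : 0 < 1 + α := by linarith
  have : (1 : ℝ) ≤ (1 + ‖x‖ ^ (2 * (1 + α))) ^ 2 := by
    have := rpow_nonneg (norm_nonneg x) (2 * (1 + α)); nlinarith
  have e : 2 * (1 + α) - 2 = 2 * α := by ring
  rw [e]
  exact div_le_self (by positivity) this

lemma mu_log_bound {α : ℝ} (h1 : -1 < α) (h2 : α ≤ 0) {x y : E2} (hy : y ≠ 0) (hxy : x - y ≠ 0) :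
    muAlpha α y * |log ‖x - y‖| ≤ (1 / π) * (Gk (1 + α) (x - y) + Gk (1 + α) y)
      + 1 / (1 + α) * (‖x‖ ^ (1 + α) * muAlpha α y + ‖y‖ ^ (1 + α) * muAlpha α y) := by
  have hb : 0 < 1 + α := by linarith
  have hr := norm_pos_iff.2 hxy
  have hs := norm_pos_iff.2 hy
  have hm := mu_nonneg h1 y
  rcases lt_or_ge ‖x - y‖ 1 with hr1 | hr1
  · have k1 : |log ‖x - y‖| ≤ ‖x - y‖ ^ (-(1 + α)) / (1 + α) := by
      rw [abs_of_nonpos (log_nonpos hr.le hr1.le), ← log_inv]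
      have := log_le_rpow_div (x := ‖x - y‖⁻¹) (by positivity) hb
      rwa [inv_rpow hr.le, ← rpow_neg hr.le] at this
    have k2 := Gk_bound hb (by linarith) hr hs hr1
    have k3 : 0 ≤ 1 / (1 + α) * (‖x‖ ^ (1 + α) * muAlpha α y + ‖y‖ ^ (1 + α) * muAlpha α y) := by
      positivity
    have : muAlpha α y * |log ‖x - y‖| ≤ (1 / π) * (Gk (1 + α) (x - y) + Gk (1 + α) y) := by
      calc _ ≤ ((1 + α) / π * ‖y‖ ^ (2 * (1 + α) - 2)) * (‖x - y‖ ^ (-(1 + α)) / (1 + α)) := by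
            gcongr
            exact mu_le h1 y
        _ = 1 / π * (‖y‖ ^ (2 * (1 + α) - 2) * ‖x - y‖ ^ (-(1 + α))) := by field_simp
        _ ≤ _ := by gcongr; exact k2
    linarith
  · have k1 : |log ‖x - y‖| ≤ ‖x - y‖ ^ (1 + α) / (1 + α) := by
      rw [abs_of_nonneg (log_nonneg hr1)]
      exact log_le_rpow_div hr.le hb
    have k2 : ‖x - y‖ ^ (1 + α) ≤ ‖x‖ ^ (1 + α) + ‖y‖ ^ (1 + α) :=
      (rpow_le_rpow hr.le (norm_sub_le x y) hb.le).trans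
        (rpow_add_le_add_rpow (norm_nonneg _) (norm_nonneg _) hb.le (by linarith))
    have k3 : 0 ≤ (1 / π) * (Gk (1 + α) (x - y) + Gk (1 + α) y) := by
      have := Gk_nonneg (1 + α) (x - y); have := Gk_nonneg (1 + α) y; positivity
    have : muAlpha α y * |log ‖x - y‖| ≤
        1 / (1 + α) * (‖x‖ ^ (1 + α) * muAlpha α y + ‖y‖ ^ (1 + α) * muAlpha α y) := by
      calc _ ≤ muAlpha α y * ((‖x‖ ^ (1 + α) + ‖y‖ ^ (1 + α)) / (1 + α)) := by
            gcongr; exact k1.trans (by gcongr)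
        _ = _ := by ring
    linarith

lemma mu_log_int {α : ℝ} (h1 : -1 < α) (h2 : α ≤ 0) {f : E2 → ℝ} (hf : Integrable f) {C : ℝ}
    (hC : ∀ x, |f x| ≤ C * muAlpha α x) :
    Integrable (fun p : E2 × E2 => f p.1 * (f p.2 * log ‖p.1 - p.2‖)) (volume.prod volume) := by
  have hb : 0 < 1 + α := by linarith
  have hmu := mu_int h1 h2
  have hmn := mu_int_norm h1 h2
  have hG := Gk_int hb
  have g1 : Integrable (fun p : E2 × E2 => muAlpha α p.1 * Gk (1 + α) (p.1 - p.2))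
      (volume.prod volume) := by
    have := (hmu.convolution_integrand (ContinuousLinearMap.mul ℝ ℝ) hG).swap
    refine this.congr (Filter.Eventually.of_forall fun p => ?_)
    simp only [Function.comp, Prod.swap, ContinuousLinearMap.mul_apply', Gk, norm_sub_rev p.2 p.1]
  have g2 := hmu.mul_prod hG
  have g3 := hmn.mul_prod hmu
  have g4 := hmu.mul_prod hmn
  have hall := ((iadd g1 g2).const_mul (1 / π)).add ((iadd g3 g4).const_mul (1 / (1 + α)))
  refine (hall.const_mul (C * C)).mono' ?_ ?_
  · refine hf.aestronglyMeasurable.comp_fst.mul (hf.aestronglyMeasurable.comp_snd.mul ?_)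
    exact (measurable_log.comp (by fun_prop)).aestronglyMeasurable
  · have a2 : ∀ᵐ p ∂((volume : Measure E2).prod (volume : Measure E2)), p.2 ≠ 0 :=
      Measure.quasiMeasurePreserving_snd.ae ae_ne_zero_E2
    filter_upwards [ae_ne_prod, a2] with p hp hp2
    have k := mu_log_bound h1 h2 hp2 hp
    have m1 := mu_nonneg h1 p.1
    have m2 := mu_nonneg h1 p.2
    simp only [norm_mul, Real.norm_eq_abs, Pi.add_apply]
    have c1 : 0 ≤ C * muAlpha α p.1 := (abs_nonneg _).trans (hC _)
    have c2 : 0 ≤ C * muAlpha α p.2 := (abs_nonneg _).trans (hC _)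
    calc |f p.1| * (|f p.2| * |log ‖p.1 - p.2‖|)
        ≤ (C * muAlpha α p.1) * ((C * muAlpha α p.2) * |log ‖p.1 - p.2‖|) := by
          gcongr
          · exact hC _
          · exact hC _
      _ = (C * C) * (muAlpha α p.1 * (muAlpha α p.2 * |log ‖p.1 - p.2‖|)) := by ring
      _ ≤ (C * C) * (muAlpha α p.1 * ((1 / π) * (Gk (1 + α) (p.1 - p.2) + Gk (1 + α) p.2)
      + 1 / (1 + α) * (‖p.1‖ ^ (1 + α) * muAlpha α p.2 + ‖p.2‖ ^ (1 + α) * muAlpha α p.2))) := by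
          have := mul_self_nonneg C
          gcongr
      _ = _ := by ring

/-- cutoff slope -/
def gS (n : ℕ) (r : ℝ) : ℝ := min 1 (max 0 (n * |r| - 1))

lemma gS_cont (n : ℕ) : Continuous (gS n) := by unfold gS; fun_prop

lemma gS_nonneg (n : ℕ) (r : ℝ) : 0 ≤ gS n r := le_min zero_le_one (le_max_left _ _)

lemma gS_le (n : ℕ) (r : ℝ) : gS n r ≤ 1 := min_le_left _ _

/-- soft threshold -/
def SS (n : ℕ) (s : ℝ) : ℝ := ∫ r in (0 : ℝ)..s, gS n r

lemma SS_deriv (n : ℕ) (s : ℝ) : HasDerivAt (SS n) (gS n s) s :=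
  (gS_cont n).integral_hasStrictDerivAt 0 s |>.hasDerivAt

lemma SS_abs (n : ℕ) (s : ℝ) : |SS n s| ≤ |s| := by
  have := intervalIntegral.norm_integral_le_of_norm_le_const (a := 0) (b := s) (C := 1) (f := gS n)
    (fun x _ => by rw [Real.norm_of_nonneg (gS_nonneg n x)]; exact gS_le n x)
  simpa [SS] using this

lemma SS_zero (n : ℕ) (s : ℝ) (h : n * |s| ≤ 1) : SS n s = 0 := by
  unfold SS
  have : ∀ r ∈ Set.uIcc 0 s, gS n r = (fun _ => (0 : ℝ)) r := fun r hr => by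
    have hr' : |r| ≤ |s| := by
      have := Set.abs_sub_left_of_mem_uIcc hr
      simpa using this
    have : n * |r| - 1 ≤ 0 := by
      have := mul_le_mul_of_nonneg_left hr' (Nat.cast_nonneg (α := ℝ) n); linarith
    simp [gS, max_eq_left this]
  rw [intervalIntegral.integral_congr this]
  simp

lemma SS_tendsto (s : ℝ) : Filter.Tendsto (fun n => SS n s) Filter.atTop (nhds s) := by
  have e : s = ∫ _ in (0 : ℝ)..s, (1 : ℝ) := by simp
  have key : Filter.Tendsto (fun n => SS n s) Filter.atTop (nhds (∫ _ in (0 : ℝ)..s, (1 : ℝ))) := by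
    unfold SS
    refine intervalIntegral.tendsto_integral_filter_of_dominated_convergence (fun _ => 1) ?_ ?_ ?_ ?_
    · exact Filter.Eventually.of_forall fun n => (gS_cont n).aestronglyMeasurable
    · refine Filter.Eventually.of_forall fun n => Filter.Eventually.of_forall fun x _ => ?_
      rw [Real.norm_of_nonneg (gS_nonneg n x)]; exact gS_le n x
    · simp
    · have : ∀ᵐ x : ℝ, x ≠ 0 := by simp [ae_iff]
      filter_upwards [this] with x hx _
      refine tendsto_const_nhds.congr' ?_
      have ht : Filter.Tendsto (fun n : ℕ => (n : ℝ) * |x|) Filter.atTop Filter.atTop :=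
        tendsto_natCast_atTop_atTop.atTop_mul_const (abs_pos.2 hx)
      filter_upwards [ht.eventually_ge_atTop 2] with n hn
      have : (1 : ℝ) ≤ n * |x| - 1 := by linarith
      unfold gS
      rw [max_eq_right (by linarith), min_eq_left this]
  rwa [← e] at key

lemma onofri_ext {α : ℝ} (h1 : -1 < α) (h2 : α ≤ 0) {ψ : E2 → ℝ} (hψ : ContDiff ℝ 1 ψ)
    (h0 : Filter.Tendsto ψ (Filter.cocompact E2) (nhds 0)) {M : ℝ} (hM : ∀ x, |ψ x| ≤ M)
    (hD : Integrable (fun x => ‖fderiv ℝ ψ x‖ ^ 2)) :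
    log (∫ x, exp (ψ x) * muAlpha α x) ≤
      1 / (16 * π * (1 + α)) * (∫ x, ‖fderiv ℝ ψ x‖ ^ 2) + ∫ x, ψ x * muAlpha α x := by
  have hb : 0 < 1 + α := by linarith
  have hmu := mu_int h1 h2
  have cψ := hψ.continuous
  have hd : ∀ n x, HasFDerivAt (fun x => SS n (ψ x)) (gS n (ψ x) • fderiv ℝ ψ x) x := fun n x =>
    (SS_deriv n (ψ x)).comp_hasFDerivAt x ((hψ.differentiable one_ne_zero) x).hasFDerivAt
  have hfd : ∀ n, fderiv ℝ (fun x => SS n (ψ x)) = fun x => gS n (ψ x) • fderiv ℝ ψ x :=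
    fun n => by ext1 x; exact (hd n x).fderiv
  have hC1 : ∀ n, ContDiff ℝ 1 (fun x => SS n (ψ x)) := fun n => by
    rw [contDiff_one_iff_fderiv]
    refine ⟨fun X => (hd n X).differentiableAt, ?_⟩
    rw [hfd]
    exact ((gS_cont n).comp cψ).smul (hψ.continuous_fderiv one_ne_zero)
  have hcs : ∀ n, HasCompactSupport (fun x => SS n (ψ x)) := fun n => by
    rw [hasCompactSupport_iff_eventuallyEq, Filter.coclosedCompact_eq_cocompact]
    have : Filter.Tendsto (fun x => n * |ψ x|) (Filter.cocompact E2) (nhds (n * |(0 : ℝ)|)) :=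
      h0.abs.const_mul _
    rw [abs_zero, mul_zero] at this
    filter_upwards [this.eventually (ge_mem_nhds one_pos)] with x hx
    exact SS_zero n _ hx
  have hSb : ∀ n x, |SS n (ψ x)| ≤ M := fun n x => (SS_abs n _).trans (hM x)
  have key : ∀ n, log (∫ x, exp (SS n (ψ x)) * muAlpha α x) ≤
      1 / (16 * π * (1 + α)) * (∫ x, ‖fderiv ℝ ψ x‖ ^ 2) + ∫ x, SS n (ψ x) * muAlpha α x := fun n => by
    refine (onofri_alpha h1 h2 (hC1 n) (hcs n)).trans ?_
    gcongr 1 / (16 * π * (1 + α)) * ?_ + _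
    rw [hfd]
    refine integral_mono_of_nonneg (Filter.Eventually.of_forall fun x => by positivity) hD
      (Filter.Eventually.of_forall fun x => ?_)
    simp only
    rw [norm_smul, mul_pow, Real.norm_of_nonneg (gS_nonneg _ _)]
    have a1 := gS_nonneg n (ψ x)
    have a2 := gS_le n (ψ x)
    have : gS n (ψ x) ^ 2 ≤ 1 := by nlinarith
    exact mul_le_of_le_one_left (by positivity) this
  have t1 : Filter.Tendsto (fun n => ∫ x, exp (SS n (ψ x)) * muAlpha α x) Filter.atTop
      (nhds (∫ x, exp (ψ x) * muAlpha α x)) := by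
    refine tendsto_integral_of_dominated_convergence (fun x => exp M * muAlpha α x) ?_
      (hmu.const_mul _) ?_ ?_
    · intro n
      exact ((continuous_exp.comp (hC1 n).continuous).aestronglyMeasurable).mul
        hmu.aestronglyMeasurable
    · intro n
      refine Filter.Eventually.of_forall fun x => ?_
      have := mu_nonneg h1 x
      rw [Real.norm_of_nonneg (by positivity)]
      gcongr
      exact (le_abs_self _).trans (hSb n x)
    · exact Filter.Eventually.of_forall fun x =>
        ((continuous_exp.tendsto _).comp (SS_tendsto (ψ x))).mul_const _
  have t2 : Filter.Tendsto (fun n => ∫ x, SS n (ψ x) * muAlpha α x) Filter.atTop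
      (nhds (∫ x, ψ x * muAlpha α x)) := by
    refine tendsto_integral_of_dominated_convergence (fun x => M * muAlpha α x) ?_
      (hmu.const_mul _) ?_ ?_
    · intro n
      exact ((hC1 n).continuous.aestronglyMeasurable).mul hmu.aestronglyMeasurable
    · intro n
      refine Filter.Eventually.of_forall fun x => ?_
      have := mu_nonneg h1 x
      rw [norm_mul, Real.norm_of_nonneg this, Real.norm_eq_abs]
      gcongr
      exact hSb n x
    · exact Filter.Eventually.of_forall fun x => (SS_tendsto (ψ x)).mul_const _
  have hpos : 0 < ∫ x, exp (ψ x) * muAlpha α x := by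
    have hi : Integrable (fun x => exp (-M) * muAlpha α x) := hmu.const_mul _
    have hi2 : Integrable (fun x => exp (ψ x) * muAlpha α x) := by
      refine (hmu.const_mul (exp M)).mono' ((continuous_exp.comp cψ).aestronglyMeasurable.mul
        hmu.aestronglyMeasurable) (Filter.Eventually.of_forall fun x => ?_)
      have := mu_nonneg h1 x
      rw [Real.norm_of_nonneg (by positivity)]
      gcongr
      exact (le_abs_self _).trans (hM x)
    have := integral_mono hi hi2 (fun x => by
      have := mu_nonneg h1 x
      simp only
      gcongr
      exact (abs_le.1 (hM x)).1)
    rw [integral_const_mul, mu_integral h1 h2, mul_one] at this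
    exact (exp_pos _).trans_le this
  refine le_of_tendsto_of_tendsto' (((continuousAt_log hpos.ne').tendsto).comp t1)
    (t2.const_add _) key

lemma dphi_energy_tendsto {f : E2 → ℝ} (hf : Integrable f) (h0 : ∫ x, f x = 0)
    (hlog : Integrable (fun p : E2 × E2 => f p.1 * (f p.2 * log ‖p.1 - p.2‖)) (volume.prod volume)) :
    Filter.Tendsto (fun n : ℕ => ∫ x, ‖dphi (-(n : ℝ)) n f x‖ ^ 2) Filter.atTop
      (nhds (∫ x, f x * invLap2 f x)) := by
  have hn : ∀ n : ℕ, -(n : ℝ) ≤ n := fun n => by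
    have : (0 : ℝ) ≤ n := Nat.cast_nonneg n
    linarith
  have tN : Filter.Tendsto (fun n : ℕ => (n : ℝ)) Filter.atTop Filter.atTop :=
    tendsto_natCast_atTop_atTop
  have tA : Filter.Tendsto (fun n : ℕ => -(n : ℝ) + log 2) Filter.atTop Filter.atBot :=
    Filter.tendsto_atBot_add_const_right _ _ (Filter.tendsto_neg_atTop_atBot.comp tN)
  have q1 := Qf_tendsto hf h0 hlog (A := fun n : ℕ => -(n : ℝ) + log 2)
    (B := fun n : ℕ => th (-(n : ℝ)) n) (fun n => by rw [← th_self]; exact th_mono _ (hn n)) tA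
    (Filter.tendsto_atTop_mono (fun n => th_ge _ _) tN)
  have q2 := Qf_tendsto hf h0 hlog (A := fun n : ℕ => -(n : ℝ) + log 2)
    (B := fun n : ℕ => (n : ℝ) + log 2) (fun n => by have := hn n; linarith) tA
    (Filter.tendsto_atTop_add_const_right _ _ tN)
  have := (q1.const_mul 2).sub q2
  rw [show 2 * (∫ x, f x * invLap2 f x) - ∫ x, f x * invLap2 f x = ∫ x, f x * invLap2 f x by ring]
    at this
  refine this.congr fun n => ?_
  rw [dphi_energy (hn n) hf]

lemma Pt_aesm {w : E2 → ℝ} (hw : Continuous w) (A : ℝ) : AEStronglyMeasurable (fun y => Pt A w y) := by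
  unfold Pt
  have cg := gk_cont2 0
  have : Continuous (fun p : E2 × E2 => gk 0 (‖p.2‖ ^ 2) * w (p.1 + exp (A / 2) • p.2)) := by fun_prop
  exact this.stronglyMeasurable.integral_prod_right.aestronglyMeasurable

/-- duality upper bound -/
lemma upper_dual {f u : E2 → ℝ} (hf : Integrable f) (h0 : ∫ x, f x = 0)
    (hlog : Integrable (fun p : E2 × E2 => f p.1 * (f p.2 * log ‖p.1 - p.2‖)) (volume.prod volume))
    (hu : ContDiff ℝ 1 u) (hc : HasCompactSupport u) {c : ℝ} (hcp : 0 < c) :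
    ∫ x, f x * u x ≤ c * (∫ x, f x * invLap2 f x) + 1 / (4 * c) * ∫ x, ‖gradient u x‖ ^ 2 := by
  have hn : ∀ n : ℕ, -(n : ℝ) ≤ n := fun n => by
    have : (0 : ℝ) ≤ n := Nat.cast_nonneg n
    linarith
  have tN : Filter.Tendsto (fun n : ℕ => (n : ℝ)) Filter.atTop Filter.atTop :=
    tendsto_natCast_atTop_atTop
  have tA : Filter.Tendsto (fun n : ℕ => -(n : ℝ)) Filter.atTop Filter.atBot :=
    Filter.tendsto_neg_atTop_atBot.comp tN
  have cu := hu.continuous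
  have cdu := hu.continuous_fderiv one_ne_zero
  obtain ⟨M, hM⟩ := cu.bounded_above_of_compact_support hc
  obtain ⟨M', hM'⟩ := cdu.bounded_above_of_compact_support (hc.fderiv ℝ)
  have hui : Integrable u := cu.integrable_of_hasCompactSupport hc
  have hM2 : ∀ x, |u x| ≤ M := hM
  have cg : Continuous (fun x => ‖gradient u x‖ ^ 2) := by
    simp only [norm_gradient]; fun_prop
  have hgi : Integrable (fun x => ‖gradient u x‖ ^ 2) := by
    refine cg.integrable_of_hasCompactSupport ?_
    have : HasCompactSupport (fun x => ‖fderiv ℝ u x‖ ^ 2) :=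
      (hc.fderiv ℝ).comp_left (g := fun L : E2 →L[ℝ] ℝ => ‖L‖ ^ 2) (by simp)
    simpa only [norm_gradient] using this
  have key : ∀ n : ℕ, ∫ y, f y * (Pt (-(n : ℝ)) u y - Pt n u y) ≤
      c * (∫ x, ‖dphi (-(n : ℝ)) n f x‖ ^ 2) + 1 / (4 * c) * ∫ x, ‖gradient u x‖ ^ 2 := fun n => by
    rw [← energy_id (hn n) hf hu hM2 hM', ← integral_const_mul, ← integral_const_mul,
      ← integral_add ((dphi_sq_int (hn n) hf).const_mul _) (hgi.const_mul _)]
    have hle : ∀ x, |dphi (-(n : ℝ)) n f x (gradient u x)| ≤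
        c * ‖dphi (-(n : ℝ)) n f x‖ ^ 2 + 1 / (4 * c) * ‖gradient u x‖ ^ 2 := fun x => by
      have a := (dphi (-(n : ℝ)) n f x).le_opNorm (gradient u x)
      rw [Real.norm_eq_abs] at a
      refine a.trans ?_
      generalize ‖dphi (-(n : ℝ)) n f x‖ = p
      generalize ‖gradient u x‖ = q
      have : c * p ^ 2 + 1 / (4 * c) * q ^ 2 - p * q = c * (p - q / (2 * c)) ^ 2 := by
        field_simp; ring
      have h2 : 0 ≤ c * (p - q / (2 * c)) ^ 2 := by positivity
      linarith
    have hI : Integrable (fun x => c * ‖dphi (-(n : ℝ)) n f x‖ ^ 2 + 1 / (4 * c) * ‖gradient u x‖ ^ 2) :=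
      ((dphi_sq_int (hn n) hf).const_mul _).add (hgi.const_mul _)
    refine (le_abs_self _).trans ?_
    rw [← Real.norm_eq_abs]
    exact norm_integral_le_of_norm_le hI (Filter.Eventually.of_forall hle)
  have t1 : Filter.Tendsto (fun n : ℕ => ∫ y, f y * (Pt (-(n : ℝ)) u y - Pt n u y)) Filter.atTop
      (nhds (∫ x, f x * u x)) := by
    refine tendsto_integral_of_dominated_convergence (fun y => ‖f y‖ * (M + M)) ?_
      (hf.norm.mul_const _) ?_ ?_
    · intro n
      refine hf.aestronglyMeasurable.mul ?_
      refine AEStronglyMeasurable.sub ?_ ?_ <;>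
      · exact Pt_aesm cu _
    · intro n
      refine Filter.Eventually.of_forall fun y => ?_
      rw [norm_mul]
      gcongr
      exact (norm_sub_le _ _).trans (add_le_add (Pt_bound hM2 y _) (Pt_bound hM2 y _))
    · refine Filter.Eventually.of_forall fun y => ?_
      have := ((Pt_tendsto_small cu hM2 y tA).sub (Pt_tendsto_large hui y tN)).const_mul (f y)
      simpa using this
  exact le_of_tendsto_of_tendsto' t1
    (((dphi_energy_tendsto hf h0 hlog).const_mul c).add_const _) key

lemma exp_mu_int {α : ℝ} (h1 : -1 < α) (h2 : α ≤ 0) {ψ : E2 → ℝ} (cψ : Continuous ψ) {M : ℝ}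
    (hM : ∀ x, |ψ x| ≤ M) : Integrable (fun x => exp (ψ x) * muAlpha α x) := by
  have hmu := mu_int h1 h2
  refine (hmu.const_mul (exp M)).mono' ((continuous_exp.comp cψ).aestronglyMeasurable.mul
    hmu.aestronglyMeasurable) (Filter.Eventually.of_forall fun x => ?_)
  have := mu_nonneg h1 x
  rw [Real.norm_of_nonneg (by positivity)]
  gcongr
  exact (le_abs_self _).trans (hM x)

lemma exp_mu_pos {α : ℝ} (h1 : -1 < α) (h2 : α ≤ 0) {ψ : E2 → ℝ} (cψ : Continuous ψ) {M : ℝ}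
    (hM : ∀ x, |ψ x| ≤ M) : 0 < ∫ x, exp (ψ x) * muAlpha α x := by
  have := integral_mono ((mu_int h1 h2).const_mul (exp (-M))) (exp_mu_int h1 h2 cψ hM) (fun x => by
    have := mu_nonneg h1 x
    simp only
    gcongr
    exact (abs_le.1 (hM x)).1)
  rw [integral_const_mul, mu_integral h1 h2, mul_one] at this
  exact (exp_pos _).trans_le this

/-- Gibbs variational principle -/
lemma gibbs {α : ℝ} (h1 : -1 < α) (h2 : α ≤ 0) {u ψ : E2 → ℝ} (cu : Continuous u)
    (cψ : Continuous ψ) {M M' : ℝ} (hM : ∀ x, |u x| ≤ M) (hM' : ∀ x, |ψ x| ≤ M')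
    {v : E2 → ℝ} {Z : ℝ} (hZ : Z = ∫ x, exp (u x) * muAlpha α x)
    (hv : v = fun x => exp (u x) * muAlpha α x / Z) :
    (∫ x, v x * ψ x) - log (∫ x, exp (ψ x) * muAlpha α x) ≤ (∫ x, v x * u x) - log Z := by
  have hZp : 0 < Z := hZ ▸ exp_mu_pos h1 h2 cu hM
  set W := ∫ x, exp (ψ x) * muAlpha α x with hW
  have hWp : 0 < W := exp_mu_pos h1 h2 cψ hM'
  have hvi : Integrable v := by rw [hv]; exact (exp_mu_int h1 h2 cu hM).div_const _
  have hv1 : ∫ x, v x = 1 := by rw [hv, integral_div, ← hZ, div_self hZp.ne']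
  have i1 : Integrable (fun x => v x * ψ x) :=
    hvi.mul_bdd cψ.aestronglyMeasurable (Filter.Eventually.of_forall hM')
  have i2 : Integrable (fun x => v x * u x) :=
    hvi.mul_bdd cu.aestronglyMeasurable (Filter.Eventually.of_forall hM)
  have i3 : Integrable (fun x => exp (ψ x) * muAlpha α x / W) :=
    (exp_mu_int h1 h2 cψ hM').div_const _
  have hle : ∀ x, v x * ψ x - v x * u x + v x * (log Z - log W + 1) ≤
      exp (ψ x) * muAlpha α x / W := fun x => by
    have e : exp (ψ x) * muAlpha α x / W = v x * exp (ψ x - u x + (log Z - log W)) := by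
      rw [hv, exp_add, exp_sub, exp_sub, exp_log hZp, exp_log hWp]
      have := (exp_pos (u x)).ne'
      field_simp
    rw [e]
    have a := add_one_le_exp (ψ x - u x + (log Z - log W))
    have : 0 ≤ v x := by
      rw [hv]; have := mu_nonneg h1 x; positivity
    have := mul_le_mul_of_nonneg_left a this
    linarith
  have := integral_mono ((i1.sub i2).add (hvi.mul_const (log Z - log W + 1))) i3 hle
  have s1 : ∫ x, ((fun x => v x * ψ x) - (fun x => v x * u x) +
      fun x => v x * (log Z - log W + 1)) x = (∫ x, v x * ψ x) - (∫ x, v x * u x) +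
      (log Z - log W + 1) := by
    rw [integral_add' (i1.sub i2) (hvi.mul_const _), integral_sub' i1 i2, integral_mul_const, hv1,
      one_mul]
  rw [s1, integral_div, ← hW, div_self hWp.ne'] at this
  linarith

/-- lower bound by duality -/
lemma lower_dual {α : ℝ} (h1 : -1 < α) (h2 : α ≤ 0) {u : E2 → ℝ} (cu : Continuous u) {M : ℝ}
    (hM : ∀ x, |u x| ≤ M) {v f : E2 → ℝ} {Z : ℝ} (hZ : Z = ∫ x, exp (u x) * muAlpha α x)
    (hv : v = fun x => exp (u x) * muAlpha α x / Z) (hfd : f = fun x => v x - muAlpha α x)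
    (hvi : Integrable v) (hf : Integrable f) (h0 : ∫ x, f x = 0)
    (hlog : Integrable (fun p : E2 × E2 => f p.1 * (f p.2 * log ‖p.1 - p.2‖)) (volume.prod volume)) :
    4 * π * (1 + α) * (∫ x, f x * invLap2 f x) ≤ (∫ x, v x * u x) - log Z := by
  have hb : 0 < 1 + α := by linarith
  set c := 4 * π * (1 + α) with hcd
  have hcp : 0 < c := by positivity
  have hn : ∀ n : ℕ, -(n : ℝ) ≤ n := fun n => by
    have : (0 : ℝ) ≤ n := Nat.cast_nonneg n
    linarith
  have tN : Filter.Tendsto (fun n : ℕ => (n : ℝ)) Filter.atTop Filter.atTop :=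
    tendsto_natCast_atTop_atTop
  have tA : Filter.Tendsto (fun n : ℕ => -(n : ℝ)) Filter.atTop Filter.atBot :=
    Filter.tendsto_neg_atTop_atBot.comp tN
  have hmu := mu_int h1 h2
  have key : ∀ n : ℕ, 2 * c * Qf (-(n : ℝ)) n f - c * ∫ x, ‖dphi (-(n : ℝ)) n f x‖ ^ 2 ≤
      (∫ x, v x * u x) - log Z := fun n => by
    have hφ := phi_contDiff (hn n) hf
    have hψ : ContDiff ℝ 1 (fun x => 2 * c * phi (-(n : ℝ)) n f x) := contDiff_const.mul hφ
    have hfdv : ∀ x, fderiv ℝ (fun x => 2 * c * phi (-(n : ℝ)) n f x) x =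
        (2 * c) • dphi (-(n : ℝ)) n f x := fun x =>
      ((phi_hasFDeriv (hn n) hf x).const_mul (2 * c)).fderiv
    have hsq : ∀ x, ‖fderiv ℝ (fun x => 2 * c * phi (-(n : ℝ)) n f x) x‖ ^ 2 =
        (4 * c ^ 2) * ‖dphi (-(n : ℝ)) n f x‖ ^ 2 := fun x => by
      rw [hfdv, norm_smul, Real.norm_of_nonneg (by positivity)]; ring
    set K := (((n : ℝ) - -(n : ℝ)) * (1 / (4 * π)) * ∫ x, ‖f x‖) with hK
    have hbd : ∀ x, |2 * c * phi (-(n : ℝ)) n f x| ≤ 2 * c * K := fun x => by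
      rw [abs_mul, abs_of_pos (by positivity : 0 < 2 * c)]
      gcongr
      exact phi_bd (hn n) hf x
    have ht : Filter.Tendsto (fun x => 2 * c * phi (-(n : ℝ)) n f x) (Filter.cocompact E2)
        (nhds 0) := by
      have := (phi_tendsto (hn n) hf).const_mul (2 * c)
      rwa [mul_zero] at this
    have o := onofri_ext h1 h2 hψ ht hbd (by
      simp only [hsq]; exact (dphi_sq_int (hn n) hf).const_mul _)
    have g := gibbs h1 h2 cu hψ.continuous hM hbd hZ hv
    simp only [hsq] at o
    rw [integral_const_mul] at o
    have i1 : Integrable (fun x => v x * (2 * c * phi (-(n : ℝ)) n f x)) :=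
      hvi.mul_bdd hψ.continuous.aestronglyMeasurable (Filter.Eventually.of_forall hbd)
    have i2 : Integrable (fun x => 2 * c * phi (-(n : ℝ)) n f x * muAlpha α x) :=
      hmu.bdd_mul hψ.continuous.aestronglyMeasurable (Filter.Eventually.of_forall hbd)
    have q : (∫ x, v x * (2 * c * phi (-(n : ℝ)) n f x)) -
        (∫ x, 2 * c * phi (-(n : ℝ)) n f x * muAlpha α x) = 2 * c * Qf (-(n : ℝ)) n f := by
      rw [← integral_sub i1 i2, Qf, ← integral_const_mul]
      congr 1; ext x
      rw [hfd]; ring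
    have k : 1 / (16 * π * (1 + α)) * (4 * c ^ 2 * ∫ x, ‖dphi (-(n : ℝ)) n f x‖ ^ 2) =
        c * ∫ x, ‖dphi (-(n : ℝ)) n f x‖ ^ 2 := by
      rw [hcd]; field_simp; ring
    rw [k] at o
    linarith
  have t := ((Qf_tendsto hf h0 hlog hn tA tN).const_mul (2 * c)).sub
    ((dphi_energy_tendsto hf h0 hlog).const_mul c)
  have := le_of_tendsto' t key
  linarith

/-- the improved weighted Onofri inequality: the deficit in the
logarithmic HLS inequality for `μ_α` is bounded by the deficit in the α-weighted
Onofri inequality, for `α ∈ (−1, 0]`. -/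
theorem improved_onofri_alpha (α : ℝ) (hα1 : -1 < α) (hα2 : α ≤ 0)
    (u : EuclideanSpace ℝ (Fin 2) → ℝ) (hu : ContDiff ℝ (⊤ : ℕ∞) u) (hc : HasCompactSupport u)
    (v : EuclideanSpace ℝ (Fin 2) → ℝ)
    (hv : v = fun x => Real.exp (u x) * muAlpha α x / ∫ y, Real.exp (u y) * muAlpha α y) :
    0 ≤ (∫ x, v x * Real.log (v x / muAlpha α x)) -
        4 * Real.pi * (1 + α) *
          ∫ x, (v x - muAlpha α x) * invLap2 (fun y => v y - muAlpha α y) x ∧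
      (∫ x, v x * Real.log (v x / muAlpha α x)) -
        4 * Real.pi * (1 + α) *
          (∫ x, (v x - muAlpha α x) * invLap2 (fun y => v y - muAlpha α y) x) ≤
      1 / (16 * Real.pi * (1 + α)) * (∫ x, ‖gradient u x‖ ^ 2) -
        Real.log (∫ x, Real.exp (u x) * muAlpha α x) + ∫ x, u x * muAlpha α x := by
  have hb : 0 < 1 + α := by linarith
  have cu := hu.continuous
  have hu1 : ContDiff ℝ 1 u := hu.of_le (by norm_cast)
  obtain ⟨M, hM⟩ := cu.bounded_above_of_compact_support hc
  have hM2 : ∀ x, |u x| ≤ M := hM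
  set Z := ∫ y, Real.exp (u y) * muAlpha α y with hZ
  have hZp : 0 < Z := exp_mu_pos hα1 hα2 cu hM2
  have hmu := mu_int hα1 hα2
  have hvx : ∀ x, v x = Real.exp (u x) * muAlpha α x / Z := fun x => by rw [hv]
  have hvi : Integrable v := by rw [hv]; exact (exp_mu_int hα1 hα2 cu hM2).div_const _
  have hv1 : ∫ x, v x = 1 := by rw [hv, integral_div, ← hZ, div_self hZp.ne']
  obtain ⟨f, hfd⟩ : ∃ f : E2 → ℝ, f = fun x => v x - muAlpha α x := ⟨_, rfl⟩
  have hf : Integrable f := by rw [hfd]; exact hvi.sub hmu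
  have h0 : ∫ x, f x = 0 := by
    rw [hfd, integral_sub hvi hmu, hv1, mu_integral hα1 hα2, sub_self]
  have hC : ∀ x, |f x| ≤ (exp M / Z + 1) * muAlpha α x := fun x => by
    have m := mu_nonneg hα1 x
    have e1 : v x ≤ exp M / Z * muAlpha α x := by
      rw [hvx x, div_mul_eq_mul_div]
      have : exp (u x) ≤ exp M := exp_le_exp.2 ((le_abs_self _).trans (hM2 x))
      exact div_le_div_of_nonneg_right (mul_le_mul_of_nonneg_right this m) hZp.le
    have e2 : 0 ≤ v x := by
      rw [hvx x]; exact div_nonneg (mul_nonneg (exp_pos _).le m) hZp.le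
    have e3 : f x = v x - muAlpha α x := by rw [hfd]
    rw [e3, abs_le]
    constructor
    · have : 0 ≤ exp M / Z * muAlpha α x := e2.trans e1
      linarith
    · linarith
  have hlog := mu_log_int hα1 hα2 hf hC
  have i2 : Integrable (fun x => v x * u x) :=
    hvi.mul_bdd cu.aestronglyMeasurable (Filter.Eventually.of_forall hM)
  have i3 : Integrable (fun x => u x * muAlpha α x) :=
    hmu.bdd_mul cu.aestronglyMeasurable (Filter.Eventually.of_forall hM)
  have hE : ∫ x, v x * Real.log (v x / muAlpha α x) = (∫ x, v x * u x) - log Z := by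
    have e : ∫ x, v x * Real.log (v x / muAlpha α x) = ∫ x, (v x * u x - v x * log Z) := by
      refine integral_congr_ae ?_
      filter_upwards [ae_ne_zero_E2] with x hx
      have m := mu_pos hα1 hx
      have : v x / muAlpha α x = exp (u x) / Z := by
        rw [hvx x]; field_simp
      rw [this, log_div (exp_pos _).ne' hZp.ne', log_exp]; ring
    rw [e, integral_sub i2 (hvi.mul_const _), integral_mul_const, hv1, one_mul]
  have hD : (∫ x, (v x - muAlpha α x) * invLap2 (fun y => v y - muAlpha α y) x) =
      ∫ x, f x * invLap2 f x := by rw [hfd]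
  rw [hE, hD]
  have lo := lower_dual hα1 hα2 cu hM2 hZ hv hfd hvi hf h0 hlog
  have up := upper_dual hf h0 hlog hu1 hc (c := 4 * π * (1 + α)) (by positivity)
  have hfu : ∫ x, f x * u x = (∫ x, v x * u x) - ∫ x, u x * muAlpha α x := by
    rw [← integral_sub i2 i3]
    congr 1; ext x
    rw [hfd]; ring
  have hk : 1 / (4 * (4 * π * (1 + α))) = 1 / (16 * π * (1 + α)) := by congr 1; ring
  rw [hk, hfu] at up
  refine ⟨by linarith, by linarith⟩
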